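/- arXiv:1005.5579 — 6 statements merged into one kernel-verified Lean document; each statement's English description precedes it below -/
import Mathlib

section
/- Let θ ∈ (0, π) with cos θ ∈ ℚ, and write cos θ = s/r with r, s coprime integers and r > 0. Let k and l be positive, squarefree, coprime integers. Then there exist infinitely many pairs (M, N) of θ-congruent numbers such that l·N = k·M; that is, the set of pairs (M, N) of positive squarefree integers such that M and N are both θ-congruent and l·N = k·M is infinite. -/
/-- A positive squarefree integer `n` is `θ`-congruent (where `cos θ = s / r` with
`r > 0` and `gcd(s, r) = 1`) if `n * r * sin θ` is the area of a triangle with rational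
sides and an angle `θ`; equivalently, there are positive rationals `a, b, c` with
`a * b = 2 * n * r` and `c ^ 2 = a ^ 2 + b ^ 2 - 2 * a * b * (s / r)`. -/
def IsThetaCongruent (r s : ℤ) (n : ℕ) : Prop :=
  ∃ a b c : ℚ, 0 < a ∧ 0 < b ∧ 0 < c ∧
    a * b = 2 * (n : ℚ) * (r : ℚ) ∧
    c ^ 2 = a ^ 2 + b ^ 2 - 2 * a * b * ((s : ℚ) / (r : ℚ))

theorem isThetaCongruent_of_point {r s : ℤ} {n : ℕ} (hr : 0 < r) (hs : s ^ 2 < r ^ 2)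
    (hn : 0 < n) {x y : ℚ} (hy : y ≠ 0)
    (h : n * y ^ 2 = x * (x + (r + s)) * (x - (r - s))) : IsThetaCongruent r s n := by
  have hr' : (0 : ℚ) < r := by exact_mod_cast hr
  have hs' : (s : ℚ) ^ 2 < (r : ℚ) ^ 2 := by exact_mod_cast hs
  have hn' : (0 : ℚ) < n := by exact_mod_cast hn
  have hpos : 0 < (n : ℚ) * y ^ 2 := by positivity
  wlog hxy : 0 < x * y generalizing y
  · refine this (y := -y) (neg_ne_zero.2 hy) (by rw [← h]; ring) (by simpa using hpos) ?_
    have hx : x ≠ 0 := by rintro rfl; rw [h] at hpos; simp at hpos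
    have := lt_of_le_of_ne (not_lt.1 hxy) (mul_ne_zero hx hy)
    linarith
  have hb : 0 < x / y := by
    have : x / y = x * y / y ^ 2 := by field_simp
    rw [this]; positivity
  have hab : (x + (r + s)) * (x - (r - s)) / y * (2 * r * (x / y)) = 2 * n * r := by
    field_simp
    linear_combination -h
  have hb' : 0 < 2 * r * (x / y) := by positivity
  have ha : 0 < (x + (r + s)) * (x - (r - s)) / y :=
    pos_of_mul_pos_left (hab ▸ by positivity) hb'.le
  refine ⟨_, _, (x ^ 2 + (r ^ 2 - s ^ 2)) / |y|, ha, hb', ?_, hab, ?_⟩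
  · have : 0 < (r : ℚ) ^ 2 - s ^ 2 := by linarith
    positivity
  · rw [div_pow, sq_abs]
    field_simp
    ring

theorem isThetaCongruent_of_isogenous_point {r s : ℤ} {n : ℕ} (hr : 0 < r)
    (hs : s ^ 2 < r ^ 2) (hn : 0 < n) {x y : ℚ} (hy : y ≠ 0)
    (hx1 : x ≠ r - s) (hx2 : x ≠ -(r - s))
    (h : n * y ^ 2 = x * (x ^ 2 + 2 * (3 * r + s) * x + (r - s) ^ 2)) :
    IsThetaCongruent r s n := by
  have hn' : (0 : ℚ) < n := by exact_mod_cast hn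
  have hx : x ≠ 0 := by
    rintro rfl
    have : 0 < (n : ℚ) * y ^ 2 := by positivity
    rw [h] at this
    simp at this
  refine isThetaCongruent_of_point hr hs hn
    (x := (x ^ 2 + 2 * (3 * r + s) * x + (r - s) ^ 2) / (4 * x) - (r + s))
    (y := y * (x - (r - s)) * (x + (r - s)) / (8 * x ^ 2)) ?_ ?_
  · have h1 : x - (r - s) ≠ 0 := sub_ne_zero.2 hx1
    have h2 : x + (r - s) ≠ 0 := fun h => hx2 (by linarith)
    positivity
  · field_simp
    linear_combination 64 * (x - (r - s)) ^ 2 * (x + (r - s)) ^ 2 * h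

/-- For `g(w) = w ^ 3 + P * w + Q`, `z = α / β` and `w = -(Q / P) * (z ^ 2 + z + 1) / (z * (z + 1))`
one has `g(z * w) = z ^ 3 * g(w)`. Up to squares, `g(w)` and `g(z * w)` are `α` and `β` times this
binary form. -/
def twistForm (P Q α β : ℤ) : ℤ :=
  -P * Q * (α + β) *
    (P ^ 3 * α ^ 2 * β ^ 2 * (α + β) ^ 2 + Q ^ 2 * (α ^ 2 + α * β + β ^ 2) ^ 3)

theorem twistForm_comm (P Q α β : ℤ) : twistForm P Q α β = twistForm P Q β α := by
  unfold twistForm; ring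

theorem isThetaCongruent_of_twistForm {r s P Q : ℤ} {n : ℕ} (hr : 0 < r)
    (hs : s ^ 2 < r ^ 2) (hn : 0 < n)
    (hP : P = 27 * (3 * (r - s) ^ 2 - 4 * (3 * r + s) ^ 2))
    (hQ : Q = 54 * (3 * r + s) * (8 * (3 * r + s) ^ 2 - 9 * (r - s) ^ 2))
    (hP0 : P ≠ 0) {α β p : ℤ} (hα : 0 < α) (hβ : 0 < β) (hp : Prime p)
    (hpαβ : p ∣ α + β) (hpα : ¬ p ∣ α) (hpQ : ¬ p ∣ Q) {m : ℚ} (hm : m ≠ 0)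
    (h : n * m ^ 2 = α * twistForm P Q α β) : IsThetaCongruent r s n := by
  have hα' : (0 : ℚ) < α := by exact_mod_cast hα
  have hαβ' : (0 : ℚ) < α + β := by exact_mod_cast add_pos hα hβ
  have hP' : (P : ℚ) ≠ 0 := by exact_mod_cast hP0
  obtain ⟨w, hw⟩ : ∃ w : ℚ,
    w = -Q * (α ^ 2 + α * β + β ^ 2) / (P * (α * (α + β))) := ⟨_, rfl⟩
  have hcub : n * (m / (P * (α * (α + β))) ^ 2) ^ 2 = w ^ 3 + P * w + Q := by
    rw [hw]
    simp only [mul_pow, div_pow]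
    unfold twistForm at h
    push_cast at h
    field_simp
    rw [h]
    ring
  have hne : ∀ c : ℤ, w ≠ c := by
    intro c hc
    rw [hw, div_eq_iff (by positivity)] at hc
    have hc' : -Q * (α ^ 2 + α * β + β ^ 2) = c * (P * (α * (α + β))) := by
      exact_mod_cast hc
    obtain ⟨e, he⟩ := hpαβ
    have h1 : p ∣ Q * (α * α) := ⟨-(c * P * α * e) - Q * e * β, by
      have : β = p * e - α := by linarith
      subst this
      linear_combination -hc'⟩
    rcases hp.dvd_or_dvd h1 with h1 | h1
    · exact hpQ h1
    · rcases hp.dvd_or_dvd h1 with h1 | h1 <;> exact hpα h1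
  refine isThetaCongruent_of_isogenous_point hr hs hn
    (x := (w - 6 * (3 * r + s)) / 9)
    (y := m / (P * (α * (α + β))) ^ 2 / 27) (by positivity) ?_ ?_ ?_
  · intro hx
    apply hne (9 * (r - s) + 6 * (3 * r + s))
    push_cast
    linarith
  · intro hx
    apply hne (-9 * (r - s) + 6 * (3 * r + s))
    push_cast
    linarith
  · have h1 : (P : ℚ) = 27 * (3 * (r - s) ^ 2 - 4 * (3 * r + s) ^ 2) := by rw [hP]; push_cast; ring
    have h2 : (Q : ℚ) = 54 * (3 * r + s) * (8 * (3 * r + s) ^ 2 - 9 * (r - s) ^ 2) := by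
      rw [hQ]; push_cast; ring
    rw [div_pow, ← mul_div_assoc, hcub, h1, h2]
    ring

theorem exists_twistForm_eq_add (P Q α β : ℤ) :
    ∃ R, twistForm P Q α β = -P * Q ^ 3 * β ^ 7 + α * R :=
  ⟨-P * Q * (Q ^ 2 * β ^ 6 + (α + β) * (P ^ 3 * α * β ^ 2 * (α + β) ^ 2 +
      Q ^ 2 * (α + β) * (3 * β ^ 4 + 3 * β ^ 2 * α * (α + β) + α ^ 2 * (α + β) ^ 2))), by
    unfold twistForm; ring⟩

theorem even_padicValRat_twistForm {P Q k l a b : ℤ} {p N : ℕ} [hp : Fact p.Prime]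
    (hP : P ≠ 0) (hQ : Q ≠ 0) (hl : l ≠ 0) (ha : (p : ℤ) ^ N ∣ a) (hb : ¬ (p : ℤ) ∣ b)
    (hN : padicValRat p ((P * Q ^ 3 * l ^ 7 : ℤ) : ℚ) < N)
    (heven : Even (padicValRat p ((P * Q * l : ℤ) : ℚ)))
    (h0 : twistForm P Q (k * a ^ 2) (l * b ^ 2) ≠ 0) :
    Even (padicValRat p (twistForm P Q (k * a ^ 2) (l * b ^ 2) : ℚ)) := by
  have hb0 : b ≠ 0 := by rintro rfl; simp at hb
  have hPr : (P : ℚ) ≠ 0 := by exact_mod_cast hP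
  have hQr : (Q : ℚ) ≠ 0 := by exact_mod_cast hQ
  have hlr : (l : ℚ) ≠ 0 := by exact_mod_cast hl
  have hbr : (b : ℚ) ≠ 0 := by exact_mod_cast hb0
  have hvb : padicValRat p (b : ℚ) = 0 := by
    rw [padicValRat.of_int, padicValInt.eq_zero_of_not_dvd hb]; rfl
  have hmain : padicValRat p ((-P * Q ^ 3 * (l * b ^ 2) ^ 7 : ℤ) : ℚ) =
      padicValRat p ((P * Q ^ 3 * l ^ 7 : ℤ) : ℚ) := by
    have : ((-P * Q ^ 3 * (l * b ^ 2) ^ 7 : ℤ) : ℚ) =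
        -(((P * Q ^ 3 * l ^ 7 : ℤ) : ℚ) * (b : ℚ) ^ 14) := by push_cast; ring
    rw [this, padicValRat.neg, padicValRat.mul (by push_cast; positivity) (by positivity),
      padicValRat.pow, hvb]
    simp
  have hparity : Even (padicValRat p ((P * Q ^ 3 * l ^ 7 : ℤ) : ℚ)) := by
    have : ((P * Q ^ 3 * l ^ 7 : ℤ) : ℚ) =
        ((P * Q * l : ℤ) : ℚ) * ((Q : ℚ) * (l : ℚ) ^ 3) ^ 2 := by push_cast; ring
    rw [this, padicValRat.mul (by push_cast; positivity) (by positivity), padicValRat.pow]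
    exact heven.add (by simp)
  obtain ⟨R, hR⟩ := exists_twistForm_eq_add P Q (k * a ^ 2) (l * b ^ 2)
  rw [hR] at h0 ⊢
  by_cases hy : k * a ^ 2 * R = 0
  · rw [hy, add_zero, hmain]
    exact hparity
  have hlt : padicValRat p ((-P * Q ^ 3 * (l * b ^ 2) ^ 7 : ℤ) : ℚ) <
      padicValRat p ((k * a ^ 2 * R : ℤ) : ℚ) := by
    rw [hmain]
    refine hN.trans_le ?_
    rw [padicValRat.of_int]
    have hd : (p : ℤ) ^ N ∣ k * a ^ 2 * R :=
      ((ha.trans (dvd_pow_self a two_ne_zero)).mul_left k).mul_right R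
    exact_mod_cast ((padicValInt_dvd_iff N _).1 hd).resolve_left hy
  rw [Int.cast_add, padicValRat.add_eq_of_lt (by exact_mod_cast h0) ?_ (by exact_mod_cast hy) hlt,
    hmain]
  · exact hparity
  · push_cast
    simp [hPr, hQr, hlr, hbr]

theorem exists_forall_prime_dvd_iff {n : ℕ} (hn : n ≠ 0) (c : ℕ → Prop) :
    ∃ S, 0 < S ∧ ∀ p : ℕ, p.Prime → p ∣ n → (p ∣ S ↔ c p) := by
  classical
  refine ⟨∏ q ∈ n.primeFactors with c q, q, Finset.prod_pos fun q hq =>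
    (Nat.prime_of_mem_primeFactors (Finset.mem_filter.1 hq).1).pos, fun p hp hpn => ⟨fun hd => ?_,
    fun hc => Finset.dvd_prod_of_mem (fun q => q)
      (Finset.mem_filter.2 ⟨Nat.mem_primeFactors.2 ⟨hp, hpn, hn⟩, hc⟩)⟩⟩
  obtain ⟨q, hq, hpq⟩ := (hp.prime.dvd_finsetProd_iff _).1 hd
  rw [Finset.mem_filter] at hq
  rw [(Nat.prime_dvd_prime_iff_eq hp (Nat.prime_of_mem_primeFactors hq.1)).1 hpq]
  exact hq.2

theorem exists_scale_even_padicValRat {P Q : ℤ} {k l : ℕ} (hP : P ≠ 0) (hQ : Q ≠ 0)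
    (hk : k ≠ 0) (hl : l ≠ 0) (hkl : Squarefree (k * l)) :
    ∃ k' l' : ℕ, 0 < k' ∧ 0 < l' ∧ ∀ u v : ℕ, u.Coprime (k * l) → v.Coprime (k * l) →
      twistForm P Q (k * (k' * u) ^ 2) (l * (l' * v) ^ 2) ≠ 0 → ∀ p : ℕ, p.Prime → p ∣ k * l →
      Even (padicValRat p (twistForm P Q (k * (k' * u) ^ 2) (l * (l' * v) ^ 2) : ℚ)) := by
  obtain ⟨good, hgood⟩ : ∃ c : ℕ → Prop, ∀ p, c p ↔ Even (padicValRat p ((P * Q * l : ℤ) : ℚ)) :=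
    ⟨_, fun _ => Iff.rfl⟩
  obtain ⟨s, hs⟩ : ∃ s, s = (k * l).primeFactors := ⟨_, rfl⟩
  obtain ⟨N, hN⟩ : ∃ N : ℕ, ∀ p ∈ s, padicValRat p ((P * Q ^ 3 * (k : ℤ) ^ 7 : ℤ) : ℚ) < N ∧
      padicValRat p ((P * Q ^ 3 * (l : ℤ) ^ 7 : ℤ) : ℚ) < N := by
    obtain ⟨val, hval⟩ : ∃ val : ℤ → ℕ → ℤ, ∀ m p,
      val m p = padicValRat p ((P * Q ^ 3 * m ^ 7 : ℤ) : ℚ) := ⟨_, fun _ _ => rfl⟩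
    refine ⟨s.sup (fun p => max (val k p).toNat (val l p).toNat) + 1, fun p hps => ?_⟩
    have := Finset.le_sup (f := fun p => max (val k p).toNat (val l p).toNat) hps
    rw [← hval, ← hval]
    push_cast
    lia
  obtain ⟨S₁, hS₁, hgood₁⟩ := exists_forall_prime_dvd_iff (mul_ne_zero hk hl) good
  obtain ⟨S₂, hS₂, hgood₂⟩ := exists_forall_prime_dvd_iff (mul_ne_zero hk hl) fun p => ¬ good p
  refine ⟨S₁ ^ N, S₂ ^ N, pow_pos hS₁ N, pow_pos hS₂ N, ?_⟩
  intro u v hu hv h0 p hp hpkl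
  have : Fact p.Prime := ⟨hp⟩
  have hps : p ∈ s := hs ▸ Nat.mem_primeFactors.2 ⟨hp, hpkl, mul_ne_zero hk hl⟩
  have hpow : ∀ S w : ℕ, p ∣ S → (p : ℤ) ^ N ∣ (S ^ N : ℕ) * w := by
    intro S w hS
    exact_mod_cast (pow_dvd_pow_of_dvd hS N).mul_right w
  have hnot : ∀ S w : ℕ, w.Coprime (k * l) → ¬ p ∣ S → ¬ (p : ℤ) ∣ (S ^ N : ℕ) * w := by
    intro S w hw hS hd
    have hd' : p ∣ S ^ N * w := by exact_mod_cast hd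
    rcases hp.dvd_mul.1 hd' with h | h
    · exact hS (hp.dvd_of_dvd_pow h)
    · exact hp.one_lt.ne' (Nat.eq_one_of_dvd_coprimes hw h hpkl)
  have h₁ := hgood₁ p hp hpkl
  have h₂ := hgood₂ p hp hpkl
  by_cases hg : good p
  · exact even_padicValRat_twistForm hP hQ (by exact_mod_cast hl) (hpow _ _ (h₁.2 hg))
      (hnot _ _ hv fun h => h₂.1 h hg) (hN p hps).2 ((hgood p).1 hg) h0
  · rw [twistForm_comm] at h0 ⊢
    refine even_padicValRat_twistForm hP hQ (by exact_mod_cast hk) (hpow _ _ (h₂.2 hg))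
      (hnot _ _ hu fun h => hg (h₁.1 h)) (hN p hps).1 ?_ h0
    have hklval : padicValRat p ((k : ℚ) * l) = 1 := by
      have h1 : padicValNat p (k * l) = 1 := by
        refine le_antisymm ?_ (one_le_padicValNat_of_dvd (mul_ne_zero hk hl) hpkl)
        rw [← Nat.factorization_def _ hp]
        exact hkl.natFactorization_le_one p
      rw [← Nat.cast_mul, padicValRat.of_nat, h1]; rfl
    have hPr : (P : ℚ) ≠ 0 := by exact_mod_cast hP
    have hQr : (Q : ℚ) ≠ 0 := by exact_mod_cast hQ
    have hkr : (k : ℚ) ≠ 0 := by exact_mod_cast hk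
    have hlr : (l : ℚ) ≠ 0 := by exact_mod_cast hl
    rw [hgood] at hg
    push_cast at hg ⊢
    rw [padicValRat.mul (mul_ne_zero hPr hQr) hlr] at hg
    rw [padicValRat.mul (mul_ne_zero hPr hQr) hkr]
    rw [padicValRat.mul hkr hlr] at hklval
    grind

theorem exists_prime_and_coprime_pair {k l K : ℕ} (hk : 0 < k) (hl : 0 < l) (hK : 0 < K) (L : ℕ)
    {a b : ℝ} (ha : 0 < a) (hab : a < b) :
    ∃ p u v : ℕ, p.Prime ∧ L < p ∧ 0 < u ∧ 0 < v ∧ u.Coprime K ∧ v.Coprime K ∧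
      a < (u : ℝ) / v ∧ (u : ℝ) / v < b ∧ ¬ p ∣ k * u ^ 2 ∧ p ∣ k * u ^ 2 + l * v ^ 2 ∧
      ¬ p ^ 2 ∣ k * u ^ 2 + l * v ^ 2 := by
  obtain ⟨x, hx⟩ : ∃ x, x = (L + K + 2).factorial := ⟨_, rfl⟩
  obtain ⟨p, hp, hpd⟩ := Nat.exists_prime_and_dvd (n := k * l * x ^ 2 + 1) (by
    have : 0 < x := hx ▸ Nat.factorial_pos _
    have : 0 < k * l * x ^ 2 := by positivity
    lia)
  have hnd : ∀ m, m ∣ k * l * x ^ 2 → ¬ p ∣ m := fun m hm h =>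
    hp.one_lt.ne' (Nat.dvd_one.1 ((Nat.dvd_add_right (h.trans hm)).1 hpd))
  have hpx : ¬ p ∣ x := hnd x (Dvd.dvd.mul_left (dvd_pow_self x two_ne_zero) _)
  have hpk : ¬ p ∣ k := hnd k (by rw [mul_assoc]; exact dvd_mul_right _ _)
  have hpl : ¬ p ∣ l := hnd l (Dvd.dvd.mul_right (dvd_mul_left _ _) _)
  have hpL : L + K + 2 < p := by
    by_contra! h
    exact hpx (hx ▸ hp.dvd_factorial.2 h)
  have hroot : ∀ i, p ∣ k * (l * x + p * i) ^ 2 + l := by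
    intro i
    have : k * (l * x + p * i) ^ 2 + l =
        l * (k * l * x ^ 2 + 1) + p * (k * (2 * l * x * i + p * i ^ 2)) := by ring
    rw [this]
    exact dvd_add (hpd.mul_left _) (dvd_mul_right _ _)
  obtain ⟨u₀, hu₀, hpu₀, hu₀'⟩ :
      ∃ u₀, p ∣ k * u₀ ^ 2 + l ∧ ¬ p ∣ u₀ ∧ ¬ p ^ 2 ∣ k * u₀ ^ 2 + l := by
    have hu : ∀ i, ¬ p ∣ l * x + p * i := by
      intro i h
      rw [Nat.dvd_add_left (dvd_mul_right p i)] at h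
      exact (hp.dvd_mul.1 h).elim hpl hpx
    by_cases h : p ^ 2 ∣ k * (l * x + p * 0) ^ 2 + l
    · refine ⟨l * x + p * 1, hroot 1, hu 1, fun h' => ?_⟩
      have h2 : k * (l * x + p * 1) ^ 2 + l =
          k * (l * x + p * 0) ^ 2 + l + p ^ 2 * k + p * (2 * k * l * x) := by ring
      rw [h2, Nat.dvd_add_right (dvd_add h (dvd_mul_right _ _)), pow_two] at h'
      have h3 := Nat.dvd_of_mul_dvd_mul_left hp.pos h'
      rcases hp.dvd_mul.1 h3 with h3 | h3
      · rcases hp.dvd_mul.1 h3 with h3 | h3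
        · rcases hp.dvd_mul.1 h3 with h3 | h3
          · have := Nat.le_of_dvd two_pos h3
            lia
          · exact hpk h3
        · exact hpl h3
      · exact hpx h3
    · exact ⟨_, hroot 0, hu 0, h⟩
  have hpK : (p ^ 2).Coprime K :=
    Nat.Coprime.pow_left 2 ((Nat.Prime.coprime_iff_not_dvd hp).2 fun h => by
      have := Nat.le_of_dvd hK h
      lia)
  obtain ⟨u₁, hu₁p, hu₁K⟩ := Nat.chineseRemainder hpK u₀ 1
  obtain ⟨W, hW⟩ : ∃ W, W = p ^ 2 * K := ⟨_, rfl⟩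
  have hW0 : (0 : ℝ) < W := by
    rw [hW]; exact_mod_cast mul_pos (pow_pos hp.pos 2) hK
  obtain ⟨j, hj⟩ := exists_nat_gt (max (u₁ / (a * W)) (1 / (b - a)))
  have hj1 := (le_max_left _ _).trans_lt hj
  have hj2 := (le_max_right _ _).trans_lt hj
  have hba : 0 < b - a := sub_pos.2 hab
  rw [div_lt_iff₀ (by positivity)] at hj1
  rw [div_lt_iff₀ hba] at hj2
  obtain ⟨v, hv⟩ : ∃ v, v = 1 + W * j := ⟨_, rfl⟩
  have hvr : (v : ℝ) = 1 + W * j := by rw [hv]; push_cast; ring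
  have hv0 : (0 : ℝ) < v := by rw [hvr]; positivity
  have h1 : u₁ < a * v := by rw [hvr]; nlinarith
  have h2 : W < (b - a) * v := by rw [hvr]; nlinarith
  obtain ⟨i, hi⟩ : ∃ i : ℕ, i = ⌊(a * v - u₁) / W⌋₊ + 1 := ⟨_, rfl⟩
  have hi1 : a * v < u₁ + W * i := by
    have := Nat.lt_floor_add_one ((a * v - u₁) / W)
    rw [div_lt_iff₀ hW0] at this
    rw [hi]; push_cast
    linarith
  have hi2 : u₁ + W * i < b * v := by
    have := Nat.floor_le (a := (a * v - u₁) / W) (div_nonneg (by linarith) hW0.le)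
    rw [le_div_iff₀ hW0] at this
    rw [hi]; push_cast
    linarith
  obtain ⟨u, hu⟩ : ∃ u, u = u₁ + W * i := ⟨_, rfl⟩
  have hur : (u : ℝ) = u₁ + W * i := by rw [hu]; push_cast; ring
  rw [← hur] at hi1 hi2
  have hup : u ≡ u₀ [MOD p ^ 2] := by
    rw [hu, hW, mul_assoc]
    exact Nat.ModEq.trans (by simp [Nat.ModEq]) hu₁p
  have huK : u ≡ 1 [MOD K] := by
    rw [hu, hW, mul_comm (p ^ 2), mul_assoc]
    exact Nat.ModEq.trans (by simp [Nat.ModEq]) hu₁K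
  have hvp : v ≡ 1 [MOD p ^ 2] := by
    rw [hv, hW, mul_assoc]
    simp [Nat.ModEq]
  have hvK : v ≡ 1 [MOD K] := by
    rw [hv, hW, mul_comm (p ^ 2), mul_assoc]
    simp [Nat.ModEq]
  have hform : k * u ^ 2 + l * v ^ 2 ≡ k * u₀ ^ 2 + l [MOD p ^ 2] := by
    simpa using ((hup.pow 2).mul_left k).add ((hvp.pow 2).mul_left l)
  have hp2 : p ∣ p ^ 2 := dvd_pow_self p two_ne_zero
  refine ⟨p, u, v, hp, by lia, ?_, by exact_mod_cast hv0, ?_, ?_, (lt_div_iff₀ hv0).2 hi1,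
    (div_lt_iff₀ hv0).2 hi2, ?_, ?_, ?_⟩
  · have : (0 : ℝ) < u := (mul_pos ha hv0).trans hi1
    exact_mod_cast this
  · rw [Nat.Coprime, huK.gcd_eq, Nat.gcd_one_left]
  · rw [Nat.Coprime, hvK.gcd_eq, Nat.gcd_one_left]
  · intro h
    rcases hp.dvd_mul.1 h with h | h
    · exact hpk h
    · exact hpu₀ (((hup.of_dvd hp2).dvd_iff dvd_rfl).1 (hp.dvd_of_dvd_pow h))
  · exact ((hform.of_dvd hp2).dvd_iff dvd_rfl).2 hu₀
  · exact fun h => hu₀' ((hform.dvd_iff dvd_rfl).1 h)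

theorem exists_twistForm_pos {P Q : ℤ} (hP : P < 0) (hQ : Q ≠ 0)
    (hdisc : 4 * P ^ 3 + 27 * Q ^ 2 < 0) : ∃ z : ℤ, 0 < z ∧ 0 < twistForm P Q z 1 := by
  rcases hQ.lt_or_gt with hQ | hQ
  · refine ⟨1, one_pos, ?_⟩
    have h : twistForm P Q 1 1 = (P * Q) * (-(4 * P ^ 3 + 27 * Q ^ 2)) * 2 := by
      unfold twistForm; ring
    rw [h]
    exact mul_pos (mul_pos (mul_pos_of_neg_of_neg hP hQ) (neg_pos.2 hdisc)) two_pos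
  · obtain ⟨z, hz⟩ : ∃ z, z = 1 - P ^ 3 := ⟨_, rfl⟩
    have hP3 : P ^ 3 < 0 := Odd.pow_neg (by decide) hP
    have hz0 : 0 < z := by linarith
    refine ⟨z, hz0, ?_⟩
    unfold twistForm
    have hPQ : 0 < -P * Q := mul_pos (neg_pos.2 hP) hQ
    have hQ2 : 1 ≤ Q ^ 2 := by nlinarith
    have h1 : (z ^ 2 + z * 1 + 1 ^ 2) ^ 3 ≤ Q ^ 2 * (z ^ 2 + z * 1 + 1 ^ 2) ^ 3 :=
      le_mul_of_one_le_left (by positivity) hQ2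
    have h2 : 0 < P ^ 3 * z ^ 2 * 1 ^ 2 * (z + 1) ^ 2 + (z ^ 2 + z * 1 + 1 ^ 2) ^ 3 := by
      rw [show P ^ 3 = 1 - z by linarith]
      have : (1 - z) * z ^ 2 * 1 ^ 2 * (z + 1) ^ 2 + (z ^ 2 + z * 1 + 1 ^ 2) ^ 3 =
        z ^ 6 + 2 * z ^ 5 + 5 * z ^ 4 + 8 * z ^ 3 + 7 * z ^ 2 + 3 * z + 1 := by ring
      rw [this]
      positivity
    exact mul_pos (mul_pos hPQ (by linarith)) (by linarith)

theorem exists_interval_twistForm_pos {P Q : ℤ} {k l : ℕ} (hk : 0 < k) (hl : 0 < l) {z : ℤ}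
    (hz : 0 < z) (h : 0 < twistForm P Q z 1) :
    ∃ a b : ℝ, 0 < a ∧ a < b ∧ ∀ u v : ℕ, 0 < v → a < (u : ℝ) / v → (u : ℝ) / v < b →
      0 < twistForm P Q (k * u ^ 2) (l * v ^ 2) := by
  let f : ℝ → ℝ → ℝ := fun x y => -P * Q * (x + y) *
    (P ^ 3 * x ^ 2 * y ^ 2 * (x + y) ^ 2 + Q ^ 2 * (x ^ 2 + x * y + y ^ 2) ^ 3)
  have hcast : ∀ x y : ℤ, (twistForm P Q x y : ℝ) = f x y := by
    intro x y; simp only [twistForm, f]; push_cast; ring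
  have hhom : ∀ c x y : ℝ, f (c * x) (c * y) = c ^ 7 * f x y := by
    intro c x y; simp only [f]; ring
  have hk' : (0 : ℝ) < k := by exact_mod_cast hk
  have hl' : (0 : ℝ) < l := by exact_mod_cast hl
  have hz' : (0 : ℝ) < z := by exact_mod_cast hz
  have hf : 0 < f z 1 := by
    have := hcast z 1
    push_cast at this
    rw [← this]; exact_mod_cast h
  obtain ⟨ρ, hρ⟩ : ∃ ρ, ρ = √(l * z / k) := ⟨_, rfl⟩
  have hρ0 : 0 < ρ := by rw [hρ]; positivity
  have hρf : 0 < f (k * ρ ^ 2) l := by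
    have h1 : (k : ℝ) * ρ ^ 2 = l * z := by
      rw [hρ, Real.sq_sqrt (by positivity)]; field_simp
    rw [h1]
    nth_rw 2 [← mul_one (l : ℝ)]
    rw [hhom]
    positivity
  have hcont : Continuous fun t : ℝ => f (k * t ^ 2) l := by
    simp only [f]; fun_prop
  have hopen : IsOpen ({t : ℝ | 0 < f (k * t ^ 2) l} ∩ Set.Ioi 0) :=
    (isOpen_lt continuous_const hcont).inter isOpen_Ioi
  obtain ⟨a, b, hab, hsub⟩ := mem_nhds_iff_exists_Ioo_subset.1 (hopen.mem_nhds ⟨hρf, hρ0⟩)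
  refine ⟨max a (ρ / 2), b, by positivity, ?_, ?_⟩
  · exact max_lt (hab.1.trans hab.2) (by linarith [hab.2])
  · intro u v hv hau hub
    have hv' : (0 : ℝ) < v := by exact_mod_cast hv
    have hpos : 0 < f (k * ((u : ℝ) / v) ^ 2) l := (hsub ⟨(le_max_left _ _).trans_lt hau, hub⟩).1
    have h2 : (twistForm P Q (k * u ^ 2) (l * v ^ 2) : ℝ) =
        ((v : ℝ) ^ 2) ^ 7 * f (k * ((u : ℝ) / v) ^ 2) l := by
      rw [hcast, ← hhom]
      congr 1
      · push_cast; field_simp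
      · push_cast; ring
    have : (0 : ℝ) < twistForm P Q (k * u ^ 2) (l * v ^ 2) := by rw [h2]; positivity
    exact_mod_cast this

theorem not_sq_dvd_twistForm {P Q α β p : ℤ} (hp : Prime p) (hP : ¬ p ∣ P) (hQ : ¬ p ∣ Q)
    (hα : ¬ p ∣ α) (hd : p ∣ α + β) (hd2 : ¬ p ^ 2 ∣ α + β) : ¬ p ^ 2 ∣ twistForm P Q α β := by
  intro h
  obtain ⟨e, he⟩ := hd
  have hβ : β = p * e - α := by linarith
  have hpe : ¬ p ∣ e := fun h' => hd2 (by rw [he, pow_two]; exact mul_dvd_mul_left p h')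
  have h1 : p ∣ P * Q * e * (Q ^ 2 * α ^ 6) := by
    unfold twistForm at h
    rw [he, pow_two, mul_left_comm (-P * Q) p e, mul_assoc p,
      mul_dvd_mul_iff_left hp.ne_zero] at h
    obtain ⟨c, hc⟩ := h
    refine ⟨-c - P * Q * e * (P ^ 3 * α ^ 2 * β ^ 2 * p * e ^ 2 + Q ^ 2 * e * β *
      (3 * α ^ 4 + 3 * α ^ 2 * (p * e * β) + (p * e * β) ^ 2)), ?_⟩
    subst hβ
    linear_combination -hc
  have hα6 : ¬ p ∣ α ^ 6 := fun h => hα (hp.dvd_of_dvd_pow h)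
  have hQ2 : ¬ p ∣ Q ^ 2 := fun h => hQ (hp.dvd_of_dvd_pow h)
  simp [hp.dvd_mul, hP, hQ, hpe, hα6, hQ2] at h1

theorem not_dvd_of_even_padicValRat {p T m : ℕ} (hp : p.Prime) (hT : Squarefree T) (hm : m ≠ 0)
    (h : Even (padicValRat p ((m ^ 2 * T : ℕ) : ℚ))) : ¬ p ∣ T := by
  have : Fact p.Prime := ⟨hp⟩
  intro hd
  have h1 : padicValNat p T = 1 := by
    refine le_antisymm ?_ (one_le_padicValNat_of_dvd hT.ne_zero hd)
    rw [← Nat.factorization_def _ hp]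
    exact hT.natFactorization_le_one p
  rw [padicValRat.of_nat, padicValNat.mul (pow_ne_zero 2 hm) hT.ne_zero, padicValNat.pow, h1] at h
  have h' : Even (2 * padicValNat p m + 1) := by exact_mod_cast h
  grind

theorem eight_mul_sq_ne_nine_mul_sq {A B : ℤ} (hA : A ≠ 0) : 8 * A ^ 2 ≠ 9 * B ^ 2 := by
  intro h
  have hA' : (A : ℝ) ≠ 0 := by exact_mod_cast hA
  have h' : 8 * (A : ℝ) ^ 2 = 9 * (B : ℝ) ^ 2 := by exact_mod_cast h
  have h2 : √2 = ((|3 * B / (2 * A)| : ℚ) : ℝ) := by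
    push_cast
    rw [← Real.sqrt_sq_eq_abs]
    congr 1
    field_simp
    linarith
  exact irrational_sqrt_two ⟨_, h2.symm⟩

/-- For `θ ∈ (0, π)` with `cos θ = s / r ∈ ℚ` and `k, l` positive squarefree coprime
integers, there exist infinitely many pairs `(M, N)` of `θ`-congruent numbers with
`l * N = k * M`. -/
theorem ratio_of_theta_congruent_numbers
    (θ : ℝ) (hθ0 : 0 < θ) (hθπ : θ < Real.pi)
    (r s : ℤ) (hr : 0 < r) (hrs : Int.gcd s r = 1)
    (hcos : Real.cos θ = (s : ℝ) / (r : ℝ))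
    (k l : ℕ) (hk : 0 < k) (hl : 0 < l)
    (hksf : Squarefree k) (hlsf : Squarefree l) (hkl : Nat.Coprime k l) :
    {p : ℕ × ℕ | 0 < p.1 ∧ 0 < p.2 ∧ Squarefree p.1 ∧ Squarefree p.2 ∧
      IsThetaCongruent r s p.1 ∧ IsThetaCongruent r s p.2 ∧
      l * p.2 = k * p.1}.Infinite := by
  have hrr : (0 : ℝ) < r := by exact_mod_cast hr
  have hsr : s < r := by
    have h : Real.cos θ < 1 := by
      rw [← Real.cos_zero]
      exact Real.cos_lt_cos_of_nonneg_of_le_pi le_rfl hθπ.le hθ0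
    rw [hcos, div_lt_one hrr] at h
    exact_mod_cast h
  have hrs' : -r < s := by
    have h : -1 < Real.cos θ := by
      rw [← Real.cos_pi]
      exact Real.cos_lt_cos_of_nonneg_of_le_pi hθ0.le le_rfl hθπ
    rw [hcos, lt_div_iff₀ hrr, neg_one_mul] at h
    exact_mod_cast h
  have hs2 : s ^ 2 < r ^ 2 := sq_lt_sq' hrs' hsr
  obtain ⟨P, hPdef⟩ : ∃ P, P = 27 * (3 * (r - s) ^ 2 - 4 * (3 * r + s) ^ 2) := ⟨_, rfl⟩
  obtain ⟨Q, hQdef⟩ : ∃ Q, Q = 54 * (3 * r + s) * (8 * (3 * r + s) ^ 2 - 9 * (r - s) ^ 2) :=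
    ⟨_, rfl⟩
  have hB2 : 0 < (r - s) ^ 2 := by have := sub_pos.2 hsr; positivity
  have hBA : (r - s) ^ 2 < (3 * r + s) ^ 2 := by nlinarith
  have hP : P < 0 := by rw [hPdef]; linarith
  have hA0 : 3 * r + s ≠ 0 := by linarith
  have hQ : Q ≠ 0 := by
    rw [hQdef]
    exact mul_ne_zero (mul_ne_zero (by norm_num) hA0)
      (sub_ne_zero.2 (eight_mul_sq_ne_nine_mul_sq hA0))
  have hdisc : 4 * P ^ 3 + 27 * Q ^ 2 < 0 := by
    have h : 4 * P ^ 3 + 27 * Q ^ 2 =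
        -(2125764 * (((r - s) ^ 2) ^ 2 * ((3 * r + s) ^ 2 - (r - s) ^ 2))) := by
      rw [hPdef, hQdef]; ring
    rw [h, neg_lt_zero]
    have := sub_pos.2 hBA
    positivity
  have hklsf : Squarefree (k * l) := (Nat.squarefree_mul hkl).2 ⟨hksf, hlsf⟩
  have hkl0 : 0 < k * l := Nat.mul_pos hk hl
  obtain ⟨z, hz, hzpos⟩ := exists_twistForm_pos hP hQ hdisc
  obtain ⟨k', l', hk', hl', hscale⟩ :=
    exists_scale_even_padicValRat hP.ne hQ hk.ne' hl.ne' hklsf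
  obtain ⟨a, b, ha, hab, hpos⟩ := exists_interval_twistForm_pos (k := k * k' ^ 2)
    (l := l * l' ^ 2) (by positivity) (by positivity) hz hzpos
  refine Set.Infinite.of_image Prod.fst (Set.infinite_of_forall_exists_gt fun L => ?_)
  obtain ⟨p, u, v, hp, hpL, hu, hv, huK, hvK, hau, hub, hpα, hpd, hpd2⟩ :=
    exists_prime_and_coprime_pair (k := k * k' ^ 2) (l := l * l' ^ 2) (by positivity)
      (by positivity) hkl0 (L + P.natAbs + Q.natAbs) ha hab
  have hC := hpos u v hv hau hub
  obtain ⟨α, hα⟩ : ∃ α : ℤ, α = k * (k' * u) ^ 2 := ⟨_, rfl⟩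
  obtain ⟨β, hβ⟩ : ∃ β : ℤ, β = l * (l' * v) ^ 2 := ⟨_, rfl⟩
  have hα' : ((k * k' ^ 2 : ℕ) : ℤ) * (u : ℤ) ^ 2 = α := by rw [hα]; push_cast; ring
  have hβ' : ((l * l' ^ 2 : ℕ) : ℤ) * (v : ℤ) ^ 2 = β := by rw [hβ]; push_cast; ring
  rw [hα', hβ'] at hC
  have hα0 : 0 < α := by rw [hα]; positivity
  have hβ0 : 0 < β := by rw [hβ]; positivity
  have hpZ : Prime (p : ℤ) := Nat.prime_iff_prime_int.1 hp
  have hpα' : ¬ (p : ℤ) ∣ α := by rw [← hα']; exact_mod_cast hpα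
  have hpd' : (p : ℤ) ∣ α + β := by rw [← hα', ← hβ']; exact_mod_cast hpd
  have hpd2' : ¬ (p : ℤ) ^ 2 ∣ α + β := by rw [← hα', ← hβ']; exact_mod_cast hpd2
  have hpβ' : ¬ (p : ℤ) ∣ β := fun h => hpα' ((dvd_add_left h).1 hpd')
  have hlarge : ∀ m : ℤ, m ≠ 0 → m.natAbs < p → ¬ (p : ℤ) ∣ m := fun m hm hlt h =>
    hlt.not_ge (Nat.le_of_dvd (Int.natAbs_pos.2 hm) (Int.natCast_dvd.1 h))
  have hpP : ¬ (p : ℤ) ∣ P := hlarge P hP.ne (by lia)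
  have hpQ : ¬ (p : ℤ) ∣ Q := hlarge Q hQ (by lia)
  have hpC2 := not_sq_dvd_twistForm hpZ hpP hpQ hpα' hpd' hpd2'
  have hpC : (p : ℤ) ∣ twistForm P Q α β := (hpd'.mul_left _).mul_right _
  have hCval := hscale u v huK hvK (by rw [← hα, ← hβ]; exact hC.ne')
  rw [← hα, ← hβ] at hCval
  obtain ⟨C, hCC⟩ := Int.eq_ofNat_of_zero_le hC.le
  obtain ⟨T, m, hTm, hT⟩ := Nat.sq_mul_squarefree C
  have hC0 : C ≠ 0 := by rintro rfl; simp [hCC] at hC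
  have hm0 : m ≠ 0 := by rintro rfl; exact hC0 (by simpa using hTm.symm)
  have hT0 : 0 < T := Nat.pos_of_ne_zero hT.ne_zero
  have hpT : p ∣ T := by
    rw [hCC, ← hTm] at hpC hpC2
    have h1 : p ∣ m ^ 2 * T := by exact_mod_cast hpC
    refine (hp.dvd_mul.1 h1).resolve_left fun h => hpC2 ?_
    exact_mod_cast (pow_dvd_pow_of_dvd (hp.dvd_of_dvd_pow h) 2).mul_right T
  have hTkl : T.Coprime (k * l) := Nat.coprime_of_dvd fun q hq hqT hqkl =>
    not_dvd_of_even_padicValRat hq hT hm0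
      (by have := hCval q hq hqkl; rwa [hCC, ← hTm, Int.cast_natCast] at this) hqT
  have hlT : l.Coprime T := (Nat.Coprime.coprime_mul_left_right hTkl).symm
  have hkT : k.Coprime T := (Nat.Coprime.coprime_mul_right_right hTkl).symm
  have hTmr : (twistForm P Q α β : ℚ) = (m : ℚ) ^ 2 * T := by
    rw [hCC, ← hTm]; push_cast; ring
  have hmr : (m : ℚ) ≠ 0 := by exact_mod_cast hm0
  have hk'r : (k' : ℚ) ≠ 0 := by exact_mod_cast hk'.ne'
  have hl'r : (l' : ℚ) ≠ 0 := by exact_mod_cast hl'.ne'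
  have hur : (u : ℚ) ≠ 0 := by exact_mod_cast hu.ne'
  have hvr : (v : ℚ) ≠ 0 := by exact_mod_cast hv.ne'
  refine ⟨l * T, ⟨(l * T, k * T), ⟨Nat.mul_pos hl hT0, Nat.mul_pos hk hT0,
    (Nat.squarefree_mul hlT).2 ⟨hlsf, hT⟩, (Nat.squarefree_mul hkT).2 ⟨hksf, hT⟩, ?_, ?_, ?_⟩,
    rfl⟩, ?_⟩
  · refine isThetaCongruent_of_twistForm hr hs2 (Nat.mul_pos hl hT0) hPdef hQdef hP.ne hβ0 hα0 hpZ
      (add_comm α β ▸ hpd') hpβ' hpQ (m := l' * v * m) (by positivity) ?_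
    rw [twistForm_comm, hTmr, hβ]
    push_cast; ring
  · refine isThetaCongruent_of_twistForm hr hs2 (Nat.mul_pos hk hT0) hPdef hQdef hP.ne hα0 hβ0 hpZ
      hpd' hpα' hpQ (m := k' * u * m) (by positivity) ?_
    rw [hTmr, hα]
    push_cast; ring
  · exact Nat.mul_left_comm l k T
  · calc L < p := by lia
      _ ≤ T := Nat.le_of_dvd hT0 hpT
      _ ≤ l * T := Nat.le_mul_of_pos_left T hl
end

section
/- Let θ ∈ (0, π) with cos θ ∈ ℚ, and write cos θ = s/r with r, s coprime integers and r > 0. Let k and l be positive, squarefree, coprime integers. Then there exist infinitely many positive squarefree integers N such that k·N and l·N are both squarefree and both k·N and l·N are θ-congruent numbers. -/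
/-- A point with nonzero second coordinate on the twist by `n` of the cubic curve attached to `θ`,
translated so that the largest root is `0`, gives a triangle. -/
theorem isThetaCongruent_of_cubic {r s : ℤ} {n : ℕ} (hr : 0 < r) (hsr : s < r) (hrs : 0 < r + s)
    {x m : ℚ} (hx : 0 < x) (hm : 0 < m)
    (h : x * (x + ((r : ℚ) - s)) * (x + 2 * r) = n * m ^ 2) : IsThetaCongruent r s n := by
  have hr' : (0 : ℚ) < r := by exact_mod_cast hr
  have hB : (0 : ℚ) < (r : ℚ) - s := sub_pos.2 (by exact_mod_cast hsr)
  have hA : (0 : ℚ) < (r : ℚ) + s := by exact_mod_cast hrs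
  refine ⟨(x + 2 * r) * x / m, 2 * r * (x + (r - s)) / m,
    ((x + (r - s)) ^ 2 + (r + s) * (r - s)) / m, by positivity, by positivity, by positivity, ?_, ?_⟩
  · field_simp
    linear_combination h
  · field_simp
    ring

/-- Every positive rational is a squarefree positive integer times a square. -/
theorem Rat.exists_squarefree_mul_sq {g : ℚ} (hg : 0 < g) :
    ∃ n : ℕ, Squarefree n ∧ ∃ m : ℚ, 0 < m ∧ g = n * m ^ 2 := by
  have hnum : 0 < g.num := Rat.num_pos.2 hg
  obtain ⟨a, b, ha, hb, hab, hsq⟩ :=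
    Nat.sq_mul_squarefree_of_pos (Nat.mul_pos (Int.natAbs_pos.2 hnum.ne') g.den_pos)
  refine ⟨a, hsq, b / g.den, div_pos (by exact_mod_cast hb) (by exact_mod_cast g.den_pos), ?_⟩
  have h1 : ((g.num.natAbs : ℕ) : ℚ) = g.num := by
    rw [Nat.cast_natAbs, abs_of_pos hnum]
  have h2 : (b : ℚ) ^ 2 * a = g.num * g.den := by
    rw [← h1]
    exact_mod_cast hab
  have hden : (g.den : ℚ) ≠ 0 := by exact_mod_cast g.den_ne_zero
  conv_lhs => rw [← Rat.num_div_den g]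
  field_simp
  linear_combination -h2

/-- A prime divides the squarefree part of a rational iff its valuation is odd. -/
theorem Squarefree.dvd_iff_odd_padicValRat {n p : ℕ} [hp : Fact p.Prime] (hn : Squarefree n)
    {m : ℚ} (hm : m ≠ 0) : p ∣ n ↔ Odd (padicValRat p (n * m ^ 2)) := by
  have hn0 : n ≠ 0 := hn.ne_zero
  rw [padicValRat.mul (by exact_mod_cast hn0) (pow_ne_zero _ hm), padicValRat.pow,
    padicValRat.of_nat]
  have hle : padicValNat p n ≤ 1 := by
    by_contra! h
    have h2 : p ^ 2 ∣ n := (padicValNat_dvd_iff_le hn0).2 h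
    exact hp.out.not_isUnit (hn p (by rwa [← sq]))
  constructor
  · intro hd
    have := one_le_padicValNat_of_dvd hn0 hd
    have h1 : padicValNat p n = 1 := le_antisymm hle this
    rw [h1]
    exact ⟨padicValRat p m, by push_cast; ring⟩
  · intro ho
    by_contra hd
    rw [padicValNat.eq_zero_of_not_dvd hd] at ho
    refine (Int.not_odd_iff_even.2 ⟨padicValRat p m, ?_⟩) ho
    push_cast
    ring

theorem padicValRat.sub_eq_left {p : ℕ} [Fact p.Prime] {x y : ℚ} (hx : x ≠ 0) (hy : y ≠ 0)
    (h : padicValRat p x < padicValRat p y) : padicValRat p (x - y) = padicValRat p x := by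
  have hne : x + -y ≠ 0 := by
    intro h0
    rw [add_neg_eq_zero.1 h0] at h
    exact lt_irrefl _ h
  rw [sub_eq_add_neg, padicValRat.add_eq_of_lt hne hx (neg_ne_zero.2 hy)
    (by rwa [padicValRat.neg])]

theorem padicValRat.sub_eq_right {p : ℕ} [Fact p.Prime] {x y : ℚ} (hx : x ≠ 0) (hy : y ≠ 0)
    (h : padicValRat p y < padicValRat p x) : padicValRat p (x - y) = padicValRat p y := by
  rw [← neg_sub, padicValRat.neg, padicValRat.sub_eq_left hy hx h]

/-- The sextic form, in terms of `u = k l t²`, whose squarefree part is `l N`. -/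
def thetaForm (B C u : ℚ) : ℚ := (B + C) * (1 + u) * (C * u - B) * (C - B * u)

section Valuation

variable {p : ℕ} [Fact p.Prime] {B C u : ℚ}

theorem padicValRat_thetaForm_eq_add (hB : 0 < B) (hC : 0 < C) (hu : 0 < u)
    (h₁ : C * u - B ≠ 0) (h₂ : C - B * u ≠ 0) :
    padicValRat p (thetaForm B C u) = padicValRat p (B + C) + padicValRat p (1 + u) +
      padicValRat p (C * u - B) + padicValRat p (C - B * u) := by
  rw [thetaForm, padicValRat.mul (by positivity) h₂, padicValRat.mul (by positivity) h₁,
    padicValRat.mul (by positivity) (by positivity)]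

theorem padicValRat_thetaForm_of_lt (hB : 0 < B) (hC : 0 < C) (hu : 0 < u)
    (h₁ : C * u - B ≠ 0) (h₂ : C - B * u ≠ 0)
    (hvB : 0 ≤ padicValRat p B) (hvC : 0 ≤ padicValRat p C)
    (h : padicValRat p B + padicValRat p C < padicValRat p u) :
    padicValRat p (thetaForm B C u) =
      padicValRat p (B + C) + padicValRat p B + padicValRat p C := by
  have hCu : padicValRat p (C * u) = padicValRat p C + padicValRat p u :=
    padicValRat.mul hC.ne' hu.ne'
  have hBu : padicValRat p (B * u) = padicValRat p B + padicValRat p u :=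
    padicValRat.mul hB.ne' hu.ne'
  rw [padicValRat_thetaForm_eq_add hB hC hu h₁ h₂,
    padicValRat.add_eq_of_lt (by positivity) one_ne_zero hu.ne' (by rw [padicValRat.one]; omega),
    padicValRat.sub_eq_right (by positivity) hB.ne' (by omega),
    padicValRat.sub_eq_left hC.ne' (by positivity) (by omega), padicValRat.one]
  ring

theorem padicValRat_thetaForm_of_gt (hB : 0 < B) (hC : 0 < C) (hu : 0 < u)
    (h₁ : C * u - B ≠ 0) (h₂ : C - B * u ≠ 0)
    (hvB : 0 ≤ padicValRat p B) (hvC : 0 ≤ padicValRat p C)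
    (h : padicValRat p u < -(padicValRat p B + padicValRat p C)) :
    padicValRat p (thetaForm B C u) =
      padicValRat p (B + C) + padicValRat p B + padicValRat p C + 3 * padicValRat p u := by
  have hCu : padicValRat p (C * u) = padicValRat p C + padicValRat p u :=
    padicValRat.mul hC.ne' hu.ne'
  have hBu : padicValRat p (B * u) = padicValRat p B + padicValRat p u :=
    padicValRat.mul hB.ne' hu.ne'
  rw [padicValRat_thetaForm_eq_add hB hC hu h₁ h₂, add_comm 1 u,
    padicValRat.add_eq_of_lt (by positivity) hu.ne' one_ne_zero (by rw [padicValRat.one]; omega),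
    padicValRat.sub_eq_left (by positivity) hB.ne' (by omega),
    padicValRat.sub_eq_right hC.ne' (by positivity) (by omega), hCu, hBu]
  ring

theorem padicValRat_thetaForm_of_one_add (hB : 0 < B) (hC : 0 < C) (hu : 0 < u)
    (h₁ : C * u - B ≠ 0) (h₂ : C - B * u ≠ 0)
    (hvB : padicValRat p B = 0) (hvC : padicValRat p C = 0) (hvD : padicValRat p (B + C) = 0)
    (h : padicValRat p (1 + u) = 1) : padicValRat p (thetaForm B C u) = 1 := by
  have e₁ : C * u - B = C * (1 + u) - (B + C) := by ring
  have e₂ : C - B * u = (B + C) - B * (1 + u) := by ring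
  have hCu : padicValRat p (C * (1 + u)) = padicValRat p C + padicValRat p (1 + u) :=
    padicValRat.mul hC.ne' (by positivity)
  have hBu : padicValRat p (B * (1 + u)) = padicValRat p B + padicValRat p (1 + u) :=
    padicValRat.mul hB.ne' (by positivity)
  rw [padicValRat_thetaForm_eq_add hB hC hu h₁ h₂, e₁, e₂,
    padicValRat.sub_eq_right (by positivity) (by positivity) (by omega),
    padicValRat.sub_eq_left (by positivity) (by positivity) (by omega), hvD, h]
  norm_num

end Valuation

/-- Fractions with prescribed residues of numerator and denominator are dense. -/
theorem exists_ratio_modEq_of_lt {α β : ℝ} (hαβ : α < β) {M : ℕ} (hM : 0 < M) (x₀ : ℤ) :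
    ∃ i : ℤ, ∃ j : ℕ, α < ((x₀ + M * i : ℤ) : ℝ) / ((1 + M * j : ℕ) : ℝ) ∧
      ((x₀ + M * i : ℤ) : ℝ) / ((1 + M * j : ℕ) : ℝ) < β := by
  have hM' : (1 : ℝ) ≤ M := by exact_mod_cast hM
  obtain ⟨j, hj⟩ := exists_nat_gt (1 / (β - α))
  have hd : 0 < β - α := sub_pos.2 hαβ
  rw [div_lt_iff₀ hd] at hj
  have hy : (0 : ℝ) < ((1 + M * j : ℕ) : ℝ) := by exact_mod_cast (by omega : 0 < 1 + M * j)
  have hyM : (M : ℝ) < (β - α) * ((1 + M * j : ℕ) : ℝ) := by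
    push_cast
    nlinarith
  set y : ℝ := ((1 + M * j : ℕ) : ℝ)
  refine ⟨⌊(α * y - x₀) / M⌋ + 1, j, ?_, ?_⟩
  · rw [lt_div_iff₀ hy]
    have := Int.lt_floor_add_one ((α * y - x₀) / M)
    rw [div_lt_iff₀ (by linarith)] at this
    push_cast
    linarith
  · rw [div_lt_iff₀ hy]
    have := Int.floor_le ((α * y - x₀) / M)
    rw [le_div_iff₀ (by linarith)] at this
    push_cast
    linarith

/-- There are arbitrarily large primes `q` such that `1 + K z²` has an exact factor `q`. -/
theorem exists_prime_gt_exact_dvd_one_add_mul_sq {K : ℕ} (hK : 0 < K) (T : ℕ) :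
    ∃ q : ℕ, q.Prime ∧ T < q ∧ ∃ z : ℤ, (q : ℤ) ∣ 1 + K * z ^ 2 ∧ ¬ (q : ℤ) ^ 2 ∣ 1 + K * z ^ 2 := by
  set U := T + K + 2 with hU
  set F := 1 + K * U.factorial ^ 2 with hF
  have hfac : 0 < U.factorial := Nat.factorial_pos U
  have hF1 : F ≠ 1 := by
    have : 0 < K * U.factorial ^ 2 := by positivity
    omega
  have hq := Nat.minFac_prime hF1
  have hqF := Nat.minFac_dvd F
  set q := F.minFac
  have hqU : ¬ q ∣ U.factorial := by
    intro h
    have h1 : q ∣ K * U.factorial ^ 2 := (dvd_pow h two_ne_zero).mul_left K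
    exact hq.one_lt.ne' (Nat.dvd_one.1 ((Nat.dvd_add_left h1).1 hqF))
  have hUq : U < q := by
    by_contra! h
    exact hqU (Nat.dvd_factorial hq.pos h)
  have hqK : ¬ q ∣ K := fun h => by have := Nat.le_of_dvd hK h; omega
  have hq2 : ¬ q ∣ 2 := fun h => by have := Nat.le_of_dvd two_pos h; omega
  have hdvd : (q : ℤ) ∣ 1 + K * (U.factorial : ℤ) ^ 2 := by exact_mod_cast hqF
  refine ⟨q, hq, by omega, ?_⟩
  by_cases hsq : (q : ℤ) ^ 2 ∣ 1 + K * (U.factorial : ℤ) ^ 2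
  · have e : (1 : ℤ) + K * ((U.factorial : ℤ) + q) ^ 2 =
        (1 + K * (U.factorial : ℤ) ^ 2) + q * (K * (2 * U.factorial) + q * K) := by ring
    refine ⟨U.factorial + q, e ▸ dvd_add hdvd (dvd_mul_right _ _), fun h => ?_⟩
    rw [e, dvd_add_right hsq, sq, mul_dvd_mul_iff_left (by exact_mod_cast hq.ne_zero),
      dvd_add_left (dvd_mul_right _ _)] at h
    have h' : q ∣ K * (2 * U.factorial) := by exact_mod_cast h
    rcases hq.dvd_mul.1 h' with h | h
    · exact hqK h
    · exact (hq.dvd_mul.1 h).elim hq2 hqU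
  · exact ⟨U.factorial, hdvd, hsq⟩

theorem padicValRat_intCast_eq_zero {p : ℕ} {x : ℤ} (h : ¬ (p : ℤ) ∣ x) :
    padicValRat p x = 0 := by
  rw [padicValRat.of_int, padicValInt.eq_zero_of_not_dvd h, Nat.cast_zero]

theorem padicValRat_natCast_eq_zero {p n : ℕ} (h : ¬ p ∣ n) : padicValRat p n = 0 := by
  rw [padicValRat.of_nat, padicValNat.eq_zero_of_not_dvd h, Nat.cast_zero]

theorem padicValRat_pow_mul_div {p P Q E : ℕ} [Fact p.Prime] (hP : P ≠ 0) (hQ : Q ≠ 0)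
    {x : ℤ} {y : ℕ} (hx : ¬ (p : ℤ) ∣ x) (hy : ¬ p ∣ y) :
    padicValRat p ((P : ℚ) ^ E * x / ((Q : ℚ) ^ E * y)) =
      E * padicValNat p P - E * padicValNat p Q := by
  have hx0 : (x : ℚ) ≠ 0 := by
    rintro h
    exact hx (by simp [Int.cast_eq_zero.1 h])
  have hy0 : (y : ℚ) ≠ 0 := by
    rintro h
    exact hy (by simp [Nat.cast_eq_zero.1 h])
  have hP0 : (P : ℚ) ^ E ≠ 0 := pow_ne_zero _ (by exact_mod_cast hP)
  have hQ0 : (Q : ℚ) ^ E ≠ 0 := pow_ne_zero _ (by exact_mod_cast hQ)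
  rw [padicValRat.div (mul_ne_zero hP0 hx0) (mul_ne_zero hQ0 hy0), padicValRat.mul hP0 hx0,
    padicValRat.mul hQ0 hy0, padicValRat.pow, padicValRat.pow, padicValRat_intCast_eq_zero hx,
    padicValRat_natCast_eq_zero hy, padicValRat.of_nat, padicValRat.of_nat, add_zero, add_zero]

/-- Weak approximation: a rational `t` in a given interval, divisible by a high power of the
primes of `P`, having a high power of the primes of `Q` in the denominator, and such that
`1 + P Q t²` has valuation `1` at a large prime `q`. -/
theorem exists_rat_padicValRat_of_coprime {P Q : ℕ} (hP : 0 < P) (hQ : 0 < Q)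
    (hPQ : P.Coprime Q) (E T : ℕ) {α β : ℝ} (hαβ : α < β) :
    ∃ t : ℚ, α < t ∧ (t : ℝ) < β ∧
      (∀ p : ℕ, p.Prime → p ∣ P → (E : ℤ) ≤ padicValRat p t) ∧
      (∀ p : ℕ, p.Prime → p ∣ Q → padicValRat p t ≤ -(E : ℤ)) ∧
      ∃ q : ℕ, q.Prime ∧ T < q ∧ padicValRat q (1 + (P * Q : ℕ) * t ^ 2) = 1 := by
  have hK : 0 < P * Q := Nat.mul_pos hP hQ
  obtain ⟨q, hq, hTq, z, hz, hz2⟩ :=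
    exists_prime_gt_exact_dvd_one_add_mul_sq hK (T + P * Q)
  have hqK : ¬ q ∣ P * Q := fun h => by have := Nat.le_of_dvd hK h; omega
  have hqQ : ¬ q ∣ Q := fun h => hqK (h.mul_left P)
  have hqP : ¬ q ∣ P := fun h => hqK (h.mul_right Q)
  have hcop : IsCoprime (((P ^ E * (P * Q) : ℕ)) : ℤ) ((q ^ 2 : ℕ) : ℤ) := by
    rw [Nat.isCoprime_iff_coprime]
    refine Nat.Coprime.pow_right 2 (Nat.Coprime.symm ((hq.coprime_iff_not_dvd).2 fun h => ?_))
    rcases hq.dvd_mul.1 h with h | h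
    · exact hqP (hq.dvd_of_dvd_pow h)
    · exact hqK h
  obtain ⟨c, d, hcd⟩ := hcop
  set w : ℤ := c * (z * Q ^ E - P ^ E) with hw
  have hM : 0 < P * Q * q ^ 2 := Nat.mul_pos hK (pow_pos hq.pos 2)
  have hρ : (0 : ℝ) < (P : ℝ) ^ E / (Q : ℝ) ^ E := by positivity
  obtain ⟨i, j, hi, hj⟩ := exists_ratio_modEq_of_lt
    (div_lt_div_of_pos_right hαβ hρ) hM (1 + P * Q * w)
  set x : ℤ := 1 + P * Q * w + (P * Q * q ^ 2 : ℕ) * i with hx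
  set y : ℕ := 1 + P * Q * q ^ 2 * j with hy
  have hpx : ∀ p : ℕ, p.Prime → p ∣ P * Q → ¬ (p : ℤ) ∣ x := by
    intro p hp hpK h
    have hpK' : (p : ℤ) ∣ P * Q := by exact_mod_cast hpK
    have e : x = 1 + (P * Q : ℤ) * (w + q ^ 2 * i) := by rw [hx]; push_cast; ring
    rw [e, dvd_add_left (hpK'.mul_right _)] at h
    exact hp.one_lt.ne' (by exact_mod_cast Int.eq_one_of_dvd_one (by positivity) h)
  have hpy : ∀ p : ℕ, p.Prime → p ∣ P * Q * q ^ 2 → ¬ p ∣ y := by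
    intro p hp hpK h
    rw [hy, Nat.dvd_add_left (hpK.mul_right _)] at h
    exact hp.one_lt.ne' (Nat.dvd_one.1 h)
  have hy0 : 0 < y := by omega
  have hcast : (((P : ℚ) ^ E * x / ((Q : ℚ) ^ E * y) : ℚ) : ℝ) =
      (x : ℝ) / (y : ℝ) * ((P : ℝ) ^ E / (Q : ℝ) ^ E) := by
    rw [div_mul_div_comm, mul_comm (x : ℝ), mul_comm (y : ℝ)]
    norm_cast
  refine ⟨(P : ℚ) ^ E * x / ((Q : ℚ) ^ E * y), ?_, ?_, ?_, ?_, q, hq, by omega, ?_⟩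
  · rw [div_lt_iff₀ hρ] at hi
    rwa [hcast]
  · rw [lt_div_iff₀ hρ] at hj
    rwa [hcast]
  · intro p hp hpP
    have := Fact.mk hp
    rw [padicValRat_pow_mul_div hP.ne' hQ.ne' (hpx p hp (hpP.mul_right Q))
      (hpy p hp ((hpP.mul_right Q).mul_right _)), padicValNat.eq_zero_of_not_dvd
        (fun h => Nat.not_coprime_of_dvd_of_dvd hp.one_lt hpP h hPQ)]
    have := one_le_padicValNat_of_dvd hP.ne' hpP
    push_cast
    nlinarith
  · intro p hp hpQ
    have := Fact.mk hp
    rw [padicValRat_pow_mul_div hP.ne' hQ.ne' (hpx p hp (hpQ.mul_left P))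
      (hpy p hp ((hpQ.mul_left P).mul_right _)), padicValNat.eq_zero_of_not_dvd (n := P)
        (fun h => Nat.not_coprime_of_dvd_of_dvd hp.one_lt h hpQ hPQ)]
    have := one_le_padicValNat_of_dvd hQ.ne' hpQ
    push_cast
    nlinarith
  · have := Fact.mk hq
    set n : ℤ := (Q ^ E * y) ^ 2 + P * Q * (P ^ E * x) ^ 2 with hn
    have hPx : ((q : ℤ) ^ 2) ∣ P ^ E * x - z * Q ^ E := by
      refine ⟨-d * (z * Q ^ E - P ^ E) + P ^ E * (P * Q) * i, ?_⟩
      rw [hx, hw]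
      push_cast at hcd ⊢
      linear_combination (z * Q ^ E - P ^ E) * hcd
    have hQy : ((q : ℤ) ^ 2) ∣ Q ^ E * y - Q ^ E :=
      ⟨Q ^ E * (P * Q * j), by rw [hy]; push_cast; ring⟩
    have hcong : ((q : ℤ) ^ 2) ∣ n - (Q ^ E) ^ 2 * (1 + (P * Q : ℕ) * z ^ 2) := by
      obtain ⟨e, he⟩ := hPx
      obtain ⟨f, hf⟩ := hQy
      refine ⟨f * (Q ^ E * y + Q ^ E) + P * Q * e * (P ^ E * x + z * Q ^ E), ?_⟩
      rw [hn]
      push_cast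
      linear_combination (Q ^ E * y + Q ^ E : ℤ) * hf + P * Q * (P ^ E * x + z * Q ^ E : ℤ) * he
    have hn1 : (q : ℤ) ∣ n := by
      have h1 := (dvd_pow_self (q : ℤ) two_ne_zero).trans hcong
      exact (dvd_sub_left (hz.mul_left _)).1 h1
    have hn2 : ¬ (q : ℤ) ^ 2 ∣ n := by
      intro h
      refine hz2 (IsCoprime.dvd_of_dvd_mul_left ?_ ((dvd_sub_right h).1 hcong))
      exact_mod_cast (Nat.isCoprime_iff_coprime.2 (Nat.Coprime.pow 2 2
        (Nat.Coprime.pow_right E ((hq.coprime_iff_not_dvd).2 hqQ))))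
    have hn0 : n ≠ 0 := fun h => hn2 (by simp [h])
    have hvn : padicValInt q n = 1 := by
      have h1 := (padicValInt_dvd_iff 1 n).1 (by simpa using hn1)
      have h2 := (padicValInt_dvd_iff 2 n).not.1 (by simpa using hn2)
      push Not at h2
      rcases h1 with h1 | h1
      · exact absurd h1 hn0
      · omega
    have hQ0 : ((Q : ℚ) ^ E * y) ≠ 0 := by positivity
    have e : 1 + ((P * Q : ℕ) : ℚ) * ((P : ℚ) ^ E * x / ((Q : ℚ) ^ E * y)) ^ 2 =
        (n : ℚ) / ((Q ^ E * y : ℕ) : ℚ) ^ 2 := by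
      rw [hn]
      push_cast
      field_simp
    have hden : ¬ q ∣ Q ^ E * y := by
      intro h
      rcases hq.dvd_mul.1 h with h | h
      · exact hqQ (hq.dvd_of_dvd_pow h)
      · exact hpy q hq ((dvd_pow_self q two_ne_zero).mul_left _) h
    rw [e, padicValRat.div (by exact_mod_cast hn0) (by exact_mod_cast pow_ne_zero 2 hQ0),
      padicValRat.pow, padicValRat_natCast_eq_zero hden, padicValRat.of_int, hvn]
    norm_num

/-- A squarefree number splits according to any property of its prime divisors. -/
theorem Squarefree.exists_mul_eq_of_primes {n : ℕ} (hn : Squarefree n) (good : ℕ → Prop) :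
    ∃ P Q : ℕ, P * Q = n ∧ (∀ p, p.Prime → p ∣ P → good p) ∧
      (∀ p, p.Prime → p ∣ Q → ¬ good p) := by
  classical
  refine ⟨∏ p ∈ n.primeFactors with good p, p, ∏ p ∈ n.primeFactors with ¬ good p, p, ?_, ?_, ?_⟩
  · rw [Finset.prod_filter_mul_prod_filter_not, Nat.prod_primeFactors_of_squarefree hn]
  all_goals
    intro p hp h
    obtain ⟨a, ha, hpa⟩ := (Prime.dvd_finsetProd_iff hp.prime _).1 h
    rw [Finset.mem_filter] at ha
    rw [(Nat.prime_dvd_prime_iff_eq hp (Nat.prime_of_mem_primeFactors ha.1)).1 hpa]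
    exact ha.2

theorem exists_thetaForm_padicValRat {B C k l : ℕ} (hB : 0 < B) (hBC : B < C)
    (hk : Squarefree k) (hl : Squarefree l) (hkl : k.Coprime l) (T : ℕ) :
    ∃ t : ℚ, 0 < t ∧ (B : ℚ) < C * ((k * l : ℕ) * t ^ 2) ∧ B * ((k * l : ℕ) * t ^ 2) < (C : ℚ) ∧
      (∀ p : ℕ, p.Prime → p ∣ k * l →
        (Odd (padicValRat p (thetaForm B C ((k * l : ℕ) * t ^ 2))) ↔ p ∣ l)) ∧
      ∃ q : ℕ, q.Prime ∧ T < q ∧ Odd (padicValRat q (thetaForm B C ((k * l : ℕ) * t ^ 2))) := by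
  have hC : 0 < C := hB.trans hBC
  have hK : Squarefree (k * l) := (Nat.squarefree_mul hkl).2 ⟨hk, hl⟩
  have hK0 : 0 < k * l := Nat.pos_of_ne_zero hK.ne_zero
  obtain ⟨P, Q, hPQ, hgP, hgQ⟩ := hK.exists_mul_eq_of_primes fun p =>
    (Odd (padicValRat p ((B : ℚ) + C) + padicValRat p B + padicValRat p C) ↔ p ∣ l)
  have hcop : P.Coprime Q := by
    rw [← hPQ] at hK
    exact Nat.coprime_of_squarefree_mul hK
  have hP : 0 < P := Nat.pos_of_ne_zero (by rintro rfl; rw [zero_mul] at hPQ; omega)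
  have hQ : 0 < Q := Nat.pos_of_ne_zero (by rintro rfl; rw [mul_zero] at hPQ; omega)
  have hB' : (0 : ℝ) < B := by exact_mod_cast hB
  have hC' : (0 : ℝ) < C := by exact_mod_cast hC
  have hBC' : (B : ℝ) < C := by exact_mod_cast hBC
  have hKr : (0 : ℝ) < (k * l : ℕ) := by exact_mod_cast hK0
  have hint : √((B : ℝ) / (C * (k * l : ℕ))) < √((C : ℝ) / (B * (k * l : ℕ))) := by
    refine Real.sqrt_lt_sqrt (by positivity) ?_
    rw [div_lt_div_iff₀ (by positivity) (by positivity)]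
    have : (B : ℝ) * B < C * C := by nlinarith
    nlinarith
  obtain ⟨t, ht1, ht2, htP, htQ, q, hq, hTq, hvq⟩ :=
    exists_rat_padicValRat_of_coprime hP hQ hcop (B * C) (T + B + C) hint
  rw [hPQ] at hvq
  have ht0' : (0 : ℝ) < t := (Real.sqrt_nonneg _).trans_lt ht1
  have ht0 : 0 < t := by exact_mod_cast ht0'
  rw [Real.sqrt_lt' ht0', div_lt_iff₀ (by positivity)] at ht1
  rw [Real.lt_sqrt ht0'.le, lt_div_iff₀ (by positivity)] at ht2
  have hBq : (0 : ℚ) < B := by exact_mod_cast hB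
  have hCq : (0 : ℚ) < C := by exact_mod_cast hC
  have hKq : (0 : ℚ) < (k * l : ℕ) := by exact_mod_cast hK0
  have h1 : (B : ℚ) < C * ((k * l : ℕ) * t ^ 2) := by
    have : (B : ℝ) < C * ((k * l : ℕ) * (t : ℝ) ^ 2) := by linarith
    exact_mod_cast this
  have h2 : (B : ℚ) * ((k * l : ℕ) * t ^ 2) < C := by
    have : (B : ℝ) * ((k * l : ℕ) * (t : ℝ) ^ 2) < C := by linarith
    exact_mod_cast this
  have hu : 0 < ((k * l : ℕ) : ℚ) * t ^ 2 := by positivity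
  refine ⟨t, ht0, h1, h2, ?_, q, hq, by omega, ?_⟩
  · intro p hp hpK
    have := Fact.mk hp
    have hvK : padicValRat p ((k * l : ℕ) : ℚ) = 1 := by
      have h := (hK.dvd_iff_odd_padicValRat (p := p) one_ne_zero).1 hpK
      have hle : padicValNat p (k * l) ≤ 1 := by
        by_contra! h
        have h2 : p ^ 2 ∣ k * l := (padicValNat_dvd_iff_le hK0.ne').2 h
        exact hp.not_isUnit (hK p (by rwa [← sq]))
      have := one_le_padicValNat_of_dvd hK0.ne' hpK
      rw [padicValRat.of_nat]
      omega
    have hvu : padicValRat p (((k * l : ℕ) : ℚ) * t ^ 2) = 1 + 2 * padicValRat p t := by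
      rw [padicValRat.mul hKq.ne' (by positivity), padicValRat.pow, hvK]
      norm_num
    have hvBC : padicValRat p (B : ℚ) + padicValRat p (C : ℚ) < (B * C : ℕ) := by
      rw [← padicValRat.mul hBq.ne' hCq.ne', ← Nat.cast_mul, padicValRat.of_nat,
        ← Nat.factorization_def _ hp]
      exact_mod_cast Nat.factorization_lt p (Nat.mul_pos hB hC).ne'
    have hvB : 0 ≤ padicValRat p (B : ℚ) := by rw [padicValRat.of_nat]; positivity
    have hvC : 0 ≤ padicValRat p (C : ℚ) := by rw [padicValRat.of_nat]; positivity
    rw [← hPQ, hp.dvd_mul] at hpK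
    rcases hpK with hpP | hpQ
    · have := htP p hp hpP
      rw [padicValRat_thetaForm_of_lt hBq hCq hu (sub_ne_zero.2 h1.ne') (sub_ne_zero.2 h2.ne')
        hvB hvC (by omega)]
      exact hgP p hp hpP
    · have := htQ p hp hpQ
      rw [padicValRat_thetaForm_of_gt hBq hCq hu (sub_ne_zero.2 h1.ne') (sub_ne_zero.2 h2.ne')
        hvB hvC (by omega), hvu]
      have hg := hgQ p hp hpQ
      have h3 : Odd (3 * (1 + 2 * padicValRat p t)) := ⟨1 + 3 * padicValRat p t, by ring⟩
      rw [← Int.not_even_iff_odd] at h3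
      rw [Int.odd_add]
      tauto
  · have := Fact.mk hq
    have hlt : ∀ n : ℕ, 0 < n → n < q → padicValRat q (n : ℚ) = 0 := fun n h0 hn =>
      padicValRat_natCast_eq_zero (Nat.not_dvd_of_pos_of_lt h0 hn)
    rw [padicValRat_thetaForm_of_one_add hBq hCq hu (sub_ne_zero.2 h1.ne') (sub_ne_zero.2 h2.ne')
      (hlt B hB (by omega)) (hlt C hC (by omega))
      (by exact_mod_cast hlt (B + C) (by omega) (by omega)) hvq]
    exact odd_one

/-- `thetaForm B C u` is, up to squares, a value of the cubic `x (x + B) (x + C)`. -/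
theorem exists_cubic_eq_thetaForm {B C u : ℚ} (hB : 0 < B) (hBC : B < C)
    (h₁ : B < C * u) (h₂ : B * u < C) :
    ∃ x m : ℚ, 0 < x ∧ 0 < m ∧ x * (x + B) * (x + C) = thetaForm B C u * m ^ 2 := by
  have hd := sub_pos.2 h₂
  have hn := sub_pos.2 h₁
  have hCB := sub_pos.2 hBC
  refine ⟨B * (C * u - B) / (C - B * u), B * (C - B) / (C - B * u) ^ 2, by positivity,
    by positivity, ?_⟩
  rw [thetaForm]
  field_simp
  ring

/-- `u * thetaForm B C u` is, up to squares, a value of the cubic `x (x + B) (x + C)`. -/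
theorem exists_cubic_eq_mul_thetaForm {B C u : ℚ} (hB : 0 < B) (hBC : B < C)
    (h₁ : B < C * u) (h₂ : B * u < C) :
    ∃ x m : ℚ, 0 < x ∧ 0 < m ∧ x * (x + B) * (x + C) = u * thetaForm B C u * m ^ 2 := by
  have hd := sub_pos.2 h₂
  have hn := sub_pos.2 h₁
  have hCB := sub_pos.2 hBC
  have hC := hB.trans hBC
  refine ⟨C * (C * u - B) / (C - B * u), C * (C - B) / (C - B * u) ^ 2, by positivity,
    by positivity, ?_⟩
  have hd' : C - u * B ≠ 0 := by rw [mul_comm u]; exact hd.ne'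
  rw [thetaForm]
  field_simp
  ring

/-- For `θ ∈ (0, π)` with `cos θ = s / r ∈ ℚ` and `k, l` positive squarefree coprime
integers, there exist infinitely many positive squarefree integers `N` such that `k * N`
and `l * N` are both squarefree and both are `θ`-congruent numbers. -/
theorem infinitely_many_common_theta_congruent_multipliers
    (θ : ℝ) (hθ0 : 0 < θ) (hθπ : θ < Real.pi)
    (r s : ℤ) (hr : 0 < r) (hrs : Int.gcd s r = 1)
    (hcos : Real.cos θ = (s : ℝ) / (r : ℝ))
    (k l : ℕ) (hk : 0 < k) (hl : 0 < l)
    (hksf : Squarefree k) (hlsf : Squarefree l) (hkl : Nat.Coprime k l) :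
    {N : ℕ | 0 < N ∧ Squarefree N ∧ Squarefree (k * N) ∧ Squarefree (l * N) ∧
      IsThetaCongruent r s (k * N) ∧ IsThetaCongruent r s (l * N)}.Infinite := by
  have hr' : (0 : ℝ) < r := by exact_mod_cast hr
  have hcos1 : Real.cos θ < 1 := by
    simpa using Real.cos_lt_cos_of_nonneg_of_le_pi le_rfl hθπ.le hθ0
  have hcos2 : -1 < Real.cos θ := by
    simpa using Real.cos_lt_cos_of_nonneg_of_le_pi hθ0.le le_rfl hθπ
  have hsr : s < r := by
    rw [hcos, div_lt_one hr'] at hcos1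
    exact_mod_cast hcos1
  have hrs0 : 0 < r + s := by
    rw [hcos, lt_div_iff₀ hr'] at hcos2
    have : (0 : ℝ) < (r : ℝ) + s := by linarith
    exact_mod_cast this
  obtain ⟨B, hB⟩ := Int.eq_ofNat_of_zero_le (sub_pos.2 hsr).le
  obtain ⟨C, hC⟩ := Int.eq_ofNat_of_zero_le (by omega : 0 ≤ 2 * r)
  have hBq : (r : ℚ) - s = B := by exact_mod_cast hB
  have hCq : 2 * (r : ℚ) = C := by exact_mod_cast hC
  have hB0 : 0 < B := by omega
  have hBC : B < C := by omega
  refine Set.infinite_of_forall_exists_gt fun T => ?_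
  obtain ⟨t, ht, h₁, h₂, hpar, q, hq, hTq, hqodd⟩ :=
    exists_thetaForm_padicValRat hB0 hBC hksf hlsf hkl (T + l)
  have hK : (0 : ℚ) < (k * l : ℕ) := by exact_mod_cast Nat.mul_pos hk hl
  have hB0q : (0 : ℚ) < B := by exact_mod_cast hB0
  have hBCq : (B : ℚ) < C := by exact_mod_cast hBC
  have hu : 0 < ((k * l : ℕ) : ℚ) * t ^ 2 := by positivity
  obtain ⟨x₁, m₁, hx₁, hm₁, e₁⟩ := exists_cubic_eq_thetaForm hB0q hBCq h₁ h₂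
  obtain ⟨x₂, m₂, hx₂, hm₂, e₂⟩ := exists_cubic_eq_mul_thetaForm hB0q hBCq h₁ h₂
  have hg : 0 < thetaForm B C (((k * l : ℕ) : ℚ) * t ^ 2) := by
    have hd := sub_pos.2 h₂
    have hn := sub_pos.2 h₁
    have hC0 := hB0q.trans hBCq
    rw [thetaForm]
    positivity
  obtain ⟨n, hn, m, hm, hgn⟩ := Rat.exists_squarefree_mul_sq hg
  have hdvd : ∀ p : ℕ, p.Prime →
      (p ∣ n ↔ Odd (padicValRat p (thetaForm B C (((k * l : ℕ) : ℚ) * t ^ 2)))) := by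
    intro p hp
    have := Fact.mk hp
    rw [hgn]
    exact hn.dvd_iff_odd_padicValRat hm.ne'
  have hln : l ∣ n := by
    rw [← Nat.prod_primeFactors_of_squarefree hlsf, ← Nat.prod_primeFactors_of_squarefree hn]
    refine Finset.prod_dvd_prod_of_subset _ _ _ fun p hp => ?_
    have hpl := Nat.dvd_of_mem_primeFactors hp
    have hpp := Nat.prime_of_mem_primeFactors hp
    exact Nat.mem_primeFactors.2
      ⟨hpp, (hdvd p hpp).2 ((hpar p hpp (hpl.mul_left k)).2 hpl), hn.ne_zero⟩
  obtain ⟨N, rfl⟩ := hln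
  have hN : 0 < N := Nat.pos_of_ne_zero fun h => hn.ne_zero (by simp [h])
  have hNsf : Squarefree N := hn.of_mul_right
  have hkN : k.Coprime N := by
    refine Nat.coprime_of_dvd fun p hp hpk hpN => ?_
    have hpl : p ∣ l := (hpar p hp (hpk.mul_right l)).1 ((hdvd p hp).1 (hpN.mul_left l))
    exact Nat.not_coprime_of_dvd_of_dvd hp.one_lt hpk hpl hkl
  have hqN : q ∣ N := by
    refine (hq.dvd_mul.1 ((hdvd q hq).2 hqodd)).resolve_left fun h => ?_
    have := Nat.le_of_dvd hl h
    omega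
  refine ⟨N, ⟨hN, hNsf, (Nat.squarefree_mul hkN).2 ⟨hksf, hNsf⟩, hn, ?_, ?_⟩, ?_⟩
  · refine isThetaCongruent_of_cubic hr hsr hrs0 (m := l * t * m * m₂) hx₂ (by positivity) ?_
    rw [hBq, hCq, e₂, hgn]
    push_cast
    ring
  · refine isThetaCongruent_of_cubic hr hsr hrs0 (m := m * m₁) hx₁ (by positivity) ?_
    rw [hBq, hCq, e₁, hgn]
    ring
  · have := Nat.le_of_dvd hN hqN
    omega
end

section
/- Let θ ∈ (0, π) with cos θ ∈ ℚ, and write cos θ = s/r with r, s coprime integers and r > 0. Let k be a positive squarefree integer. Then there exist infinitely many pairs (M, N) of θ-congruent numbers such that N = k·M; that is, the set of pairs (M, N) of positive squarefree integers such that M and N are both θ-congruent and N = k·M is infinite. -/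
theorem isThetaCongruent_of_mul_sq {r s : ℤ} (hr : 0 < r) (h₁ : -r < s) (h₂ : s < r)
    {n : ℕ} (hn : 0 < n) {x g : ℚ} (hx : 0 < x) (hg : 0 < g)
    (h : x * (x + r - s) * (x + 2 * r) = n * g ^ 2) : IsThetaCongruent r s n := by
  have hr' : (0 : ℚ) < r := by exact_mod_cast hr
  have h₁' : -(r : ℚ) < s := by exact_mod_cast h₁
  have h₂' : (s : ℚ) < r := by exact_mod_cast h₂
  have hn' : (0 : ℚ) < n := by exact_mod_cast hn
  have hu : 0 < x + r - s := by linarith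
  have hv : 0 < x + 2 * r := by linarith
  have hab : 2 * r * n * g / (x * (x + 2 * r)) * (n * g / (x + r - s)) = 2 * n * r := by
    rw [div_mul_div_comm, div_eq_iff (by positivity)]
    linear_combination (-2 * r * n) * h
  have ha : 0 < 2 * r * n * g / (x * (x + 2 * r)) := by positivity
  have hb : 0 < n * g / (x + r - s) := by positivity
  have hrel : 2 * r * n * g / (x * (x + 2 * r)) * (x * (x + 2 * r)) =
      2 * r * (n * g / (x + r - s)) * (x + r - s) := by
    field_simp
  generalize 2 * r * n * g / (x * (x + 2 * r)) = a at *
  generalize n * g / (x + r - s) = b at *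
  have hc : (b - (x + r) / r * a) ^ 2 = a ^ 2 + b ^ 2 - 2 * a * b * (s / r) := by
    field_simp
    linear_combination a * hrel
  have hpos : 0 < a ^ 2 + b ^ 2 - 2 * a * b * (s / r) := by
    have hs : (s : ℚ) / r < 1 := by rwa [div_lt_one hr']
    nlinarith [sq_nonneg (a - b), mul_pos ha hb]
  refine ⟨a, b, |b - (x + r) / r * a|, ha, hb, abs_pos.2 fun h0 => ?_, hab, by rwa [sq_abs]⟩
  rw [h0] at hc
  linarith [hc]

theorem even_padicValInt_of_pow_dvd_sub_sq {p L : ℕ} [Fact p.Prime] {x z : ℤ}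
    (h : (p : ℤ) ^ L ∣ x - z ^ 2) (hz : ¬ (p : ℤ) ^ L ∣ z ^ 2) : Even (padicValInt p x) := by
  have hx0 : x ≠ 0 := by
    rintro rfl
    exact hz (by simpa using h)
  have hz0 : z ≠ 0 := by
    rintro rfl
    by_cases hL : L = 0
    · simp [hL] at hz
    · simp at hz
  have key : padicValInt p x = padicValInt p (z ^ 2) := by
    have hiff : ∀ j ≤ L, ((p : ℤ) ^ j ∣ x ↔ (p : ℤ) ^ j ∣ z ^ 2) := fun j hj =>
      dvd_iff_dvd_of_dvd_sub ((pow_dvd_pow _ hj).trans h)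
    have hzL : padicValInt p (z ^ 2) < L := by
      by_contra! hle
      exact hz ((padicValInt_dvd_iff _ _).2 (Or.inr hle))
    have hxL : padicValInt p x < L := by
      by_contra! hle
      exact hz ((hiff L le_rfl).1 ((padicValInt_dvd_iff _ _).2 (Or.inr hle)))
    apply le_antisymm
    · have := (hiff _ hxL.le).1 (padicValInt_dvd x)
      exact ((padicValInt_dvd_iff _ _).1 this).resolve_left (pow_ne_zero _ hz0)
    · have := (hiff _ hzL.le).2 (padicValInt_dvd (z ^ 2))
      exact ((padicValInt_dvd_iff _ _).1 this).resolve_left hx0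
  rw [key, sq, padicValInt.mul hz0 hz0]
  exact ⟨_, rfl⟩

theorem not_pow_dvd_mul_sq {p L : ℕ} (hp : p.Prime) {c u : ℤ} (hc : c ≠ 0)
    (hL : c.natAbs ^ 2 ≤ L) (hu : ¬ (p : ℤ) ∣ u) : ¬ (p : ℤ) ^ L ∣ (c * u) ^ 2 := by
  intro h
  rw [mul_pow] at h
  have hcop : IsCoprime ((p : ℤ) ^ L) (u ^ 2) :=
    ((Nat.prime_iff_prime_int.1 hp).coprime_iff_not_dvd.2 hu).pow
  have h' := Int.natAbs_dvd_natAbs.2 (hcop.dvd_of_dvd_mul_right h)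
  rw [Int.natAbs_pow, Int.natAbs_pow, Int.natAbs_natCast] at h'
  have hlt : L < p ^ L := Nat.lt_pow_self hp.one_lt
  have := Nat.le_of_dvd (by positivity) h'
  omega

theorem exists_prime_dvd_mul_sq_add {a b N : ℕ} (ha : 0 < a) (hb : 0 < b) (hN : 0 < N)
    (B T : ℕ) :
    ∃ l m : ℕ, l.Prime ∧ T < l ∧ b < l ∧ B < m ∧ m ≡ 1 [MOD N] ∧
      l ∣ a * m ^ 2 + b ∧ ¬ l ^ 2 ∣ a * m ^ 2 + b := by
  obtain ⟨z, hz⟩ : ∃ z, z = Nat.factorial (T + a + b + N + 2) := ⟨_, rfl⟩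
  have hz0 : 0 < z := hz ▸ Nat.factorial_pos _
  obtain ⟨l, hl, hldvd⟩ := Nat.exists_prime_and_dvd (n := a * b * z ^ 2 + 1)
    (by have : 0 < a * b * z ^ 2 := by positivity
        omega)
  have hlarge : T + a + b + N + 2 < l := by
    by_contra! hle
    have h1 : l ∣ a * b * z ^ 2 :=
      (((Nat.dvd_factorial hl.pos hle).trans (hz ▸ dvd_rfl)).pow two_ne_zero).mul_left _
    exact hl.one_lt.ne' (Nat.dvd_one.1 ((Nat.dvd_add_right h1).1 hldvd))
  have hnd : ∀ c, 0 < c → c < l → ¬ l ∣ c := fun c h0 h1 => Nat.not_dvd_of_pos_of_lt h0 h1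
  have hlz : ¬ l ∣ z := fun h1 => hl.one_lt.ne' (Nat.dvd_one.1
    ((Nat.dvd_add_right ((h1.pow two_ne_zero).mul_left _)).1 hldvd))
  have hbase : l ∣ a * (b * z) ^ 2 + b := by
    have : a * (b * z) ^ 2 + b = b * (a * b * z ^ 2 + 1) := by ring
    exact this ▸ hldvd.mul_left b
  obtain ⟨m₀, h₀, h₀'⟩ : ∃ m₀, l ∣ a * m₀ ^ 2 + b ∧ ¬ l ^ 2 ∣ a * m₀ ^ 2 + b := by
    by_cases hsq : l ^ 2 ∣ a * (b * z) ^ 2 + b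
    · have hexp : a * (b * z + l) ^ 2 + b =
          (a * (b * z) ^ 2 + b) + (l ^ 2 * a + l * (2 * a * (b * z))) := by ring
      refine ⟨b * z + l, ?_, fun h2 => ?_⟩
      · rw [hexp]
        exact dvd_add hbase (dvd_add ((dvd_pow_self l two_ne_zero).mul_right a) (Dvd.intro _ rfl))
      · rw [hexp, Nat.dvd_add_right hsq, Nat.dvd_add_right (Dvd.intro _ rfl), sq] at h2
        have h3 := Nat.dvd_of_mul_dvd_mul_left hl.pos h2
        rw [hl.dvd_mul, hl.dvd_mul, hl.dvd_mul] at h3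
        rcases h3 with (h3 | h3) | h3 | h3
        · exact hnd _ (by norm_num) (by omega) h3
        · exact hnd _ ha (by omega) h3
        · exact hnd _ hb (by omega) h3
        · exact hlz h3
    · exact ⟨_, hbase, hsq⟩
  have hcop : (l ^ 2).Coprime N :=
    ((Nat.Prime.coprime_iff_not_dvd hl).2 (hnd _ hN (by omega))).pow_left 2
  obtain ⟨m₁, hm₁, hm₁'⟩ := Nat.chineseRemainder hcop m₀ 1
  have hmod : m₁ + l ^ 2 * N * (B + 1) ≡ m₀ [MOD l ^ 2] := by
    refine Nat.ModEq.trans ?_ hm₁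
    rw [mul_assoc]
    exact (Nat.modEq_iff_dvd' (by omega)).2 ⟨N * (B + 1), by omega⟩ |>.symm
  have hval : a * (m₁ + l ^ 2 * N * (B + 1)) ^ 2 + b ≡ a * m₀ ^ 2 + b [MOD l ^ 2] :=
    ((hmod.pow 2).mul_left a).add_right b
  refine ⟨l, m₁ + l ^ 2 * N * (B + 1), hl, by omega, by omega, ?_, ?_, ?_, ?_⟩
  · have : 0 < l ^ 2 * N := Nat.mul_pos (pow_pos hl.pos 2) hN
    nlinarith
  · refine Nat.ModEq.trans ?_ hm₁'
    have : l ^ 2 * N * (B + 1) = N * (l ^ 2 * (B + 1)) := by ring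
    exact (Nat.modEq_iff_dvd' (by omega)).2 ⟨l ^ 2 * (B + 1), by omega⟩ |>.symm
  · exact ((hval.of_dvd (dvd_pow_self l two_ne_zero)).dvd_iff dvd_rfl).2 h₀
  · exact fun h => h₀' ((hval.dvd_iff dvd_rfl).1 h)

theorem isThetaCongruent_mul_of_mul_sq {r s : ℤ} (hr : 0 < r) (h₁ : -r < s) (h₂ : s < r)
    {k n : ℕ} (hk : 0 < k) (hn : 0 < n) {x g q w : ℚ} (hx : 0 < x) (hg : 0 < g) (hw : 0 < w)
    (hq : q = k * w ^ 2) (h : x * (x + r - s) * (x + 2 * r) = n * g ^ 2)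
    (hxq : 8 * (3 * r - s) * q * (1 + q) * x =
      (r + s) ^ 2 * (1 + q) ^ 2 - 4 * (3 * r - s) ^ 2 * q) :
    IsThetaCongruent r s (k * n) := by
  have hr' : (0 : ℚ) < r := by exact_mod_cast hr
  have h₂' : (s : ℚ) < r := by exact_mod_cast h₂
  have hk' : (0 : ℚ) < k := by exact_mod_cast hk
  have hn' : (0 : ℚ) < n := by exact_mod_cast hn
  have hq0 : 0 < q := hq ▸ by positivity
  obtain ⟨Y, hY⟩ : ∃ Y : ℚ,
      Y = -q * x ^ 2 + (3 * r - s) * (1 + q) / 2 * x + 2 * r * (r - s) := ⟨_, rfl⟩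
  have hprod : q * x * (q * x + r - s) * (q * x + 2 * r) * (x * (x + r - s) * (x + 2 * r)) =
      q * x ^ 2 * Y ^ 2 := by
    rw [hY]
    linear_combination (q * x ^ 2 * x ^ 2 / 4) * hxq
  have hqx : 0 < q * x := by positivity
  have hpos : 0 < q * x * (q * x + r - s) * (q * x + 2 * r) :=
    mul_pos (mul_pos hqx (by linarith)) (by linarith)
  have heq : q * x * (q * x + r - s) * (q * x + 2 * r) =
      ((k * n : ℕ) : ℚ) * |w * x * Y / (n * g)| ^ 2 := by
    rw [h] at hprod
    rw [sq_abs, eq_comm]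
    push_cast
    have : q * x * (q * x + r - s) * (q * x + 2 * r) = q * x ^ 2 * Y ^ 2 / (n * g ^ 2) := by
      rw [eq_div_iff (by positivity), hprod]
    rw [this, hq]
    field_simp
  refine isThetaCongruent_of_mul_sq hr h₁ h₂ (Nat.mul_pos hk hn) hqx
    (abs_pos.2 fun h0 => hpos.ne' ?_) heq
  rw [heq, h0]
  simp

theorem even_padicValInt_mul_iff {p : ℕ} [Fact p.Prime] {x y : ℤ} (hx : x ≠ 0) (hy : y ≠ 0) :
    Even (padicValInt p (x * y)) ↔ (Even (padicValInt p x) ↔ Even (padicValInt p y)) := by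
  rw [padicValInt.mul hx hy, Nat.even_add]

theorem even_padicValInt_sq {p : ℕ} [Fact p.Prime] {x : ℤ} :
    Even (padicValInt p (x ^ 2)) := by
  rcases eq_or_ne x 0 with rfl | hx
  · simp
  · rw [sq, even_padicValInt_mul_iff hx hx]

theorem not_even_padicValInt_of_dvd_of_not_sq_dvd {p : ℕ} [Fact p.Prime] {x : ℤ}
    (h : (p : ℤ) ∣ x) (h' : ¬ (p : ℤ) ^ 2 ∣ x) : ¬ Even (padicValInt p x) := by
  have h0 : x ≠ 0 := by
    rintro rfl
    exact h' (dvd_zero _)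
  have h1 : 1 ≤ padicValInt p x :=
    ((padicValInt_dvd_iff 1 x).1 (by simpa using h)).resolve_left h0
  have h2 : ¬ 2 ≤ padicValInt p x := fun h2 => h' ((padicValInt_dvd_iff 2 x).2 (Or.inr h2))
  have : padicValInt p x = 1 := by omega
  simp [this]

theorem exists_mul_eq_forall_prime_dvd {k : ℕ} (hk : Squarefree k) (S : ℕ → Prop) :
    ∃ d e : ℕ, d * e = k ∧ ∀ p, p.Prime → (p ∣ d → S p) ∧ (p ∣ e → ¬ S p) := by
  classical
  refine ⟨∏ p ∈ k.primeFactors with S p, p, ∏ p ∈ k.primeFactors with ¬ S p, p, ?_,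
    fun p hp => ⟨fun h => ?_, fun h => ?_⟩⟩
  · rw [Finset.prod_filter_mul_prod_filter_not, Nat.prod_primeFactors_of_squarefree hk]
  all_goals
    obtain ⟨i, hi, hpi⟩ := (hp.prime.dvd_finsetProd_iff _).1 h
    rw [Finset.mem_filter, Nat.mem_primeFactors] at hi
    rw [(Nat.prime_dvd_prime_iff_eq hp hi.1.1).1 hpi]
    exact hi.2

theorem exists_squarefree_isThetaCongruent_mul {r s : ℤ} (hr : 0 < r) (h₁ : -r < s) (h₂ : s < r)
    {k : ℕ} (hk : Squarefree k) (T : ℕ) :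
    ∃ n : ℕ, T < n ∧ Squarefree n ∧ n.Coprime k ∧ IsThetaCongruent r s n ∧
      IsThetaCongruent r s (k * n) := by
  obtain ⟨A, hA⟩ : ∃ A, A = 3 * r - s := ⟨_, rfl⟩
  have hA0 : 0 < A := by omega
  have hk0 : 0 < k := Nat.pos_of_ne_zero hk.ne_zero
  obtain ⟨d, e, hde, hS⟩ :=
    exists_mul_eq_forall_prime_dvd hk fun p => ¬ Even (padicValInt p (2 * A))
  have hd0 : 0 < d := Nat.pos_of_ne_zero fun h => by simp [h] at hde; omega
  have he0 : 0 < e := Nat.pos_of_ne_zero fun h => by simp [h] at hde; omega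
  obtain ⟨L, hL⟩ : ∃ L, L = (r + s).natAbs ^ 2 + (5 * r - 3 * s).natAbs ^ 2 +
    (7 * r - s).natAbs ^ 2 + 1 := ⟨_, rfl⟩
  obtain ⟨l, m, hl, hTl, hbl, hBm, hmk, hldvd, hlsq⟩ :=
    exists_prime_dvd_mul_sq_add (a := d ^ (2 * L + 1)) (b := e ^ (2 * L + 1)) (by positivity)
      (by positivity) hk0 (4 * A.natAbs ^ 2 * e ^ (2 * L + 1)) (T + 2 * A.natAbs + 2)
  obtain ⟨P, hP⟩ : ∃ P : ℤ, P = d ^ (2 * L + 1) * m ^ 2 := ⟨_, rfl⟩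
  obtain ⟨Q, hQ⟩ : ∃ Q : ℤ, Q = e ^ (2 * L + 1) := ⟨_, rfl⟩
  have hm0 : 0 < m := by omega
  have hP0 : 0 < P := hP ▸ by positivity
  have hQ0 : 0 < Q := hQ ▸ by positivity
  have hPQ : 4 * A ^ 2 * Q < P := by
    have h1 : 4 * A ^ 2 * Q < m := by
      rw [hQ]
      have := Int.natAbs_sq A
      rw [← this]
      exact_mod_cast hBm
    have h2 : (m : ℤ) ≤ P := by
      have h3 : m ≤ d ^ (2 * L + 1) * m ^ 2 := by
        have : 0 < d ^ (2 * L + 1) := by positivity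
        nlinarith
      rw [hP]
      exact_mod_cast h3
    omega
  obtain ⟨G, hG⟩ : ∃ G : ℤ → ℤ, G = fun c =>
    c ^ 2 * (P * (P + Q)) + Q * ((r + s) ^ 2 * (P + Q) - 4 * A ^ 2 * P) := ⟨_, rfl⟩
  have hGpos : ∀ c, 0 < c → 0 < G c := by
    intro c hc
    have hc1 : 1 ≤ c ^ 2 := by nlinarith
    have h1 : P * (P + Q) ≤ c ^ 2 * (P * (P + Q)) := by
      have : 0 < P * (P + Q) := by positivity
      nlinarith
    have h2 : 0 < P * (P - 4 * A ^ 2 * Q) := mul_pos hP0 (by omega)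
    have h3 : 0 ≤ Q * ((r + s) ^ 2 * (P + Q)) := by positivity
    have h4 : 0 < P * Q := by positivity
    rw [hG]
    linarith
  have hG₀ := hGpos (r + s) (by omega)
  have hG₁ := hGpos (5 * r - 3 * s) (by omega)
  have hG₂ := hGpos (7 * r - s) (by omega)
  obtain ⟨E, hE⟩ : ∃ E : ℤ, E = 8 * A * P * (P + Q) := ⟨_, rfl⟩
  have hE0 : 0 < E := hE ▸ by positivity
  obtain ⟨F, hF⟩ : ∃ F : ℤ, F = E * G (r + s) * G (5 * r - 3 * s) * G (7 * r - s) := ⟨_, rfl⟩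
  have hF0 : 0 < F := hF ▸ by positivity
  have hFeven : ∀ p, p.Prime → (Even (padicValInt p F) ↔
      (((Even (padicValInt p E) ↔ Even (padicValInt p (G (r + s)))) ↔
        Even (padicValInt p (G (5 * r - 3 * s)))) ↔ Even (padicValInt p (G (7 * r - s))))) := by
    intro p hp
    have := Fact.mk hp
    rw [hF, even_padicValInt_mul_iff (by positivity) (by positivity),
      even_padicValInt_mul_iff (by positivity) (by positivity),
      even_padicValInt_mul_iff (by positivity) (by positivity)]
  have hFk : ∀ p, p.Prime → p ∣ k → Even (padicValInt p F) := by
    intro p hp hpk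
    have := Fact.mk hp
    have hpZ := Nat.prime_iff_prime_int.1 hp
    rw [hFeven p hp]
    have hdisj : ¬ (p ∣ d ∧ p ∣ e) := fun ⟨h, h'⟩ =>
      hp.one_lt.ne' (Nat.isUnit_iff.1 (hk p (hde ▸ mul_dvd_mul h h')))
    rcases (hp.dvd_mul).1 (hde.symm ▸ hpk) with hpd | hpe
    · have hpQ : ¬ (p : ℤ) ∣ Q := fun h => by
        rw [hQ] at h
        exact hdisj ⟨hpd, Int.natCast_dvd_natCast.1 (hpZ.dvd_of_dvd_pow h)⟩
      have hpP : (p : ℤ) ^ L ∣ P := by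
        rw [hP]
        exact ((pow_dvd_pow_of_dvd (Int.natCast_dvd_natCast.2 hpd) L).trans
          (pow_dvd_pow _ (by omega))).mul_right _
      have hpP' : (p : ℤ) ∣ P := (dvd_pow_self _ (by omega)).trans hpP
      have hGe : ∀ c, Even (padicValInt p (G c)) := by
        intro c
        refine even_padicValInt_of_pow_dvd_sub_sq (L := L) (z := (r + s) * Q) (hpP.trans ?_)
          (not_pow_dvd_mul_sq hp (by omega) (by omega) hpQ)
        refine ⟨c ^ 2 * (P + Q) + Q * ((r + s) ^ 2 - 4 * A ^ 2), ?_⟩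
        rw [hG]
        ring
      have hEe : Even (padicValInt p E) := by
        have hE' : E = 2 * A * d * (2 * d ^ L * m) ^ 2 * (P + Q) := by
          rw [hE]
          linear_combination (8 * A * (P + Q)) * hP
        have h1 : ¬ Even (padicValInt p (d : ℤ)) :=
          not_even_padicValInt_of_dvd_of_not_sq_dvd (Int.natCast_dvd_natCast.2 hpd) fun h => by
            have h' : p * p ∣ d := by
              rw [← sq]
              exact_mod_cast h
            exact hp.one_lt.ne' (Nat.isUnit_iff.1 (hk p (hde ▸ h'.mul_right e)))
        have h2 : padicValInt p (P + Q) = 0 :=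
          padicValInt.eq_zero_of_not_dvd fun h => hpQ ((dvd_add_right hpP').1 h)
        have h3 := ((hS p hp).1 hpd)
        rw [hE', even_padicValInt_mul_iff (by positivity) (by positivity),
          even_padicValInt_mul_iff (by positivity) (by positivity),
          even_padicValInt_mul_iff (by positivity) (by positivity)]
        simp only [h1, h2, h3, even_padicValInt_sq, Even.zero]
      simp [hGe, hEe]
    · have hpP : ¬ (p : ℤ) ∣ P := fun h => by
        rw [hP] at h
        rcases hpZ.dvd_or_dvd h with h | h
        · exact hdisj ⟨Int.natCast_dvd_natCast.1 (hpZ.dvd_of_dvd_pow h), hpe⟩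
        · have hpm := Int.natCast_dvd_natCast.1 (hpZ.dvd_of_dvd_pow h)
          exact hp.one_lt.ne' (Nat.dvd_one.1 (((hmk.of_dvd hpk).dvd_iff dvd_rfl).1 hpm))
      have hpQ : (p : ℤ) ^ L ∣ Q := by
        rw [hQ]
        exact (pow_dvd_pow_of_dvd (Int.natCast_dvd_natCast.2 hpe) L).trans
          (pow_dvd_pow _ (by omega))
      have hGe : ∀ c : ℤ, c ≠ 0 → c.natAbs ^ 2 ≤ L → Even (padicValInt p (G c)) := by
        intro c hc hcL
        refine even_padicValInt_of_pow_dvd_sub_sq (L := L) (z := c * P) (hpQ.trans ?_)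
          (not_pow_dvd_mul_sq hp hc hcL hpP)
        refine ⟨c ^ 2 * P + ((r + s) ^ 2 * (P + Q) - 4 * A ^ 2 * P), ?_⟩
        rw [hG]
        ring
      have hEe : Even (padicValInt p E) := by
        have hE' : E = 2 * A * 2 ^ 2 * (P * (P + Q)) := by
          rw [hE]
          ring
        have h1 : Even (padicValInt p (P * (P + Q))) := by
          refine even_padicValInt_of_pow_dvd_sub_sq (L := L) (z := 1 * P) (hpQ.trans ⟨P, by ring⟩)
            (not_pow_dvd_mul_sq hp one_ne_zero (by simp; omega) hpP)
        have h3 := not_not.1 ((hS p hp).2 hpe)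
        rw [hE', even_padicValInt_mul_iff (by positivity) (by positivity),
          even_padicValInt_mul_iff (by positivity) (by positivity)]
        simp only [h1, h3, even_padicValInt_sq]
      rw [iff_true_right (hGe _ (by omega) (by omega)), iff_true_right (hGe _ (by omega) (by omega)),
        iff_true_right (hGe _ (by omega) (by omega))]
      exact hEe
  have hFl : ¬ Even (padicValInt l F) := by
    have := Fact.mk hl
    have hlZ := Nat.prime_iff_prime_int.1 hl
    have hlsum : (l : ℤ) ∣ P + Q := by
      rw [hP, hQ]
      exact_mod_cast hldvd
    have hlsum' : ¬ (l : ℤ) ^ 2 ∣ P + Q := by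
      rw [hP, hQ]
      exact_mod_cast hlsq
    have hlQ : ¬ (l : ℤ) ∣ Q := by
      rw [hQ]
      exact_mod_cast Nat.not_dvd_of_pos_of_lt (by positivity) hbl
    have hlP : ¬ (l : ℤ) ∣ P := fun h => hlQ ((dvd_add_right h).1 hlsum)
    have hlA : ¬ (l : ℤ) ∣ 2 * A := fun h => by
      have h' := Int.le_of_dvd (by omega) h
      omega
    have hGe : ∀ c, Even (padicValInt l (G c)) := by
      intro c
      have h1 : ¬ (l : ℤ) ∣ G c := by
        have h2 : G c = (P + Q) * (c ^ 2 * P + Q * (r + s) ^ 2) - (2 * A) ^ 2 * P * Q := by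
          rw [hG]
          ring
        rw [h2, dvd_sub_right (hlsum.mul_right _)]
        exact hlZ.not_dvd_mul (hlZ.not_dvd_mul (fun h => hlA (hlZ.dvd_of_dvd_pow h)) hlP) hlQ
      simp [padicValInt.eq_zero_of_not_dvd h1]
    have hEe : ¬ Even (padicValInt l E) := by
      have hE' : E = (2 * A) * P * 2 ^ 2 * (P + Q) := by
        rw [hE]
        ring
      have h1 := not_even_padicValInt_of_dvd_of_not_sq_dvd hlsum hlsum'
      have h2 := padicValInt.eq_zero_of_not_dvd hlP
      have h3 := padicValInt.eq_zero_of_not_dvd hlA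
      rw [hE', even_padicValInt_mul_iff (by positivity) (by positivity),
        even_padicValInt_mul_iff (by positivity) (by positivity),
        even_padicValInt_mul_iff (by positivity) (by positivity)]
      simp only [h1, h2, h3, even_padicValInt_sq, Even.zero, iff_false, not_true_eq_false,
        not_false_eq_true]
    rw [hFeven l hl]
    simp [hGe, hEe]
  obtain ⟨n, h, hn0, hh0, hnh, hnsf⟩ := Nat.sq_mul_squarefree_of_pos (Int.natAbs_pos.2 hF0.ne')
  have hFn : F = n * (h : ℤ) ^ 2 := by
    rw [← Int.natAbs_of_nonneg hF0.le, ← hnh]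
    push_cast
    ring
  have hFn' : ∀ p, p.Prime → (Even (padicValInt p F) ↔ ¬ p ∣ n) := by
    intro p hp
    have := Fact.mk hp
    rw [hFn, even_padicValInt_mul_iff (by positivity) (by positivity),
      iff_true_right even_padicValInt_sq]
    constructor
    · intro heven hpn
      refine not_even_padicValInt_of_dvd_of_not_sq_dvd (Int.natCast_dvd_natCast.2 hpn)
        (fun hsq => ?_) heven
      have h' : p * p ∣ n := by
        rw [← sq]
        exact_mod_cast hsq
      exact hp.one_lt.ne' (Nat.isUnit_iff.1 (hnsf p h'))
    · intro hpn
      rw [padicValInt.eq_zero_of_not_dvd (mt Int.natCast_dvd_natCast.1 hpn)]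
      exact Even.zero
  have hln : l ∣ n := not_not.1 (mt (hFn' l hl).2 hFl)
  have hA' : (0 : ℚ) < A := by exact_mod_cast hA0
  have hAq : (A : ℚ) = 3 * r - s := by exact_mod_cast hA
  have hP' : (0 : ℚ) < P := by exact_mod_cast hP0
  have hQ' : (0 : ℚ) < Q := by exact_mod_cast hQ0
  have hE' : (0 : ℚ) < E := by exact_mod_cast hE0
  have hEq : (E : ℚ) = 8 * A * P * (P + Q) := by exact_mod_cast hE
  have hGq : ∀ c, (G c : ℚ) =
      c ^ 2 * (P * (P + Q)) + Q * ((r + s) ^ 2 * (P + Q) - 4 * A ^ 2 * P) := by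
    intro c
    rw [hG]
    push_cast
    rfl
  have hx₁ : (G (r + s) / E + r - s : ℚ) = G (5 * r - 3 * s) / E := by
    rw [add_sub_assoc, div_add' _ _ _ hE'.ne', hGq, hGq, hEq, hAq]
    push_cast
    ring
  have hx₂ : (G (r + s) / E + 2 * r : ℚ) = G (7 * r - s) / E := by
    rw [div_add' _ _ _ hE'.ne', hGq, hGq, hEq, hAq]
    push_cast
    ring
  have hf : (G (r + s) / E : ℚ) * (G (r + s) / E + r - s) * (G (r + s) / E + 2 * r) =
      n * (h / E ^ 2) ^ 2 := by
    have hF' : (E : ℚ) * G (r + s) * G (5 * r - 3 * s) * G (7 * r - s) = n * h ^ 2 := by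
      exact_mod_cast hF.symm.trans hFn
    rw [hx₁, hx₂]
    field_simp
    linear_combination hF'
  have hh : (0 : ℚ) < h / E ^ 2 := by positivity
  refine ⟨n, by have := Nat.le_of_dvd hn0 hln; omega, hnsf,
    Nat.coprime_of_dvd fun p hp hpn hpk => (hFn' p hp).1 (hFk p hp hpk) hpn,
    isThetaCongruent_of_mul_sq hr h₁ h₂ hn0 (by positivity) hh hf,
    isThetaCongruent_mul_of_mul_sq hr h₁ h₂ hk0 hn0 (by positivity) hh
      (q := P / Q) (w := d ^ L * m / (e ^ L * e)) (by positivity) ?_ hf ?_⟩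
  · rw [hP, hQ, ← hde]
    push_cast
    field_simp
    ring
  · rw [← hAq, hGq, hEq]
    push_cast
    field_simp
    ring

/-- For `θ ∈ (0, π)` with `cos θ = s / r ∈ ℚ` and `k` a positive squarefree integer,
there exist infinitely many pairs `(M, N)` of `θ`-congruent numbers with `N = k * M`. -/
theorem theta_congruent_multiples
    (θ : ℝ) (hθ0 : 0 < θ) (hθπ : θ < Real.pi)
    (r s : ℤ) (hr : 0 < r) (hrs : Int.gcd s r = 1)
    (hcos : Real.cos θ = (s : ℝ) / (r : ℝ))
    (k : ℕ) (hk : 0 < k) (hksf : Squarefree k) :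
    {p : ℕ × ℕ | 0 < p.1 ∧ 0 < p.2 ∧ Squarefree p.1 ∧ Squarefree p.2 ∧
      IsThetaCongruent r s p.1 ∧ IsThetaCongruent r s p.2 ∧
      p.2 = k * p.1}.Infinite := by
  have hr' : (0 : ℝ) < r := by exact_mod_cast hr
  have hsin := Real.sin_pos_of_pos_of_lt_pi hθ0 hθπ
  have hlt : Real.cos θ ^ 2 < 1 := by nlinarith [Real.sin_sq_add_cos_sq θ]
  rw [sq_lt_one_iff_abs_lt_one, abs_lt, hcos, lt_div_iff₀ hr', div_lt_one hr'] at hlt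
  have h₁ : -r < s := by
    have := hlt.1
    rw [neg_one_mul] at this
    exact_mod_cast this
  have h₂ : s < r := by exact_mod_cast hlt.2
  refine Set.Infinite.of_image Prod.fst (Set.infinite_of_forall_exists_gt fun T => ?_)
  obtain ⟨n, hT, hn, hnk, hn₁, hn₂⟩ := exists_squarefree_isThetaCongruent_mul hr h₁ h₂ hksf T
  have hn0 : 0 < n := by omega
  exact ⟨n, ⟨(n, k * n), ⟨hn0, Nat.mul_pos hk hn0, hn,
    (Nat.squarefree_mul hnk.symm).2 ⟨hksf, hn⟩, hn₁, hn₂, rfl⟩, rfl⟩, hT⟩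
end

section
/- Let β ∈ ℚ with β ≠ 1 and β ≠ −1, and let k, l be distinct positive coprime integers. Then the generalized Holm curve H_β has infinitely many rational points: the set {(x, y) ∈ ℚ × ℚ : l·x·(x+β−1)·(x+β+1) = k·y·(y+β−1)·(y+β+1)} is infinite. -/
section TwistedCubic

/-- The integral model of the cubic `x (x - a) (x - 1) = t y (y - a) (y - 1)` in the coordinates
`x = 1 + t X` and `y`. -/
def OnTwistedCubic {R : Type*} [CommRing R] (t a X y : R) : Prop :=
  X * (1 + t * X) * (1 - a + t * X) = y * (y - 1) * (y - a)

variable {R : Type*} [CommRing R] [IsDomain R]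

/-- The line through `(0, 0)` and a point `(ν y, y)` of the cubic meets it in a third point. -/
lemma OnTwistedCubic.chord {t a ν y z : R} (h : OnTwistedCubic t a (ν * y) y) (hy : y ≠ 0)
    (hc : 1 - t ^ 2 * ν ^ 3 ≠ 0) (hz : z * (y * (1 - t ^ 2 * ν ^ 3)) = a - (1 - a) * ν) :
    OnTwistedCubic t a (ν * z) z := by
  unfold OnTwistedCubic at *
  set c := 1 - t ^ 2 * ν ^ 3 with hcdef
  set d := 1 + a + t * (2 - a) * ν ^ 2 with hd
  have hq : c * y ^ 2 - d * y + (a - (1 - a) * ν) = 0 :=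
    mul_left_cancel₀ hy (by simp only [hcdef, hd]; linear_combination -h)
  have hqz : c * z ^ 2 - d * z + (a - (1 - a) * ν) = 0 := by
    refine mul_left_cancel₀ (mul_ne_zero hc (pow_ne_zero 2 hy)) ?_
    rw [mul_zero]
    linear_combination (z * (y * c) + (a - (1 - a) * ν) - d * y) * hz + (a - (1 - a) * ν) * hq
  simp only [hcdef, hd] at hqz
  linear_combination -z * hqz

/-- The tangent line of slope `μ` at a point of the cubic meets it in a third point. -/
lemma OnTwistedCubic.tangent {R : Type*} [CommRing R] {t a X y μ s : R}
    (h : OnTwistedCubic t a X y)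
    (hμ : (1 - a + 2 * t * (2 - a) * X + 3 * t ^ 2 * X ^ 2) * μ =
      3 * y ^ 2 - 2 * (1 + a) * y + a)
    (hs : (t ^ 2 * μ ^ 3 - 1) * s =
      3 * y - (1 + a) - μ ^ 2 * (t * (2 - a) + 3 * t ^ 2 * X)) :
    OnTwistedCubic t a (X + μ * s) (y + s) := by
  unfold OnTwistedCubic at *
  linear_combination h + s * hμ + s ^ 2 * hs

lemma exists_odd_mul_eq_one {R : Type*} [CommRing R] (H : ∀ u : R, Odd u → IsUnit u) {u : R}
    (hu : Odd u) : ∃ v, Odd v ∧ u * v = 1 := by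
  obtain ⟨v, hv⟩ := (H u hu).exists_right_inv
  obtain ⟨m, rfl⟩ := hu
  exact ⟨v, ⟨-(m * v), by linear_combination hv⟩, hv⟩

/-- The point `2 P - O`, with `O = (0, 0)`, for a point `P` of the cubic with even coordinates. -/
lemma OnTwistedCubic.exists_double (H : ∀ u : R, Odd u → IsUnit u) {t a X y : R}
    (h : OnTwistedCubic t a X y) (ha : Even a) (hX : Even X) (hy : Even y) :
    ∃ μ s v ν : R, (1 - a + 2 * t * (2 - a) * X + 3 * t ^ 2 * X ^ 2) * μ =
        3 * y ^ 2 - 2 * (1 + a) * y + a ∧ Odd s ∧ Odd v ∧ Even ν ∧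
      OnTwistedCubic t a (ν * (v * (a * y - (1 - a) * X + s * (a - (1 - a) * μ))))
        (v * (a * y - (1 - a) * X + s * (a - (1 - a) * μ))) := by
  obtain ⟨α, rfl⟩ := ha
  obtain ⟨X', rfl⟩ := hX
  obtain ⟨y', rfl⟩ := hy
  set a := α + α with ha
  set X := X' + X' with hX
  set y := y' + y' with hy
  have hder : Odd (1 - a + 2 * t * (2 - a) * X + 3 * t ^ 2 * X ^ 2) :=
    ⟨-α + t * (2 - a) * X + 3 * t ^ 2 * X * X', by rw [ha, hX]; ring⟩
  obtain ⟨i, -, hi⟩ := exists_odd_mul_eq_one H hder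
  obtain ⟨m, hm⟩ : ∃ m, (3 * y ^ 2 - 2 * (1 + a) * y + a) * i = 2 * m :=
    ⟨(3 * y * y' - (1 + a) * y + α) * i, by rw [ha, hy]; ring⟩
  have hμ : (1 - a + 2 * t * (2 - a) * X + 3 * t ^ 2 * X ^ 2) * (2 * m) =
      3 * y ^ 2 - 2 * (1 + a) * y + a := by
    rw [← hm]; linear_combination (3 * y ^ 2 - 2 * (1 + a) * y + a) * hi
  obtain ⟨j, hj, hj1⟩ := exists_odd_mul_eq_one H
    (u := t ^ 2 * (2 * m) ^ 3 - 1) ⟨4 * t ^ 2 * m ^ 3 - 1, by ring⟩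
  have hnum : Odd (3 * y - (1 + a) - (2 * m) ^ 2 * (t * (2 - a) + 3 * t ^ 2 * X)) :=
    ⟨3 * y' - 1 - α - 2 * m ^ 2 * (t * (2 - a) + 3 * t ^ 2 * X), by rw [ha, hy]; ring⟩
  obtain ⟨s, hs, hs1⟩ : ∃ s, Odd s ∧ (t ^ 2 * (2 * m) ^ 3 - 1) * s =
      3 * y - (1 + a) - (2 * m) ^ 2 * (t * (2 - a) + 3 * t ^ 2 * X) :=
    ⟨_, hnum.mul hj, by
      linear_combination
        (3 * y - (1 + a) - (2 * m) ^ 2 * (t * (2 - a) + 3 * t ^ 2 * X)) * hj1⟩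
  have htan := h.tangent hμ hs1
  have hy2 : Odd (y + s) := Even.add_odd ⟨y', rfl⟩ hs
  obtain ⟨w, hw, hw1⟩ := exists_odd_mul_eq_one H hy2
  obtain ⟨n, hn⟩ : ∃ n, (X + 2 * m * s) * w = 2 * n := ⟨(X' + m * s) * w, by rw [hX]; ring⟩
  have hν : 2 * n * (y + s) = X + 2 * m * s := by
    rw [← hn]; linear_combination (X + 2 * m * s) * hw1
  have hc : Odd (1 - t ^ 2 * (2 * n) ^ 3) := ⟨-(4 * t ^ 2 * n ^ 3), by ring⟩
  obtain ⟨k, hk, hk1⟩ := exists_odd_mul_eq_one H hc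
  refine ⟨2 * m, s, w * w * k, 2 * n, hμ, hs, (hw.mul hw).mul hk, even_two_mul n, ?_⟩
  rw [← hν] at htan
  refine htan.chord (H _ hy2).ne_zero (H _ hc).ne_zero ?_
  have key : a * y - (1 - a) * X + s * (a - (1 - a) * (2 * m)) =
      (y + s) * (a - (1 - a) * (2 * n)) := by
    linear_combination (1 - a) * hν
  rw [key]
  linear_combination (a - (1 - a) * (2 * n)) * (((y + s) * w) ^ 2 * hk1 +
    ((y + s) * w + 1) * hw1)

lemma exists_onTwistedCubic (H : ∀ u : R, Odd u → IsUnit u) (t α : R) (n : ℕ) :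
    ∃ u w : R, Odd u ∧
      OnTwistedCubic t (2 * α) (8 * (2 ^ n * α) * w) (4 * (2 ^ n * α) * u) := by
  have ha : Even (2 * α) := even_two_mul α
  induction n with
  | zero =>
    obtain ⟨μ, s, v, ν, hμ, ⟨s', rfl⟩, hv, ⟨ν', rfl⟩, h⟩ :=
      OnTwistedCubic.exists_double H (t := t) (a := 2 * α) (X := 0) (y := 2 * α)
        (by simp [OnTwistedCubic]) ha Even.zero ha
    have hb : (1 - 2 * α : R) ≠ 0 := (H _ ⟨-α, by ring⟩).ne_zero
    have hμ' : μ = -(2 * α) := mul_left_cancel₀ hb (by linear_combination hμ)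
    subst hμ'
    have hu : Odd (v * (1 + 2 * (s' * (1 - α)))) := hv.mul ⟨s' * (1 - α), by ring⟩
    refine ⟨_, ν' * (v * (1 + 2 * (s' * (1 - α)))), hu, ?_⟩
    convert h using 1 <;> ring
  | succ n ih =>
    obtain ⟨u, w, hu, h⟩ := ih
    set e := 2 ^ n * α with he
    obtain ⟨μ, s, v, ν, hμ, hs, hv, ⟨ν', rfl⟩, h'⟩ :=
      h.exists_double H ha ⟨4 * e * w, by ring⟩ ⟨2 * e * u, by ring⟩
    set h₁ := 1 - 2 * α + 2 * t * (2 - 2 * α) * (8 * e * w) + 3 * t ^ 2 * (8 * e * w) ^ 2 with hh₁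
    have hder : Odd h₁ :=
      ⟨-α + t * (2 - 2 * α) * (8 * e * w) + 96 * t ^ 2 * (e * w) ^ 2, by rw [hh₁]; ring⟩
    obtain ⟨i, hi, hi1⟩ := exists_odd_mul_eq_one H hder
    obtain ⟨L, hL, hL1⟩ : ∃ L, Odd L ∧ h₁ * (2 * α - (1 - 2 * α) * μ) = 8 * e * L := by
      have h1 : Odd ((1 - 2 * α) * (1 + 2 * α) * u) :=
        (Odd.mul ⟨-α, by ring⟩ ⟨α, by ring⟩).mul hu
      refine ⟨_, h1.add_even (even_two_mul (-3 * (1 - 2 * α) * e * u ^ 2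
        + t * (2 * α) * (2 - 2 * α) * w + 12 * t ^ 2 * (2 * α) * e * w ^ 2)), ?_⟩
      linear_combination 2 * α * hh₁ - (1 - 2 * α) * hμ
    have hμ' : 2 * α - (1 - 2 * α) * μ = 8 * e * (L * i) := by
      linear_combination i * hL1 - (2 * α - (1 - 2 * α) * μ) * hi1
    obtain ⟨K, hK⟩ : ∃ K, 2 * α * (4 * e * u) - (1 - 2 * α) * (8 * e * w) = 16 * e * K := by
      refine ⟨e * ((1 + 2 * α) * u ^ 2 - 4 * e * u ^ 3 + 4 * t * (2 - 2 * α) * w ^ 2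
        + 32 * t ^ 2 * e * w ^ 3), ?_⟩
      unfold OnTwistedCubic at h
      linear_combination -h
    have hodd : Odd (v * (2 * K + s * (L * i))) :=
      hv.mul ((even_two_mul K).add_odd (hs.mul (hL.mul hi)))
    refine ⟨_, ν' * (v * (2 * K + s * (L * i))), hodd, ?_⟩
    rw [hK, hμ'] at h'
    have he' : 2 ^ (n + 1) * α = 2 * e := by rw [he]; ring
    rw [he']
    convert h' using 1 <;> ring

lemma infinite_setOf_onTwistedCubic (H : ∀ u : R, Odd u → IsUnit u) (h0 : (2 : R) ≠ 0)
    (h2 : ¬ IsUnit (2 : R)) (t : R) {α : R} (hα : α ≠ 0) :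
    {y : R | ∃ X, OnTwistedCubic t (2 * α) X y}.Infinite := by
  choose u w hu h using exists_onTwistedCubic H t α
  refine Set.infinite_of_injective_forall_mem (f := fun n => 4 * (2 ^ n * α) * u n) ?_
    fun n => ⟨_, h n⟩
  have h4 : (4 : R) ≠ 0 := by
    have := mul_ne_zero h0 h0
    norm_num at this
    exact this
  refine Function.Injective.of_lt_imp_ne fun m n hmn heq => h2 ?_
  obtain ⟨d, rfl⟩ := Nat.exists_eq_add_of_lt hmn
  have : u m = 2 * (2 ^ d * u (m + d + 1)) := by
    refine mul_left_cancel₀ (mul_ne_zero h4 (mul_ne_zero (pow_ne_zero m h0) hα)) ?_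
    linear_combination heq
  exact isUnit_of_mul_isUnit_left (this ▸ H _ (hu m))

end TwistedCubic

section TwoIntegral

/-- The ring of rational numbers with odd denominator. -/
def twoIntegral : ValuationSubring ℚ := (Rat.padicValuation 2).valuationSubring

lemma mem_twoIntegral {q : ℚ} : q ∈ twoIntegral ↔ ¬ 2 ∣ q.den :=
  (Valuation.mem_valuationSubring_iff _ _).trans Rat.padicValuation_le_one_iff

lemma coe_two_twoIntegral : ((2 : twoIntegral) : ℚ) = 2 := rfl

lemma div_mem_twoIntegral (m : ℤ) {n : ℤ} (hn : Odd n) : (m / n : ℚ) ∈ twoIntegral := by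
  rw [mem_twoIntegral]
  intro h
  have h1 : (2 : ℤ) ∣ n := (Int.natCast_dvd_natCast.mpr h).trans (by
    simpa [Rat.divInt_eq_div] using Rat.den_dvd m n)
  exact Int.not_even_iff_odd.mpr hn (even_iff_two_dvd.mpr h1)

lemma odd_den_of_mem_twoIntegral {q : ℚ} (hq : q ∈ twoIntegral) : Odd (q.den : ℤ) := by
  have := mem_twoIntegral.mp hq
  rw [← even_iff_two_dvd, Nat.not_even_iff_odd] at this
  exact_mod_cast this

lemma even_or_odd_twoIntegral (q : twoIntegral) : Even q ∨ Odd q := by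
  obtain ⟨q, hq⟩ := q
  have hd := odd_den_of_mem_twoIntegral hq
  have hd0 : (q.den : ℚ) ≠ 0 := by exact_mod_cast q.den_ne_zero
  have hnd := (div_eq_iff hd0).mp (Rat.num_div_den q)
  rcases Int.even_or_odd q.num with ⟨m, hm⟩ | h
  · left
    refine ⟨⟨m / (q.den : ℤ), div_mem_twoIntegral m hd⟩, Subtype.ext ?_⟩
    rw [hm] at hnd
    push_cast at hnd ⊢
    field_simp
    linear_combination -hnd
  · right
    obtain ⟨m, hm⟩ := h.sub_odd hd
    refine ⟨⟨m / (q.den : ℤ), div_mem_twoIntegral m hd⟩, Subtype.ext ?_⟩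
    rw [sub_eq_iff_eq_add.mp hm] at hnd
    push_cast [coe_two_twoIntegral] at hnd ⊢
    field_simp
    linear_combination -hnd

lemma isUnit_of_odd_twoIntegral (u : twoIntegral) (hu : Odd u) : IsUnit u := by
  obtain ⟨q, rfl⟩ := hu
  have hd := odd_den_of_mem_twoIntegral q.2
  have hd0 : ((q : ℚ).den : ℚ) ≠ 0 := by exact_mod_cast (q : ℚ).den_ne_zero
  have hn : Odd (2 * (q : ℚ).num + (q : ℚ).den) := (even_two_mul _).add_odd hd
  have hn0 : (2 * (q : ℚ).num + (q : ℚ).den : ℚ) ≠ 0 := by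
    intro h
    have h' : 2 * (q : ℚ).num + ((q : ℚ).den : ℤ) = 0 := by exact_mod_cast h
    simp [h'] at hn
  refine IsUnit.of_mul_eq_one ⟨_, div_mem_twoIntegral ((q : ℚ).den : ℤ) hn⟩ (Subtype.ext ?_)
  have hnd := (div_eq_iff hd0).mp (Rat.num_div_den (q : ℚ))
  push_cast [coe_two_twoIntegral]
  field_simp
  linear_combination -2 * hnd

lemma two_not_isUnit_twoIntegral : ¬ IsUnit (2 : twoIntegral) := by
  intro h
  obtain ⟨v, hv⟩ := h.exists_right_inv
  have hv' : (v : ℚ) = 1 / 2 := by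
    have := congrArg Subtype.val hv
    push_cast [coe_two_twoIntegral] at this
    linarith
  have := mem_twoIntegral.mp v.2
  rw [hv'] at this
  norm_num at this

end TwoIntegral

/-- If `(q - p) / (r - p)` is an even `2`-integral number, then the cubic
`f x = t f y` with `f z = (z - p) (z - q) (z - r)` has infinitely many rational points. -/
lemma infinite_of_even_ratio {p q r : ℚ} (hpq : q ≠ p) (hpr : r ≠ p) {α : twoIntegral}
    (hα : (q - p) / (r - p) = 2 * α) {t : ℚ} (ht : t ∈ twoIntegral) :
    {y : ℚ | ∃ x, (x - p) * (x - q) * (x - r) = t * ((y - p) * (y - q) * (y - r))}.Infinite := by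
  have hr : r - p ≠ 0 := sub_ne_zero.mpr hpr
  have hα0 : α ≠ 0 := by
    rintro rfl
    simp [sub_eq_zero, hpq, hpr] at hα
  have hinf := infinite_setOf_onTwistedCubic isUnit_of_odd_twoIntegral two_ne_zero
    two_not_isUnit_twoIntegral ⟨t, ht⟩ hα0
  have hinj : Function.Injective fun y : twoIntegral => p + (r - p) * (y : ℚ) := fun y z hyz =>
    Subtype.ext (mul_left_cancel₀ hr (add_left_cancel hyz))
  refine (hinf.image hinj.injOn).mono ?_
  rintro _ ⟨y, ⟨X, h⟩, rfl⟩
  refine ⟨p + (r - p) * (1 + t * X), ?_⟩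
  have h' := congrArg Subtype.val h
  push_cast [coe_two_twoIntegral] at h'
  rw [div_eq_iff hr] at hα
  have hq : q = p + 2 * α * (r - p) := by linear_combination hα
  subst hq
  linear_combination t * (r - p) ^ 3 * h'

/-- Among three distinct rational numbers, two are `2`-adically closer to each other than to
the third one. -/
lemma exists_even_ratio (β : ℚ) (hβ1 : β ≠ 1) (hβ2 : β ≠ -1) :
    ∃ p q r : ℚ, ∃ α : twoIntegral, q ≠ p ∧ r ≠ p ∧ (q - p) / (r - p) = 2 * α ∧
      ∀ z, (z - p) * (z - q) * (z - r) = z * (z + β - 1) * (z + β + 1) := by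
  have h1 : 1 - β ≠ 0 := sub_ne_zero.mpr hβ1.symm
  have h2 : -1 - β ≠ 0 := sub_ne_zero.mpr hβ2.symm
  have even_val {x : ℚ} (hx : x ∈ twoIntegral) (he : Even (⟨x, hx⟩ : twoIntegral)) :
      ∃ α : twoIntegral, x = 2 * α := by
    obtain ⟨α, hα⟩ := he
    exact ⟨α, by simpa [two_mul] using congrArg Subtype.val hα⟩
  have odd_val {x : ℚ} (hx : x ∈ twoIntegral) (ho : Odd (⟨x, hx⟩ : twoIntegral)) :
      ∃ α : twoIntegral, 1 - x = 2 * α := by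
    obtain ⟨α, hα⟩ := ho
    refine ⟨-α, ?_⟩
    have := congrArg Subtype.val hα
    push_cast [coe_two_twoIntegral] at this ⊢
    linear_combination -this
  rcases twoIntegral.mem_or_inv_mem ((1 - β) / (-1 - β)) with h | h
  · rcases even_or_odd_twoIntegral ⟨_, h⟩ with he | ho
    · obtain ⟨α, hα⟩ := even_val h he
      exact ⟨0, 1 - β, -1 - β, α, h1, h2, by simpa using hα, fun z => by ring⟩
    · obtain ⟨α, hα⟩ := odd_val h ho
      refine ⟨-1 - β, 1 - β, 0, α, by intro h; linarith, h2.symm, ?_, fun z => by ring⟩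
      rw [← hα, zero_sub, div_neg, sub_div, div_self h2]
      ring
  · rw [inv_div] at h
    rcases even_or_odd_twoIntegral ⟨_, h⟩ with he | ho
    · obtain ⟨α, hα⟩ := even_val h he
      exact ⟨0, -1 - β, 1 - β, α, h2, h1, by simpa using hα, fun z => by ring⟩
    · obtain ⟨α, hα⟩ := odd_val h ho
      refine ⟨1 - β, -1 - β, 0, α, by intro h; linarith, h1.symm, ?_, fun z => by ring⟩
      rw [← hα, zero_sub, div_neg, sub_div, div_self h1]
      ring
/-- For `β ∈ ℚ` with `β ≠ ±1` and distinct positive coprime integers `k, l`, the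
generalized Holm curve `H_β : l·x·(x+β−1)·(x+β+1) = k·y·(y+β−1)·(y+β+1)` has
infinitely many rational points. -/
theorem holm_curve_infinitely_many_rational_points (β : ℚ) (hβ1 : β ≠ 1) (hβ2 : β ≠ -1)
    (k l : ℕ) (hk : 0 < k) (hl : 0 < l) (hne : k ≠ l) (hkl : Nat.Coprime k l) :
    {p : ℚ × ℚ | (l : ℚ) * p.1 * (p.1 + β - 1) * (p.1 + β + 1) =
      (k : ℚ) * p.2 * (p.2 + β - 1) * (p.2 + β + 1)}.Infinite := by
  obtain ⟨p, q, r, α, hpq, hpr, hα, hf⟩ := exists_even_ratio β hβ1 hβ2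
  have hk0 : (k : ℚ) ≠ 0 := by exact_mod_cast hk.ne'
  have hl0 : (l : ℚ) ≠ 0 := by exact_mod_cast hl.ne'
  rcases twoIntegral.mem_or_inv_mem ((k : ℚ) / l) with h | h
  · refine Set.Infinite.of_image Prod.snd ((infinite_of_even_ratio hpq hpr hα h).mono ?_)
    rintro y ⟨x, hxy⟩
    refine ⟨(x, y), ?_, rfl⟩
    rw [hf, hf] at hxy
    field_simp at hxy
    rw [Set.mem_ofPred_eq]
    linear_combination hxy
  · rw [inv_div] at h
    refine Set.Infinite.of_image Prod.fst ((infinite_of_even_ratio hpq hpr hα h).mono ?_)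
    rintro x ⟨y, hxy⟩
    refine ⟨(x, y), ?_, rfl⟩
    rw [hf, hf] at hxy
    field_simp at hxy
    rw [Set.mem_ofPred_eq]
    linear_combination -hxy
end

section
/- Let β ∈ ℚ with β ≠ 1 and β ≠ −1, and let k, l be distinct positive coprime integers. Then the Mordell–Weil group E_β(ℚ) has positive rank; that is, there exists a rational point P on the elliptic curve E_β : Y² = X³ − (1/3)·k²·l²·(3+β²)²·X + (1/27)·k²·l²·(2·k·l·β²·(β²−9)² + 27·k²·(β²−1)² + 27·l²·(β²−1)²) of infinite order: n·P ≠ O for every positive integer n, where the group law is the usual chord-and-tangent addition on the curve with identity the point at infinity O. -/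
open WeierstrassCurve

local notation "ν" => padicNorm 2

/-- Adding a term of smaller `p`-adic norm does not change the norm. -/
lemma padicNorm_add_eq_left {p : ℕ} [Fact p.Prime] {q r : ℚ}
    (h : padicNorm p r < padicNorm p q) : padicNorm p (q + r) = padicNorm p q := by
  rw [padicNorm.add_eq_max_of_ne h.ne', max_eq_left h.le]

lemma padicNorm_two_two : ν 2 = 1 / 2 := by
  simpa using padicNorm.padicNorm_p (p := 2) one_lt_two

lemma padicNorm_two_eq_one_of_odd {m : ℤ} (hm : Odd m) : ν m = 1 :=
  (padicNorm.int_eq_one_iff m).2 (by simpa [← even_iff_two_dvd] using hm)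

lemma padicNorm_two_le_half_of_even {m : ℤ} (hm : Even m) : ν m ≤ 1 / 2 := by
  have := (padicNorm.dvd_iff_norm_le (p := 2) (n := 1) (z := m)).1 (by simpa using hm.two_dvd)
  simpa using this

lemma padicNorm_pow' (p : ℕ) [Fact p.Prime] (q : ℚ) (n : ℕ) :
    padicNorm p (q ^ n) = padicNorm p q ^ n := by
  induction n with
  | zero => simp
  | succ n ih => rw [pow_succ, pow_succ, padicNorm.mul, ih]

namespace WeierstrassCurve.Affine.Point

/-- The doubling formula on a short Weierstrass curve. -/
lemma exists_two_nsmul_eq_some {A B x y : ℚ}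
    (h : (WeierstrassCurve.mk 0 0 0 A B).toAffine.Nonsingular x y) (hy : y ≠ 0) :
    ∃ y' h', 2 • some x y h = some (((3 * x ^ 2 + A) / (2 * y)) ^ 2 - 2 * x) y' h' := by
  have hneg : y ≠ (WeierstrassCurve.mk 0 0 0 A B).toAffine.negY x y := by
    simpa [negY] using fun h : y = -y ↦ hy (by linarith)
  have hX : (WeierstrassCurve.mk 0 0 0 A B).toAffine.addX x x
      ((WeierstrassCurve.mk 0 0 0 A B).toAffine.slope x x y y) =
      ((3 * x ^ 2 + A) / (2 * y)) ^ 2 - 2 * x := by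
    rw [slope_of_Y_ne rfl hneg]
    simp only [addX, negY]
    ring
  have hadd := add_self_of_Y_ne (h₁ := h) hneg
  rw [← two_nsmul] at hadd
  generalize_proofs hns at hadd
  revert hns
  rw [hX]
  exact fun hns hadd ↦ ⟨_, hns, hadd⟩

/-- A point whose `x`-coordinate is `2`-adically large relative to the coefficients has double
with `x`-coordinate of four times the norm. -/
lemma exists_two_nsmul_eq_some_of_lt {A B x y R : ℚ} (hA : ν A ≤ R ^ 4) (hB : ν B ≤ R ^ 6)
    (h : (WeierstrassCurve.mk 0 0 0 A B).toAffine.Nonsingular x y)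
    (hx : R ^ 2 < ν x) :
    ∃ x' y' h', 2 • some x y h = some x' y' h' ∧ ν x' = 4 * ν x := by
  have hx0 : 0 < ν x := (sq_nonneg R).trans_lt hx
  have h2 : R ^ 4 < ν x ^ 2 := by nlinarith [sq_nonneg R]
  have h3 : R ^ 6 < ν x ^ 3 := by
    calc R ^ 6 = (R ^ 2) ^ 3 := by ring
      _ < _ := pow_lt_pow_left₀ hx (by positivity) (by norm_num)
  have heq : y ^ 2 = x ^ 3 + (A * x + B) := by
    have := (equation_iff _ _).1 h.1
    simp at this
    linarith
  have hy2 : ν y ^ 2 = ν x ^ 3 := by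
    rw [← padicNorm_pow', heq, padicNorm_add_eq_left, padicNorm_pow']
    refine padicNorm.nonarchimedean.trans_lt (max_lt ?_ ?_)
    · rw [padicNorm.mul, padicNorm_pow']
      nlinarith [padicNorm.nonneg (p := 2) A]
    · rw [padicNorm_pow']
      linarith
  have hy0 : y ≠ 0 := by
    rintro rfl
    have : 0 < ν x ^ 3 := by positivity
    simp [← hy2] at this
  have hnum : ν (3 * x ^ 2 + A) = ν x ^ 2 := by
    have h3x : ν (3 * x ^ 2) = ν x ^ 2 := by
      rw [padicNorm.mul, padicNorm_pow']
      have : ν 3 = 1 := by exact_mod_cast padicNorm_two_eq_one_of_odd (m := 3) (by decide)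
      rw [this, one_mul]
    rw [padicNorm_add_eq_left (by rw [h3x]; linarith), h3x]
  have hsl : ν (((3 * x ^ 2 + A) / (2 * y)) ^ 2) = 4 * ν x := by
    rw [padicNorm_pow', padicNorm.div, padicNorm.mul, hnum, padicNorm_two_two, div_pow, mul_pow,
      hy2]
    field_simp
    norm_num
  obtain ⟨y', h', hd⟩ := exists_two_nsmul_eq_some h hy0
  refine ⟨_, y', h', hd, ?_⟩
  rw [sub_eq_add_neg, padicNorm_add_eq_left, hsl]
  rw [hsl, padicNorm.neg, padicNorm.mul, padicNorm_two_two]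
  linarith

/-- A point on a short Weierstrass curve whose `x`-coordinate is `2`-adically large relative to the
coefficients has infinite order, since repeated doubling makes the `x`-coordinate ever larger. -/
lemma not_isOfFinAddOrder_of_lt {A B x y R : ℚ} (hA : ν A ≤ R ^ 4) (hB : ν B ≤ R ^ 6)
    (h : (WeierstrassCurve.mk 0 0 0 A B).toAffine.Nonsingular x y)
    (hx : R ^ 2 < ν x) : ¬ IsOfFinAddOrder (some x y h) := by
  have hx0 : 0 < ν x := (sq_nonneg R).trans_lt hx
  have key (j : ℕ) : ∃ x' y' h', 2 ^ j • some x y h = some x' y' h' ∧ ν x' = 4 ^ j * ν x := by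
    induction j with
    | zero => exact ⟨x, y, h, by simp, by simp⟩
    | succ j ih =>
      obtain ⟨x₁, y₁, h₁, e₁, n₁⟩ := ih
      have hlt : R ^ 2 < ν x₁ := by
        have : (1 : ℚ) ≤ 4 ^ j := one_le_pow₀ (by norm_num)
        rw [n₁]
        nlinarith
      obtain ⟨x₂, y₂, h₂, e₂, n₂⟩ := exists_two_nsmul_eq_some_of_lt hA hB h₁ hlt
      exact ⟨x₂, y₂, h₂, by rw [pow_succ, mul_nsmul, e₁, e₂], by rw [n₂, n₁]; ring⟩
  intro hfin
  have hinj : Function.Injective fun j : ℕ ↦ 2 ^ j • some x y h := by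
    intro i j hij
    obtain ⟨x₁, y₁, h₁, e₁, n₁⟩ := key i
    obtain ⟨x₂, y₂, h₂, e₂, n₂⟩ := key j
    have hxx : x₁ = x₂ := by
      have := e₁.symm.trans (hij.trans e₂)
      injection this
    have : (4 : ℚ) ^ i = 4 ^ j := mul_right_cancel₀ hx0.ne' (n₁.symm.trans (hxx ▸ n₂))
    exact pow_right_injective₀ (by norm_num) (by norm_num) this
  refine Set.infinite_of_injective_forall_mem hinj (fun j ↦ ?_)
    (finite_multiples.2 hfin)
  exact ⟨2 ^ j, rfl⟩

/-- An integral point on a short Weierstrass curve over `ℤ`, rescaled by `r`, has infinite order as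
soon as the tangent slope at it is not `2`-integral. -/
lemma exists_not_isOfFinAddOrder {A B X Y n d : ℤ} {r : ℚ} (hr : r ≠ 0)
    (heq : Y ^ 2 = X ^ 3 + A * X + B) (hY : Y ≠ 0) (hn : Odd n) (hd : Even d) (hd0 : d ≠ 0)
    (hslope : (3 * X ^ 2 + A) * d = 2 * Y * n) :
    ∃ P : (WeierstrassCurve.mk 0 0 0 (r ^ 4 * A) (r ^ 6 * B)).toAffine.Point,
      ¬ IsOfFinAddOrder P := by
  have hY' : (Y : ℚ) ≠ 0 := by exact_mod_cast hY
  have hd0' : (d : ℚ) ≠ 0 := by exact_mod_cast hd0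
  have hy0 : r ^ 3 * Y ≠ 0 := by positivity
  have hns : (WeierstrassCurve.mk 0 0 0 (r ^ 4 * A) (r ^ 6 * B)).toAffine.Nonsingular
      (r ^ 2 * X) (r ^ 3 * Y) := by
    rw [nonsingular_iff', equation_iff]
    refine ⟨?_, Or.inr ?_⟩
    · have : (Y : ℚ) ^ 2 = X ^ 3 + A * X + B := by exact_mod_cast heq
      linear_combination r ^ 6 * this
    · simpa using ⟨hr, hY⟩
  obtain ⟨y', h', hdbl⟩ := exists_two_nsmul_eq_some hns hy0
  have hsl : (3 * (r ^ 2 * X) ^ 2 + r ^ 4 * A) / (2 * (r ^ 3 * Y)) = r * (n / d) := by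
    have : (3 * (X : ℚ) ^ 2 + A) * d = 2 * Y * n := by exact_mod_cast hslope
    field_simp
    linear_combination this
  have hr0 : 0 < ν r := lt_of_le_of_ne (padicNorm.nonneg _) (padicNorm.nonzero hr).symm
  have hint (m : ℤ) (i : ℕ) : ν (r ^ i * m) ≤ ν r ^ i := by
    rw [padicNorm.mul, padicNorm_pow']
    exact mul_le_of_le_one_right (by positivity) (padicNorm.of_int m)
  refine ⟨some _ _ hns, fun hfin ↦ ?_⟩
  have hfin2 := hfin.nsmul (n := 2)
  rw [hdbl] at hfin2
  refine not_isOfFinAddOrder_of_lt (hint A 4) (hint B 6) h' ?_ hfin2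
  have hsq : 2 * ν r ^ 2 < ν ((r * (n / d)) ^ 2) := by
    have hdle := padicNorm_two_le_half_of_even hd
    have hdpos : 0 < ν d := lt_of_le_of_ne (padicNorm.nonneg _) (padicNorm.nonzero hd0').symm
    rw [padicNorm_pow', padicNorm.mul, padicNorm.div, padicNorm_two_eq_one_of_odd hn, mul_pow,
      mul_comm]
    refine mul_lt_mul_of_pos_left ?_ (by positivity)
    rw [div_pow, lt_div_iff₀ (by positivity)]
    nlinarith
  have hx : ν (2 * (r ^ 2 * X)) ≤ ν r ^ 2 := by
    have := hint (2 * X) 2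
    push_cast at this
    rwa [show 2 * (r ^ 2 * X) = r ^ 2 * (2 * X) by ring]
  rw [hsl, sub_eq_add_neg, padicNorm_add_eq_left]
  · nlinarith [sq_pos_of_pos hr0]
  · rw [padicNorm.neg]
    nlinarith [sq_pos_of_pos hr0]

end WeierstrassCurve.Affine.Point

/-- Up to a common rational scaling, the differences `2`, `β - 1`, `-(β + 1)` of the roots of
`(t² - 1)(t - β)` are, in some order, integers `a`, `b`, `-2h` with `a` and `b` odd. -/
lemma exists_odd_root_differences {β : ℚ} (hβ1 : β ≠ 1) (hβ2 : β ≠ -1) :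
    ∃ (a b h : ℤ) (r : ℚ), Odd a ∧ Odd b ∧ h ≠ 0 ∧ a + b = 2 * h ∧ r ≠ 0 ∧
      3 + β ^ 2 = 9 * r ^ 2 * (a ^ 2 + a * b + b ^ 2) ∧
      (β ^ 2 - 1) ^ 2 = 729 * r ^ 6 * (a * b * h) ^ 2 := by
  obtain ⟨u, w, hw, hcop, rfl⟩ : ∃ u w : ℤ, w ≠ 0 ∧ ¬ (Even u ∧ Even w) ∧ β = u / w := by
    refine ⟨β.num, β.den, by exact_mod_cast β.den_nz, fun ⟨h₁, h₂⟩ ↦ ?_, by simp [Rat.num_div_den]⟩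
    have hdvd := Nat.dvd_gcd (Int.natAbs_dvd_natAbs.2 h₁.two_dvd) (Int.natAbs_dvd_natAbs.2 h₂.two_dvd)
    have hred := β.reduced
    simp_all
  have hw' : (w : ℚ) ≠ 0 := by exact_mod_cast hw
  have hne1 : u ≠ w := by rintro rfl; exact hβ1 (div_self hw')
  have hne2 : u ≠ -w := by rintro rfl; exact hβ2 (by push_cast; field_simp)
  rcases Int.even_or_odd (u + w) with hs | hs
  · have hwo : Odd w := by grind
    obtain ⟨q, hq⟩ := hs
    obtain rfl : u = 2 * q - w := by linarith
    rcases Int.even_or_odd q with ⟨h, rfl⟩ | hqo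
    · refine ⟨w, 2 * h - w, h, 2 / (3 * w), hwo, by grind, by grind, by ring, by positivity, ?_, ?_⟩
      all_goals push_cast; field_simp; ring
    · obtain ⟨h, hh⟩ : Even (q - w) := by grind
      obtain rfl : q = w + 2 * h := by linarith
      refine ⟨w, -(w + 2 * h), -h, 2 / (3 * w), hwo, by grind, by grind, by ring, by positivity,
        ?_, ?_⟩
      all_goals push_cast; field_simp; ring
  · refine ⟨u - w, -(u + w), -w, 1 / (3 * w), by grind, by grind, by grind, by ring, by positivity,
      ?_, ?_⟩
    all_goals push_cast; field_simp; ring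

/-- The integral model of the curve has an explicit integral point with tangent slope that is not
`2`-integral. -/
lemma exists_integral_point_slope {a b h k l A B : ℤ} (ha : Odd a) (hb : Odd b) (hh : h ≠ 0)
    (hab : a + b = 2 * h) (hk : 0 < k) (hl : 0 < l) (hlodd : Odd l)
    (hA : A = -27 * (k * l) ^ 2 * (a ^ 2 + a * b + b ^ 2) ^ 2)
    (hB : B = 27 * (k * l) ^ 2 * (2 * (k * l) * ((a ^ 2 + a * b + b ^ 2) ^ 3 -
      27 * (a * b * h) ^ 2) + 27 * (k ^ 2 + l ^ 2) * (a * b * h) ^ 2)) :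
    ∃ X Y n d : ℤ, Y ^ 2 = X ^ 3 + A * X + B ∧ Y ≠ 0 ∧ Odd n ∧ Even d ∧ d ≠ 0 ∧
      (3 * X ^ 2 + A) * d = 2 * Y * n := by
  have ha0 : a ≠ 0 := by rintro rfl; simp at ha
  have hb0 : b ≠ 0 := by rintro rfl; simp at hb
  obtain rfl : b = 2 * h - a := by linarith
  subst hA hB
  rcases Int.even_or_odd k with hke | hko
  · set s := a ^ 2 + a * (2 * h - a) + (2 * h - a) ^ 2
    set X := a ^ 2 * l * (l - k) with hX
    set Y := l * (k - l) * a * (k * (2 * h - a) * h + l * a ^ 2) with hY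
    have hXo : Odd X := (ha.pow.mul hlodd).mul (hlodd.sub_even hke)
    have hYo : Odd Y := ((hlodd.mul (hke.sub_odd hlodd)).mul ha).mul
      (((hke.mul_right _).mul_right _).add_odd (hlodd.mul ha.pow))
    have hY0 : Y ≠ 0 := by intro h0; simp [h0] at hYo
    refine ⟨9 * X + 3 * (k * l) * s, 27 * Y, 3 * X * (3 * X + 2 * (k * l) * s), 2 * Y, ?_, ?_, ?_,
      even_two_mul Y, ?_, ?_⟩
    · simp only [hX, hY, s]; ring
    · simpa using hY0
    · have h3 : Odd (3 : ℤ) := by decide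
      exact (h3.mul hXo).mul ((h3.mul hXo).add_even ((even_two_mul _).mul_right _))
    · simpa using hY0
    · ring
  · have hs : k + l ≠ 0 := by positivity
    refine ⟨9 * (k * l * a * (2 * h - a)) + 3 * (k * l) * (a ^ 2 + a * (2 * h - a) + (2 * h - a) ^ 2),
      27 * (k * l * (k + l) * a * (2 * h - a) * h),
      3 * (k * l) * (2 * a + (2 * h - a)) * (a + 2 * (2 * h - a)), 2 * ((k + l) * h),
      ?_, ?_, ?_, even_two_mul _, ?_, ?_⟩
    · ring
    · simp [*, hk.ne', hl.ne']
    · simp only [Int.odd_mul]; grind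
    · simp [*]
    · ring

/-- For `β ∈ ℚ` with `β ≠ ±1` and distinct positive coprime integers `k, l`, the
Mordell–Weil group `E_β(ℚ)` of the elliptic curve
`E_β : Y² = X³ − (1/3)k²l²(3+β²)²·X + (1/27)k²l²(2klβ²(β²−9)² + 27k²(β²−1)² + 27l²(β²−1)²)`
has positive rank: there is a rational point of infinite order for the chord-and-tangent
group law with identity the point at infinity. -/
theorem holm_jacobian_positive_rank (β : ℚ) (hβ1 : β ≠ 1) (hβ2 : β ≠ -1)
    (k l : ℕ) (hk : 0 < k) (hl : 0 < l) (hne : k ≠ l) (hkl : Nat.Coprime k l)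
    (W : WeierstrassCurve ℚ)
    (hW : W = WeierstrassCurve.mk 0 0 0
      (-(1 / 3) * (k : ℚ) ^ 2 * (l : ℚ) ^ 2 * (3 + β ^ 2) ^ 2)
      ((1 / 27) * (k : ℚ) ^ 2 * (l : ℚ) ^ 2 *
        (2 * k * l * β ^ 2 * (β ^ 2 - 9) ^ 2 + 27 * (k : ℚ) ^ 2 * (β ^ 2 - 1) ^ 2 +
          27 * (l : ℚ) ^ 2 * (β ^ 2 - 1) ^ 2))) :
    ∃ P : W.toAffine.Point, ∀ n : ℕ, 0 < n → n • P ≠ 0 := by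
  obtain ⟨a, b, h, r, ha, hb, hh, hab, hr, hS, hD⟩ := exists_odd_root_differences hβ1 hβ2
  obtain ⟨A, hA⟩ : ∃ A : ℤ, A = -27 * (k * l) ^ 2 * (a ^ 2 + a * b + b ^ 2) ^ 2 := ⟨_, rfl⟩
  obtain ⟨B, hB⟩ : ∃ B : ℤ, B = 27 * (k * l) ^ 2 * (2 * (k * l) * ((a ^ 2 + a * b + b ^ 2) ^ 3 -
      27 * (a * b * h) ^ 2) + 27 * (k ^ 2 + l ^ 2) * (a * b * h) ^ 2) := ⟨_, rfl⟩
  have hslope : ∃ X Y n d : ℤ, Y ^ 2 = X ^ 3 + A * X + B ∧ Y ≠ 0 ∧ Odd n ∧ Even d ∧ d ≠ 0 ∧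
      (3 * X ^ 2 + A) * d = 2 * Y * n := by
    have hk' : (0 : ℤ) < k := by exact_mod_cast hk
    have hl' : (0 : ℤ) < l := by exact_mod_cast hl
    rcases Nat.even_or_odd l with hle | hlo
    · have hko : Odd (k : ℤ) := by
        rw [Int.odd_coe_nat, ← Nat.not_even_iff_odd]
        intro hke
        simpa [hkl] using Nat.dvd_gcd hke.two_dvd hle.two_dvd
      exact exists_integral_point_slope ha hb hh hab hl' hk' hko (by rw [hA]; ring) (by rw [hB]; ring)
    · exact exists_integral_point_slope ha hb hh hab hk' hl' (by exact_mod_cast hlo) hA hB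
  have hW' : W = WeierstrassCurve.mk 0 0 0 (r ^ 4 * A) (r ^ 6 * B) := by
    rw [hW, hA, hB]
    congr 1
    · rw [hS]
      push_cast
      ring
    · calc _ = 1 / 27 * (k : ℚ) ^ 2 * l ^ 2 * (2 * k * l * ((3 + β ^ 2) ^ 3 -
            27 * (β ^ 2 - 1) ^ 2) + 27 * (k ^ 2 + l ^ 2) * (β ^ 2 - 1) ^ 2) := by ring
        _ = _ := by
          rw [hS, hD]
          push_cast
          ring
  clear hW
  subst hW'
  obtain ⟨X, Y, n, d, heq, hY, hn, hd, hd0, hsl⟩ := hslope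
  obtain ⟨P, hP⟩ := Affine.Point.exists_not_isOfFinAddOrder hr heq hY hn hd hd0 hsl
  exact ⟨P, fun n hn h0 ↦ hP (isOfFinAddOrder_iff_nsmul_eq_zero.2 ⟨n, hn, h0⟩)⟩
end

section
/- Let a, b ∈ ℚ with 4a³ + 27b² ≠ 0, and let E be the elliptic curve Y² = X³ + aX + b over ℚ. Suppose E(ℚ) has positive rank, i.e., there is a rational point of E of infinite order in the Mordell–Weil group. Let p₁, p₂, …, p_t be distinct prime numbers. Then there exists an integer N such that for all integers m₁, m₂, …, m_t ≥ N there exists a pair (X, Y) ∈ ℚ × ℚ with Y² = X³ + aX + b, and with the pᵢ-adic valuation of X equal to −2mᵢ and the pᵢ-adic valuation of Y equal to −3mᵢ for every i with 1 ≤ i ≤ t. -/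
namespace AbsoluteValue

variable {F : Type*} [Field F] {v : AbsoluteValue F ℝ}

lemma add_le_of_isNonarchimedean (hv : IsNonarchimedean v) {x y : F} {c : ℝ}
    (hx : v x ≤ c) (hy : v y ≤ c) : v (x + y) ≤ c :=
  (hv x y).trans (max_le hx hy)

lemma sub_le_of_isNonarchimedean (hv : IsNonarchimedean v) {x y : F} {c : ℝ}
    (hx : v x ≤ c) (hy : v y ≤ c) : v (x - y) ≤ c := by
  rw [sub_eq_add_neg]
  exact add_le_of_isNonarchimedean hv hx (by rwa [v.map_neg])

lemma natCast_mul_le_of_isNonarchimedean (hv : IsNonarchimedean v) (n : ℕ) {x : F} {c : ℝ}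
    (hx : v x ≤ c) : v (n * x) ≤ c := by
  have hn : v n ≤ 1 := hv.apply_natCast_le_one
  rw [v.map_mul]
  nlinarith [v.nonneg x]

lemma eq_of_sub_lt (hv : IsNonarchimedean v) {x y : F} (h : v (x - y) < v y) : v x = v y := by
  have := hv.add_eq_right_of_lt h
  rwa [sub_add_cancel] at this

end AbsoluteValue

section Line

variable {F : Type*} [Field F] {a b l n x₁ x₂ x₃ y₁ y₂ y₃ : F}

/-- If the line `Y = lX + n` meets `Y² = X³ + aX + b` in three points with `X`-coordinates
`x₁, x₂, x₃`, then its slope satisfies this relation in the coordinates `x / y` and `1 / y`. -/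
lemma slope_relation (hx₃ : x₃ = l ^ 2 - x₁ - x₂) (hy₁ : y₁ = l * x₁ + n) (hy₂ : y₂ = l * x₂ + n)
    (ha : a = x₁ * x₂ + x₁ * x₃ + x₂ * x₃ + 2 * l * n) (hb : b = n ^ 2 - x₁ * x₂ * x₃)
    (h₁ : y₁ ≠ 0) (h₂ : y₂ ≠ 0) :
    l * (1 - a * (x₁ / y₁) * (1 / y₁ + 1 / y₂)
        - b * ((1 / y₁) ^ 2 + 1 / y₁ * (1 / y₂) + (1 / y₂) ^ 2)) =
      -n * ((x₁ / y₁) ^ 2 + x₁ / y₁ * (x₂ / y₂) + (x₂ / y₂) ^ 2 + a * (1 / y₂) ^ 2) := by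
  field_simp
  subst hx₃ ha hb hy₁ hy₂
  ring

lemma prod_Y_relation (hx₃ : x₃ = l ^ 2 - x₁ - x₂) (hy₁ : y₁ = l * x₁ + n)
    (hy₂ : y₂ = l * x₂ + n) (hy₃ : y₃ = l * x₃ + n)
    (ha : a = x₁ * x₂ + x₁ * x₃ + x₂ * x₃ + 2 * l * n) (hb : b = n ^ 2 - x₁ * x₂ * x₃) :
    y₁ * y₂ * y₃ = n ^ 3 + a * l ^ 2 * n - b * l ^ 3 := by
  subst hx₃ ha hb hy₁ hy₂ hy₃
  ring

lemma sum_X_mul_Y_relation (hx₃ : x₃ = l ^ 2 - x₁ - x₂) (hy₁ : y₁ = l * x₁ + n)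
    (hy₂ : y₂ = l * x₂ + n) (hy₃ : y₃ = l * x₃ + n)
    (ha : a = x₁ * x₂ + x₁ * x₃ + x₂ * x₃ + 2 * l * n) (hb : b = n ^ 2 - x₁ * x₂ * x₃) :
    x₃ * y₁ * y₂ + x₁ * y₂ * y₃ + x₂ * y₁ * y₃ = 2 * a * l * n - 3 * b * l ^ 2 := by
  subst hx₃ ha hb hy₁ hy₂ hy₃
  ring

variable {v : AbsoluteValue F ℝ} {ε δ : ℝ}

open AbsoluteValue in
/-- The group law near the point at infinity is, in the parameter `x / y`, addition up to terms of
higher order. -/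
lemma sum_near_infinity_le (hv : IsNonarchimedean v)
    (hx₃ : x₃ = l ^ 2 - x₁ - x₂) (hy₁ : y₁ = l * x₁ + n)
    (hy₂ : y₂ = l * x₂ + n) (hy₃ : y₃ = l * x₃ + n)
    (ha : a = x₁ * x₂ + x₁ * x₃ + x₂ * x₃ + 2 * l * n) (hb : b = n ^ 2 - x₁ * x₂ * x₃)
    (hε : 0 < ε) (hδ : δ < 1) (haε : v a * ε ^ 4 ≤ δ) (hbε : v b * ε ^ 6 ≤ δ)
    (h₁ : y₁ ≠ 0) (h₂ : y₂ ≠ 0) (hz₁ : v (x₁ / y₁) ≤ ε) (hz₂ : v (x₂ / y₂) ≤ ε)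
    (hw₁ : v (1 / y₁) ≤ ε ^ 3) (hw₂ : v (1 / y₂) ≤ ε ^ 3) :
    y₃ ≠ 0 ∧ v (x₃ / y₃ + (x₁ / y₁ + x₂ / y₂)) ≤ δ * ε ∧ v (1 / y₃) ≤ ε ^ 3 := by
  have hrel := slope_relation hx₃ hy₁ hy₂ ha hb h₁ h₂
  have hprod := prod_Y_relation hx₃ hy₁ hy₂ hy₃ ha hb
  have hsum := sum_X_mul_Y_relation hx₃ hy₁ hy₂ hy₃ ha hb
  have hva := v.nonneg a
  have hvb := v.nonneg b
  set z₁ := x₁ / y₁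
  set z₂ := x₂ / y₂
  set w₁ := 1 / y₁
  set w₂ := 1 / y₂
  set D := 1 - a * z₁ * (w₁ + w₂) - b * (w₁ ^ 2 + w₁ * w₂ + w₂ ^ 2) with hD
  set N := z₁ ^ 2 + z₁ * z₂ + z₂ ^ 2 + a * w₂ ^ 2 with hN
  have unit_of {x y : F} (hx : v x ≤ δ) (hy : v y ≤ δ) : v (1 + x + y) = 1 := by
    rw [eq_of_sub_lt (v := v) hv (y := 1), v.map_one]
    rw [show 1 + x + y - 1 = x + y by ring, v.map_one]
    exact (add_le_of_isNonarchimedean hv hx hy).trans_lt hδ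
  have hvD : v D = 1 := by
    have e₁ : v (-(a * z₁ * (w₁ + w₂))) ≤ δ := by
      rw [v.map_neg, v.map_mul, v.map_mul]
      calc _ ≤ v a * ε * ε ^ 3 := by
            gcongr
            exact add_le_of_isNonarchimedean hv hw₁ hw₂
        _ ≤ δ := by linarith
    have e₂ : v (-(b * (w₁ ^ 2 + w₁ * w₂ + w₂ ^ 2))) ≤ δ := by
      rw [v.map_neg, v.map_mul]
      calc _ ≤ v b * (ε ^ 3 * ε ^ 3) := by
            gcongr
            refine add_le_of_isNonarchimedean hv (add_le_of_isNonarchimedean hv ?_ ?_) ?_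
            all_goals
              simp only [pow_two, v.map_mul]
              gcongr
        _ ≤ δ := by linarith
    rw [← unit_of e₁ e₂, hD]
    ring_nf
  have hD₀ : D ≠ 0 := fun h ↦ by simp [h] at hvD
  have hvN : v N ≤ ε ^ 2 := by
    refine add_le_of_isNonarchimedean hv (add_le_of_isNonarchimedean hv
      (add_le_of_isNonarchimedean hv ?_ ?_) ?_) ?_
    · rw [v.map_pow]; gcongr
    · rw [v.map_mul, pow_two]; gcongr
    · rw [v.map_pow]; gcongr
    · rw [v.map_mul, v.map_pow]
      calc _ ≤ v a * (ε ^ 3) ^ 2 := by gcongr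
        _ = (v a * ε ^ 4) * ε ^ 2 := by ring
        _ ≤ 1 * ε ^ 2 := by gcongr; linarith
        _ = ε ^ 2 := one_mul _
  have hn : n ≠ 0 := by
    rintro rfl
    have : l = 0 := by simpa [hD₀] using hrel
    simp [hy₁, this] at h₁
  obtain ⟨α, hα⟩ : ∃ α, α = -l / n := ⟨_, rfl⟩
  obtain ⟨β, hβ⟩ : ∃ β, β = 1 / n := ⟨_, rfl⟩
  have hαN : α = N / D := by
    rw [hα]
    field_simp
    linear_combination -hrel
  have hvα : v α ≤ ε ^ 2 := by rw [hαN, map_div₀, hvD, div_one]; exact hvN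
  have hβ₁ : β = w₁ - α * z₁ := by
    rw [hα, hβ]
    simp only [w₁, z₁]
    field_simp
    linear_combination hy₁
  have hvβ : v β ≤ ε ^ 3 := by
    rw [hβ₁]
    refine sub_le_of_isNonarchimedean hv hw₁ ?_
    rw [v.map_mul, pow_succ]
    gcongr
  have hvG : v (1 + a * α ^ 2 + b * α ^ 3) = 1 := by
    apply unit_of
    · rw [v.map_mul, v.map_pow]
      calc _ ≤ v a * (ε ^ 2) ^ 2 := by gcongr
        _ ≤ δ := by linarith
    · rw [v.map_mul, v.map_pow]
      calc _ ≤ v b * (ε ^ 2) ^ 3 := by gcongr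
        _ ≤ δ := by linarith
  set G := 1 + a * α ^ 2 + b * α ^ 3 with hG
  have hG₀ : G ≠ 0 := fun h ↦ by simp [h] at hvG
  have hprod' : y₁ * y₂ * y₃ = n ^ 3 * G := by
    rw [hprod, hG, hα]
    field_simp
    ring
  have h₃ : y₃ ≠ 0 := by
    rintro rfl
    simp [hn, hG₀] at hprod'
  have hS : x₃ / y₃ + (z₁ + z₂) = -(2 * (a * α * β) + 3 * (b * α ^ 2 * β)) / G := by
    have e : x₃ / y₃ + (z₁ + z₂) =
        (x₃ * y₁ * y₂ + x₁ * y₂ * y₃ + x₂ * y₁ * y₃) / (y₁ * y₂ * y₃) := by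
      simp only [z₁, z₂]
      field_simp
      ring
    rw [e, hprod', hsum, hα, hβ]
    field_simp
    ring
  have hvS : v (x₃ / y₃ + (z₁ + z₂)) ≤ δ * ε := by
    rw [hS, map_div₀, hvG, div_one, v.map_neg]
    refine add_le_of_isNonarchimedean hv ?_ ?_
    · refine natCast_mul_le_of_isNonarchimedean hv 2 ?_
      rw [v.map_mul, v.map_mul]
      calc _ ≤ v a * ε ^ 2 * ε ^ 3 := by gcongr
        _ = v a * ε ^ 4 * ε := by ring
        _ ≤ δ * ε := by gcongr
    · refine natCast_mul_le_of_isNonarchimedean hv 3 ?_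
      rw [v.map_mul, v.map_mul, v.map_pow]
      calc _ ≤ v b * (ε ^ 2) ^ 2 * ε ^ 3 := by gcongr
        _ = v b * ε ^ 6 * ε := by ring
        _ ≤ δ * ε := by gcongr
  refine ⟨h₃, hvS, ?_⟩
  have hvz₃ : v (x₃ / y₃) ≤ ε := by
    have := sub_le_of_isNonarchimedean hv (hvS.trans (by nlinarith : δ * ε ≤ ε))
      (add_le_of_isNonarchimedean hv hz₁ hz₂)
    rwa [add_sub_cancel_right] at this
  have hw₃ : 1 / y₃ = α * (x₃ / y₃) + β := by
    rw [hα, hβ]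
    field_simp
    linear_combination -hy₃
  rw [hw₃]
  refine add_le_of_isNonarchimedean hv ?_ hvβ
  rw [v.map_mul, pow_succ]
  gcongr

open AbsoluteValue in
/-- If the chord of bounded slope through `(x₁, y₁)` and `(x₂, y₂)` joins nearly opposite points,
then the discriminant of the curve is small. -/
lemma discriminant_le (hv : IsNonarchimedean v) {B η : ℝ}
    (hx₃ : x₃ = l ^ 2 - x₁ - x₂) (hy₁ : y₁ = l * x₁ + n) (hy₂ : y₂ = l * x₂ + n)
    (ha : a = x₁ * x₂ + x₁ * x₃ + x₂ * x₃ + 2 * l * n) (hb : b = n ^ 2 - x₁ * x₂ * x₃)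
    (hB : 1 ≤ B) (hη : 0 ≤ η) (hη₁ : η ≤ 1) (haB : v a ≤ B) (hbB : v b ≤ B) (hx₁ : v x₁ ≤ B)
    (hx₂ : v x₂ ≤ B) (hl : v l ≤ B) (hx : v (x₁ - x₂) ≤ η) (hy : v (y₁ + y₂) ≤ η) :
    v (4 * (4 * a ^ 3 + 27 * b ^ 2)) ≤ B ^ 4 * η := by
  have hB₀ : 0 ≤ B := by linarith
  have key : 4 * (4 * a ^ 3 + 27 * b ^ 2) =
      (l * (y₁ + y₂) + (x₁ - x₂) * ((2 : ℕ) * x₁ + x₂)) *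
        ((16 : ℕ) * a ^ 2 + (24 : ℕ) * (a * x₁ ^ 2) - (36 : ℕ) * (b * x₁)) -
      ((18 : ℕ) * (a * x₁) - (27 : ℕ) * b) * (y₁ + y₂ + l * (x₁ - x₂)) ^ 2 := by
    push_cast
    subst hx₃ ha hb hy₁ hy₂
    ring
  have h₁ : v (l * (y₁ + y₂) + (x₁ - x₂) * ((2 : ℕ) * x₁ + x₂)) ≤ B * η := by
    refine add_le_of_isNonarchimedean hv ?_ ?_
    · rw [v.map_mul]; gcongr
    · rw [v.map_mul, mul_comm B]
      gcongr
      exact add_le_of_isNonarchimedean hv (natCast_mul_le_of_isNonarchimedean hv _ hx₁) hx₂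
  have h₂ : v (y₁ + y₂ + l * (x₁ - x₂)) ≤ B * η := by
    refine add_le_of_isNonarchimedean hv (by nlinarith) ?_
    rw [v.map_mul]; gcongr
  have h₃ : v ((16 : ℕ) * a ^ 2 + (24 : ℕ) * (a * x₁ ^ 2) - (36 : ℕ) * (b * x₁)) ≤ B ^ 3 := by
    refine sub_le_of_isNonarchimedean hv (add_le_of_isNonarchimedean hv ?_ ?_) ?_ <;>
      refine natCast_mul_le_of_isNonarchimedean hv _ ?_
    · rw [v.map_pow]
      calc _ ≤ B ^ 2 := by gcongr
        _ ≤ B ^ 3 := by gcongr; norm_num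
    · rw [v.map_mul, v.map_pow]
      calc _ ≤ B * B ^ 2 := by gcongr
        _ = B ^ 3 := by ring
    · rw [v.map_mul]
      calc _ ≤ B * B := by gcongr
        _ = B ^ 2 := by ring
        _ ≤ B ^ 3 := by gcongr; norm_num
  have h₄ : v ((18 : ℕ) * (a * x₁) - (27 : ℕ) * b) ≤ B ^ 2 := by
    refine sub_le_of_isNonarchimedean hv ?_ ?_ <;>
      refine natCast_mul_le_of_isNonarchimedean hv _ ?_
    · rw [v.map_mul, pow_two]; gcongr
    · nlinarith
  rw [key]
  refine sub_le_of_isNonarchimedean hv ?_ ?_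
  · rw [v.map_mul]
    calc _ ≤ B * η * B ^ 3 := by gcongr
      _ = B ^ 4 * η := by ring
  · rw [v.map_mul, v.map_pow]
    calc _ ≤ B ^ 2 * (B * η) ^ 2 := by gcongr
      _ = B ^ 4 * (η * η) := by ring
      _ ≤ B ^ 4 * (1 * η) := by gcongr
      _ = B ^ 4 * η := by ring

end Line

section Size

variable {F : Type*} [Field F] {a b x y : F} {v : AbsoluteValue F ℝ} {ε δ B : ℝ}

open AbsoluteValue in
lemma near_infinity_of_lt (hv : IsNonarchimedean v) (h : y ^ 2 = x ^ 3 + a * x + b)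
    (hB : 1 ≤ B) (haB : v a ≤ B) (hbB : v b ≤ B) (hε : 0 < ε) (hεB : 1 ≤ B * ε ^ 2)
    (hx : B < v x) : y ≠ 0 ∧ v (x / y) ≤ ε ∧ v (1 / y) ≤ ε ^ 3 := by
  have hx₁ : 1 < v x := hB.trans_lt hx
  have hx₀ : 0 < v x := by linarith
  have hy : v y ^ 2 = v x ^ 3 := by
    rw [← v.map_pow, ← v.map_pow, h]
    refine eq_of_sub_lt hv ?_
    have hlt : max (v a * v x) (v b) < v x ^ 3 := by
      apply max_lt
      · calc v a * v x < v x * v x := by gcongr; linarith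
          _ = v x ^ 2 := by ring
          _ ≤ v x ^ 3 := by gcongr <;> norm_num [hx₁.le]
      · calc v b < v x ^ 1 := by linarith
          _ ≤ v x ^ 3 := by gcongr <;> norm_num [hx₁.le]
    rw [show x ^ 3 + a * x + b - x ^ 3 = a * x + b by ring, v.map_pow]
    refine (hv _ _).trans_lt ?_
    rwa [v.map_mul]
  have hy₀ : 0 < v y := by
    refine (v.nonneg y).lt_of_ne' fun h0 ↦ ?_
    rw [h0] at hy
    have : 0 < v x ^ 3 := by positivity
    norm_num at hy
    linarith
  have hxε : 1 ≤ v x * ε ^ 2 := hεB.trans (by gcongr)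
  refine ⟨fun h0 ↦ by simp [h0] at hy₀, ?_, ?_⟩
  · rw [map_div₀, div_le_iff₀ hy₀]
    refine le_of_sq_le_sq ?_ (by positivity)
    rw [mul_pow, hy]
    calc v x ^ 2 = v x ^ 2 * 1 := by ring
      _ ≤ v x ^ 2 * (v x * ε ^ 2) := by gcongr
      _ = _ := by ring
  · rw [map_div₀, div_le_iff₀ hy₀, v.map_one]
    refine le_of_sq_le_sq ?_ (by positivity)
    rw [mul_pow, hy]
    calc (1 : ℝ) ^ 2 = 1 ^ 3 := by norm_num
      _ ≤ (v x * ε ^ 2) ^ 3 := by gcongr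
      _ = _ := by ring

open AbsoluteValue in
lemma Y_le_of_X_le (hv : IsNonarchimedean v) (h : y ^ 2 = x ^ 3 + a * x + b)
    (hB : 1 ≤ B) (haB : v a ≤ B) (hbB : v b ≤ B) (hx : v x ≤ B) : v y ≤ B ^ 2 := by
  have hB₀ : 0 ≤ B := by linarith
  refine le_of_sq_le_sq ?_ (by positivity)
  rw [← v.map_pow, h, ← pow_mul]
  refine add_le_of_isNonarchimedean hv (add_le_of_isNonarchimedean hv ?_ ?_) ?_
  · rw [v.map_pow]
    calc _ ≤ B ^ 3 := by gcongr
      _ ≤ B ^ (2 * 2) := by gcongr; norm_num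
  · rw [v.map_mul]
    calc _ ≤ B * B := by gcongr
      _ = B ^ 2 := by ring
      _ ≤ B ^ (2 * 2) := by gcongr; norm_num
  · calc _ ≤ B ^ 1 := by simpa
      _ ≤ B ^ (2 * 2) := by gcongr; norm_num

open AbsoluteValue in
lemma apply_one_div_Y_eq (hv : IsNonarchimedean v) (h : y ^ 2 = x ^ 3 + a * x + b)
    (hε : 0 < ε) (hδ : δ < 1) (haε : v a * ε ^ 4 ≤ δ) (hbε : v b * ε ^ 6 ≤ δ) (hy : y ≠ 0)
    (hz : v (x / y) ≤ ε) (hw : v (1 / y) ≤ ε ^ 3) : v (1 / y) = v (x / y) ^ 3 := by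
  have key : (x / y) ^ 3 = 1 / y * (1 - (a * (x / y) * (1 / y) + b * (1 / y) ^ 2)) := by
    field_simp
    linear_combination -h
  have hva := v.nonneg a
  have hvb := v.nonneg b
  have hunit : v (1 - (a * (x / y) * (1 / y) + b * (1 / y) ^ 2)) = 1 := by
    rw [eq_of_sub_lt (v := v) hv (y := 1), v.map_one]
    rw [v.map_one, sub_sub_cancel_left, v.map_neg]
    refine (add_le_of_isNonarchimedean hv ?_ ?_).trans_lt hδ
    · rw [v.map_mul, v.map_mul]
      calc _ ≤ v a * ε * ε ^ 3 := by gcongr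
        _ ≤ δ := by linarith
    · rw [v.map_mul, v.map_pow]
      calc _ ≤ v b * (ε ^ 3) ^ 2 := by gcongr
        _ ≤ δ := by linarith
  rw [← v.map_pow, key, v.map_mul, hunit, mul_one]

end Size

namespace WeierstrassCurve.Affine

variable {F : Type*} [Field F] {a b : F}

/-- The short Weierstrass curve `Y² = X³ + aX + b`. -/
abbrev shortCurve (a b : F) : Affine F := WeierstrassCurve.mk 0 0 0 a b

lemma shortCurve_equation {x y : F} (h : (shortCurve a b).Nonsingular x y) :
    y ^ 2 = x ^ 3 + a * x + b := by
  simpa [shortCurve] using (equation_iff _ _).1 h.left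

lemma exists_line_of_add [DecidableEq F] {W : Affine F} (ha₁ : W.a₁ = 0) (ha₂ : W.a₂ = 0)
    (ha₃ : W.a₃ = 0) {x₁ y₁ x₂ y₂ : F} (h₁ : W.Nonsingular x₁ y₁) (h₂ : W.Nonsingular x₂ y₂)
    (hxy : ¬(x₁ = x₂ ∧ y₁ = -y₂)) :
    ∃ l n x₃ y₃ : F, ∃ h₃ : W.Nonsingular x₃ (-y₃),
      Point.some _ _ h₁ + Point.some _ _ h₂ = Point.some _ _ h₃ ∧
      x₃ = l ^ 2 - x₁ - x₂ ∧ y₁ = l * x₁ + n ∧ y₂ = l * x₂ + n ∧ y₃ = l * x₃ + n ∧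
      W.a₄ = x₁ * x₂ + x₁ * x₃ + x₂ * x₃ + 2 * l * n ∧ W.a₆ = n ^ 2 - x₁ * x₂ * x₃ := by
  have hxy' : ¬(x₁ = x₂ ∧ y₁ = W.negY x₂ y₂) := by simpa [negY, ha₁, ha₃] using hxy
  obtain ⟨l, hl⟩ : ∃ l, l = W.slope x₁ x₂ y₁ y₂ := ⟨_, rfl⟩
  have hY : W.addY x₁ x₂ y₁ l = -W.negAddY x₁ x₂ y₁ l := by simp [addY, negY, ha₁, ha₃]
  have hN := nonsingular_add h₁ h₂ hxy'
  have hadd := Point.add_some hxy' (h₁ := h₁) (h₂ := h₂)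
  have hpoly := addPolynomial_slope h₁.left h₂.left hxy'
  rw [addPolynomial_eq, neg_inj, Cubic.prod_X_sub_C_eq, Cubic.toPoly_injective] at hpoly
  simp only [← hl] at hN hadd hpoly
  simp only [Cubic.mk.injEq, true_and] at hpoly
  obtain ⟨-, hc, hd⟩ := hpoly
  refine ⟨l, y₁ - l * x₁, W.addX x₁ x₂ l, W.negAddY x₁ x₂ y₁ l, hY ▸ hN, ?_, ?_, by ring, ?_, ?_,
    ?_, ?_⟩
  · simp only [hadd, hY]
  · simp [addX, ha₁, ha₂]
  · by_cases hx : x₁ = x₂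
    · obtain rfl := Y_eq_of_Y_ne h₁.left h₂.left hx fun h ↦ hxy' ⟨hx, h⟩
      rw [hx]; ring
    · rw [hl, slope_of_X_ne hx]
      have := sub_ne_zero.2 hx
      field_simp
      ring
  · rw [negAddY]; ring
  · simp only [ha₁, ha₃] at hc
    linear_combination hc
  · simp only [ha₃] at hd
    linear_combination hd

/-- The local parameter `X / Y` at the point at infinity. -/
def Point.param : (shortCurve a b).Point → F
  | .zero => 0
  | .some x y _ => x / y

/-- The points that are within `ε` of the point at infinity. -/
def Point.IsNear (v : AbsoluteValue F ℝ) (ε : ℝ) : (shortCurve a b).Point → Prop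
  | .zero => True
  | .some x y _ => y ≠ 0 ∧ v (x / y) ≤ ε ∧ v (1 / y) ≤ ε ^ 3

namespace Point

variable {v : AbsoluteValue F ℝ} {ε δ : ℝ} {P Q : (shortCurve a b).Point}

lemma isNear_zero : (0 : (shortCurve a b).Point).IsNear v ε := trivial

lemma param_zero : (0 : (shortCurve a b).Point).param = 0 := rfl

lemma IsNear.param_le (hε : 0 < ε) (hP : P.IsNear v ε) : v P.param ≤ ε := by
  rcases P with _ | ⟨x, y, h⟩
  · exact v.map_zero.trans_le hε.le
  · exact hP.2.1

lemma IsNear.param_ne_zero (hv : IsNonarchimedean v) (hε : 0 < ε) (hδ : δ < 1)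
    (haε : v a * ε ^ 4 ≤ δ) (hbε : v b * ε ^ 6 ≤ δ) (hP : P.IsNear v ε) (hP₀ : P ≠ 0) :
    P.param ≠ 0 := by
  rcases P with _ | ⟨x, y, h⟩
  · exact absurd rfl hP₀
  intro h0
  have hw := apply_one_div_Y_eq hv (shortCurve_equation h) hε hδ haε hbε hP.1 hP.2.1 hP.2.2
  rw [show x / y = 0 from h0] at hw
  simp [hP.1] at hw

variable [DecidableEq F]

lemma IsNear.add (hv : IsNonarchimedean v) (hε : 0 < ε) (hδ : δ < 1) (haε : v a * ε ^ 4 ≤ δ)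
    (hbε : v b * ε ^ 6 ≤ δ) (hP : P.IsNear v ε) (hQ : Q.IsNear v ε) :
    (P + Q).IsNear v ε ∧ v ((P + Q).param - (P.param + Q.param)) ≤ δ * ε := by
  have hδ₀ : 0 ≤ δ * ε := mul_nonneg (le_trans (by have := v.nonneg a; positivity) haε) hε.le
  rcases P with _ | ⟨x₁, y₁, h₁⟩
  · rw [← zero_def, zero_add, param_zero, zero_add, sub_self, v.map_zero]
    exact ⟨hQ, hδ₀⟩
  rcases Q with _ | ⟨x₂, y₂, h₂⟩
  · rw [← zero_def, add_zero, param_zero, add_zero, sub_self, v.map_zero]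
    exact ⟨hP, hδ₀⟩
  by_cases hxy : x₁ = x₂ ∧ y₁ = -y₂
  · rw [add_of_Y_eq hxy.1 (by simpa [negY, shortCurve] using hxy.2)]
    refine ⟨isNear_zero, ?_⟩
    simp only [param, hxy.1, hxy.2, div_neg, neg_add_cancel, sub_zero, v.map_zero]
    exact hδ₀
  · obtain ⟨l, n, x₃, y₃, h₃, hadd, hx₃, hy₁, hy₂, hy₃, ha, hb⟩ := exists_line_of_add rfl rfl rfl h₁ h₂ hxy
    obtain ⟨h₃', hz, hw⟩ := sum_near_infinity_le hv hx₃ hy₁ hy₂ hy₃ ha hb hε hδ haε hbε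
      hP.1 hQ.1 hP.2.1 hQ.2.1 hP.2.2 hQ.2.2
    have hz' : v ((some _ _ h₁ + some _ _ h₂).param -
        ((some _ _ h₁).param + (some _ _ h₂).param)) ≤ δ * ε := by
      rw [hadd, ← v.map_neg]
      convert hz using 2
      simp only [param, div_neg]
      ring
    refine ⟨?_, hz'⟩
    rw [hadd] at hz' ⊢
    refine ⟨neg_ne_zero.2 h₃', ?_, by rwa [div_neg, v.map_neg]⟩
    have := AbsoluteValue.add_le_of_isNonarchimedean hv (hz'.trans (by nlinarith : δ * ε ≤ ε))
      (AbsoluteValue.add_le_of_isNonarchimedean hv (hP.param_le hε) (hQ.param_le hε))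
    rwa [sub_add_cancel] at this

lemma IsNear.nsmul (hv : IsNonarchimedean v) (hε : 0 < ε) (hδ : δ < 1) (haε : v a * ε ^ 4 ≤ δ)
    (hbε : v b * ε ^ 6 ≤ δ) (hP : P.IsNear v ε) (k : ℕ) :
    (k • P).IsNear v ε ∧ v ((k • P).param - k * P.param) ≤ δ * ε := by
  induction k with
  | zero =>
    rw [zero_smul, param_zero, Nat.cast_zero, zero_mul, sub_zero, v.map_zero]
    exact ⟨isNear_zero,
      mul_nonneg (le_trans (by have := v.nonneg a; positivity) haε) hε.le⟩
  | succ k ih =>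
    obtain ⟨h, h'⟩ := ih.1.add hv hε hδ haε hbε hP
    rw [succ_nsmul]
    refine ⟨h, ?_⟩
    have := AbsoluteValue.add_le_of_isNonarchimedean hv h' ih.2
    convert this using 2
    push_cast
    ring

/-- A multiple of a point near infinity by an integer that is not too small has the expected
size. -/
lemma IsNear.apply_param_nsmul_of_lt (hv : IsNonarchimedean v) (hε : 0 < ε) (hδ : δ < 1)
    (haε : v a * ε ^ 4 ≤ δ) (hbε : v b * ε ^ 6 ≤ δ) (hP : P.IsNear v ε) {k : ℕ} (hk : δ < v k) :
    v (k • P).param = v k * v P.param := by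
  rcases P with _ | ⟨x, y, h⟩
  · rw [← zero_def, smul_zero, param_zero, v.map_zero, mul_zero]
  obtain ⟨hy, hz, hw⟩ := hP
  have hw' := apply_one_div_Y_eq hv (shortCurve_equation h) hε hδ haε hbε hy hz hw
  have hz₀ : 0 < v (x / y) := v.pos <|
    IsNear.param_ne_zero (P := some x y h) hv hε hδ haε hbε ⟨hy, hz, hw⟩ (some_ne_zero h)
  have hva := v.nonneg a
  have hvb := v.nonneg b
  obtain ⟨-, hsub⟩ := IsNear.nsmul (P := some x y h) hv hz₀ hδ
    (le_trans (by gcongr) haε) (le_trans (by gcongr) hbε) ⟨hy, le_rfl, hw'.le⟩ k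
  rw [← v.map_mul]
  refine AbsoluteValue.eq_of_sub_lt hv (hsub.trans_lt ?_)
  rw [v.map_mul]
  exact mul_lt_mul_of_pos_right hk hz₀

lemma IsNear.apply_param_nsmul (hv : IsNonarchimedean v) (hε : 0 < ε) (hδ : δ < 1)
    (haε : v a * ε ^ 4 ≤ δ) (hbε : v b * ε ^ 6 ≤ δ) (hprime : ∀ q : ℕ, q.Prime → δ < v q)
    (hP : P.IsNear v ε) (k : ℕ) : v (k • P).param = v k * v P.param := by
  induction k using Nat.recOnMul generalizing P with
  | zero => rw [zero_smul, param_zero, Nat.cast_zero, v.map_zero, zero_mul]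
  | one => rw [one_smul, Nat.cast_one, v.map_one, one_mul]
  | prime q hq => exact hP.apply_param_nsmul_of_lt hv hε hδ haε hbε (hprime q hq)
  | mul m n hm hn =>
    rw [mul_smul, hm (hP.nsmul hv hε hδ haε hbε n).1, hn hP, Nat.cast_mul, v.map_mul, mul_assoc]

end Point

end WeierstrassCurve.Affine

section Padic

open WeierstrassCurve Affine Rat.AbsoluteValue

variable {p : ℕ} [Fact p.Prime]

lemma isNonarchimedean_padic : IsNonarchimedean (padic p) := fun x y ↦ by
  simp only [padic_eq_padicNorm]
  exact_mod_cast padicNorm.nonarchimedean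

lemma exists_lt_padic_sub_lt {u w : ℕ → ℚ} {B η : ℝ} (hu : ∀ k, padic p (u k) ≤ B)
    (hw : ∀ k, padic p (w k) ≤ B) (hη : 0 < η) :
    ∃ k m, k < m ∧ padic p (u m - u k) < η ∧ padic p (w m - w k) < η := by
  have hnorm (q : ℚ) : ‖(q : ℚ_[p])‖ = padic p q := by simp
  let f : ℕ → ℚ_[p] × ℚ_[p] := fun k ↦ (u k, w k)
  have hf (k : ℕ) : f k ∈ Metric.closedBall (0 : ℚ_[p] × ℚ_[p]) B := by
    rw [mem_closedBall_zero_iff, Prod.norm_def, hnorm, hnorm]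
    exact max_le (hu k) (hw k)
  obtain ⟨_, -, φ, hφ, hlim⟩ := (isCompact_closedBall _ _).tendsto_subseq hf
  have hcauchy : CauchySeq (f ∘ φ) := hlim.cauchySeq
  obtain ⟨N, hN⟩ := Metric.cauchySeq_iff.1 hcauchy η hη
  refine ⟨φ N, φ (N + 1), hφ N.lt_succ_self, ?_⟩
  have := hN (N + 1) N.le_succ N le_rfl
  rwa [dist_eq_norm, Prod.norm_def, max_lt_iff, Function.comp, Function.comp, Prod.fst_sub,
    Prod.snd_sub, ← Rat.cast_sub, ← Rat.cast_sub, hnorm, hnorm] at this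

/-- Every rational point of infinite order has a multiple that is `p`-adically close to the point at
infinity. -/
lemma exists_nsmul_isNear {a b : ℚ} (hΔ : 4 * a ^ 3 + 27 * b ^ 2 ≠ 0) {P : (shortCurve a b).Point}
    (hP : ∀ n : ℕ, 0 < n → n • P ≠ 0) {ε : ℝ} (hε : 0 < ε) :
    ∃ k : ℕ, 0 < k ∧ (k • P).IsNear (padic p) ε := by
  by_contra! hfar
  have hv := isNonarchimedean_padic (p := p)
  set v := padic p
  obtain ⟨B, hB⟩ : ∃ B, B = max (max 1 (1 / ε ^ 2)) (max (v a) (v b)) := ⟨_, rfl⟩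
  have hB₁ : 1 ≤ B := hB ▸ (le_max_left _ _).trans (le_max_left _ _)
  have haB : v a ≤ B := hB ▸ (le_max_left _ _).trans (le_max_right _ _)
  have hbB : v b ≤ B := hB ▸ (le_max_right _ _).trans (le_max_right _ _)
  have hεB : 1 ≤ B * ε ^ 2 := by
    rw [← div_le_iff₀ (by positivity)]
    exact hB ▸ (le_max_right _ _).trans (le_max_left _ _)
  have hex (k : ℕ) : ∃ x y, ∃ h : (shortCurve a b).Nonsingular x y,
      (k + 1) • P = .some x y h ∧ v x ≤ B := by
    rcases hk : (k + 1) • P with _ | ⟨x, y, h⟩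
    · exact absurd hk (hP _ k.succ_pos)
    · refine ⟨x, y, h, rfl, le_of_not_gt fun hx ↦ hfar _ k.succ_pos ?_⟩
      rw [hk]
      exact near_infinity_of_lt hv (shortCurve_equation h) hB₁ haB hbB hε hεB hx
  choose x y h hxy hx using hex
  have hy (k : ℕ) : v (y k) ≤ B ^ 2 :=
    Y_le_of_X_le hv (shortCurve_equation (h k)) hB₁ haB hbB (hx k)
  have hΔ' : 0 < v (4 * (4 * a ^ 3 + 27 * b ^ 2)) := v.pos (mul_ne_zero (by norm_num) hΔ)
  obtain ⟨η, hη₀, hη₁, hη⟩ :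
      ∃ η : ℝ, 0 < η ∧ η ≤ 1 ∧ B ^ 4 * η < v (4 * (4 * a ^ 3 + 27 * b ^ 2)) := by
    have hB₄ : 0 < B ^ 4 := by positivity
    refine ⟨min 1 (v (4 * (4 * a ^ 3 + 27 * b ^ 2)) / (2 * B ^ 4)), by positivity,
      min_le_left _ _, ?_⟩
    calc _ ≤ B ^ 4 * (v (4 * (4 * a ^ 3 + 27 * b ^ 2)) / (2 * B ^ 4)) := by
          gcongr; exact min_le_right _ _
      _ = v (4 * (4 * a ^ 3 + 27 * b ^ 2)) / 2 := by field_simp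
      _ < _ := half_lt_self hΔ'
  obtain ⟨k, m, hkm, hxη, hyη⟩ := exists_lt_padic_sub_lt
    (fun k ↦ (hx k).trans (le_self_pow₀ hB₁ two_ne_zero)) hy hη₀
  have hneg : (shortCurve a b).Nonsingular (x k) (-y k) := by
    simpa [negY, shortCurve] using (nonsingular_neg (x k) (y k)).2 (h k)
  have hsub : Point.some _ _ (h m) + Point.some _ _ hneg = (m - k) • P := by
    have : Point.some _ _ hneg = -Point.some _ _ (h k) := by
      rw [Point.neg_some]
      simp [negY, shortCurve]
    rw [this, ← hxy, ← hxy, ← sub_eq_add_neg, sub_eq_iff_eq_add, ← add_smul]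
    congr 1
    omega
  have hmk : m - k = (m - k - 1) + 1 := by omega
  have hne : ¬(x m = x k ∧ y m = - -y k) := fun hh ↦ by
    refine hP (m - k) (by omega) ?_
    rw [← hsub]
    exact Point.add_of_Y_eq hh.1 (by simpa [negY, shortCurve] using hh.2)
  obtain ⟨l, n, x₃, y₃, h₃, hadd, hx₃, hy₁, hy₂, hy₃, ha, hb⟩ :=
    exists_line_of_add rfl rfl rfl (h m) hneg hne
  rw [hsub, hmk, hxy] at hadd
  have hx₃B : v x₃ ≤ B := by
    rw [← (Point.some.inj hadd).1]
    exact hx _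
  have hl : v l ≤ B := by
    have hl₂ : v (l ^ 2) ≤ B := by
      rw [show l ^ 2 = x₃ + x m + x k by linear_combination -hx₃]
      exact AbsoluteValue.add_le_of_isNonarchimedean hv
        (AbsoluteValue.add_le_of_isNonarchimedean hv hx₃B (hx m)) (hx k)
    rw [v.map_pow] at hl₂
    nlinarith [v.nonneg l]
  exact hη.not_ge (discriminant_le hv hx₃ hy₁ hy₂ ha hb hB₁ hη₀.le hη₁ haB hbB (hx m) (hx k) hl
    hxη.le (by rw [← sub_eq_add_neg]; exact hyη.le))

lemma padic_eq_zpow_iff {x : ℚ} (hx : x ≠ 0) (m : ℤ) :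
    padic p x = (p : ℝ) ^ (-m) ↔ padicValRat p x = m := by
  have hp : 1 < (p : ℝ) := mod_cast (Fact.out : p.Prime).one_lt
  rw [padic_eq_padicNorm, padicNorm.eq_zpow_of_nonzero hx, Rat.cast_zpow, Rat.cast_natCast,
    zpow_right_inj₀ (by linarith) hp.ne', neg_inj]

lemma lt_padic_of_prime {q : ℕ} (hq : q.Prime) : (p : ℝ)⁻¹ ^ 2 < padic p q := by
  have hp : 1 < (p : ℝ) := mod_cast (Fact.out : p.Prime).one_lt
  have hp' : (p : ℝ)⁻¹ < 1 := inv_lt_one_of_one_lt₀ hp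
  have hp₀ : 0 < (p : ℝ)⁻¹ := by positivity
  rw [padic_eq_padicNorm]
  by_cases hpq : p = q
  · subst hpq
    rw [padicNorm.padicNorm_p_of_prime]
    push_cast
    nlinarith
  · have := Fact.mk hq
    rw [padicNorm.padicNorm_of_prime_of_ne hpq]
    push_cast
    nlinarith

lemma exists_pos_small (a b : ℚ) {δ : ℝ} (hδ : 0 < δ) (v : AbsoluteValue ℚ ℝ) :
    ∃ ε : ℝ, 0 < ε ∧ v a * ε ^ 4 ≤ δ ∧ v b * ε ^ 6 ≤ δ := by
  have lim (c : ℝ) (n : ℕ) (hn : n ≠ 0) :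
      ∀ᶠ ε in nhdsWithin (0 : ℝ) (Set.Ioi 0), c * ε ^ n ≤ δ := by
    have : Filter.Tendsto (fun ε : ℝ ↦ c * ε ^ n) (nhds 0) (nhds (c * 0 ^ n)) := by
      apply Continuous.tendsto; fun_prop
    rw [zero_pow hn, mul_zero] at this
    exact nhdsWithin_le_nhds (this.eventually_le_const hδ)
  obtain ⟨ε, h₁, h₂, h₃⟩ := ((lim (v a) 4 (by norm_num)).and
    ((lim (v b) 6 (by norm_num)).and self_mem_nhdsWithin)).exists
  exact ⟨ε, h₃, h₁, h₂⟩

lemma padic_prod_pow {t : ℕ} {p : Fin t → ℕ} (hp : ∀ i, (p i).Prime)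
    (hinj : Function.Injective p) (e : Fin t → ℕ) (i : Fin t) [Fact (p i).Prime] :
    padic (p i) ((∏ j, p j ^ e j : ℕ) : ℚ) = (p i : ℝ) ^ (-(e i : ℤ)) := by
  rw [Nat.cast_prod, map_prod, Finset.prod_eq_single i]
  · simp [padicNorm.padicNorm_p_of_prime]
  · intro j _ hji
    have := Fact.mk (hp j)
    rw [Nat.cast_pow, map_pow, padic_eq_padicNorm,
      padicNorm.padicNorm_of_prime_of_ne fun h ↦ hji (hinj h).symm, Rat.cast_one, one_pow]
  · simp

/-- Near infinity, the valuation of the parameter `X / Y` determines those of `X` and `Y`. -/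
lemma padicValRat_of_isNear {a b x y : ℚ} {ε δ : ℝ} (h : y ^ 2 = x ^ 3 + a * x + b) (hε : 0 < ε)
    (hδ : δ < 1) (haε : padic p a * ε ^ 4 ≤ δ) (hbε : padic p b * ε ^ 6 ≤ δ) (hy : y ≠ 0)
    (hz : padic p (x / y) ≤ ε) (hw : padic p (1 / y) ≤ ε ^ 3) {m : ℤ}
    (hm : padic p (x / y) = (p : ℝ) ^ (-m)) :
    padicValRat p x = -2 * m ∧ padicValRat p y = -3 * m := by
  have hp : 0 < (p : ℝ) := mod_cast (Fact.out : p.Prime).pos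
  have hw' := apply_one_div_Y_eq isNonarchimedean_padic h hε hδ haε hbε hy hz hw
  have hxy : x / y ≠ 0 := by
    intro h0
    rw [h0, map_zero] at hm
    exact (zpow_pos hp (-m)).ne hm
  have hx : x ≠ 0 := fun h0 ↦ hxy (by rw [h0, zero_div])
  rw [hm, ← zpow_natCast, ← zpow_mul, show -m * ((3 : ℕ) : ℤ) = -(3 * m) by push_cast; ring,
    padic_eq_zpow_iff (one_div_ne_zero hy), padicValRat.div one_ne_zero hy, padicValRat.one] at hw'
  rw [padic_eq_zpow_iff hxy, padicValRat.div hx hy] at hm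
  omega

end Padic

/-- Let `E : Y² = X³ + aX + b` be an elliptic curve over `ℚ` whose Mordell–Weil group
has positive rank, and let `p₁, …, p_t` be distinct primes. Then there is an integer `N`
such that for all integers `m₁, …, m_t ≥ N` there is a rational point `(X, Y)` of `E`
with `ord_{pᵢ}(X) = −2mᵢ` and `ord_{pᵢ}(Y) = −3mᵢ` for all `i`. -/
theorem valuation_points_on_elliptic_curve (a b : ℚ) (hΔ : 4 * a ^ 3 + 27 * b ^ 2 ≠ 0)
    (W : WeierstrassCurve ℚ) (hW : W = WeierstrassCurve.mk 0 0 0 a b)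
    (hrank : ∃ P : W.toAffine.Point, ∀ n : ℕ, 0 < n → n • P ≠ 0)
    (t : ℕ) (p : Fin t → ℕ) (hp : ∀ i, (p i).Prime) (hinj : Function.Injective p) :
    ∃ N : ℤ, ∀ m : Fin t → ℤ, (∀ i, N ≤ m i) →
      ∃ X Y : ℚ, Y ^ 2 = X ^ 3 + a * X + b ∧
        ∀ i, padicValRat (p i) X = -2 * m i ∧ padicValRat (p i) Y = -3 * m i := by
  subst hW
  obtain ⟨P, hP⟩ := hrank
  change (WeierstrassCurve.Affine.shortCurve a b).Point at P
  have (i : Fin t) : Fact (p i).Prime := ⟨hp i⟩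
  let v (i : Fin t) := Rat.AbsoluteValue.padic (p i)
  let δ (i : Fin t) : ℝ := (p i : ℝ)⁻¹ ^ 2
  have hp₀ (i : Fin t) : 0 < (p i : ℝ) := mod_cast (hp i).pos
  have hδ₀ (i : Fin t) : 0 < δ i := pow_pos (inv_pos.2 (hp₀ i)) 2
  have hδ (i : Fin t) : δ i < 1 :=
    pow_lt_one₀ (inv_pos.2 (hp₀ i)).le (inv_lt_one_of_one_lt₀ (mod_cast (hp i).one_lt)) two_ne_zero
  have hv (i : Fin t) : IsNonarchimedean (v i) := isNonarchimedean_padic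
  choose ε hε haε hbε using fun i ↦ exists_pos_small a b (hδ₀ i) (v i)
  choose k hk hnear using fun i ↦ exists_nsmul_isNear (p := p i) hΔ hP (hε i)
  obtain ⟨Q, hQ⟩ : ∃ Q, Q = (∏ i, k i) • P := ⟨_, rfl⟩
  have hQnear (i : Fin t) : Q.IsNear (v i) (ε i) := by
    obtain ⟨c, hc⟩ := Finset.dvd_prod_of_mem k (Finset.mem_univ i)
    rw [hQ, hc, mul_comm, mul_smul]
    exact ((hnear i).nsmul (hv i) (hε i) (hδ i) (haε i) (hbε i) c).1
  have hQmul {n : ℕ} (hn : 0 < n) : n • Q ≠ 0 := by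
    rw [hQ, ← mul_smul]
    exact hP _ (Nat.mul_pos hn (Finset.prod_pos fun i _ ↦ hk i))
  obtain ⟨N, hN⟩ := (Set.finite_range fun i ↦ padicValRat (p i) Q.param).bddAbove
  refine ⟨N, fun m hm ↦ ?_⟩
  have hle (i : Fin t) : padicValRat (p i) Q.param ≤ m i := (hN ⟨i, rfl⟩).trans (hm i)
  choose e he using fun i ↦ Int.eq_ofNat_of_zero_le (sub_nonneg.2 (hle i))
  obtain ⟨n, hn⟩ : ∃ n, n = ∏ j, p j ^ e j := ⟨_, rfl⟩
  have hn₀ : 0 < n := hn ▸ Finset.prod_pos fun j _ ↦ pow_pos (hp j).pos _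
  have hparam (i : Fin t) : v i (n • Q).param = (p i : ℝ) ^ (-m i) := by
    have hQ₀ : Q.param ≠ 0 :=
      (hQnear i).param_ne_zero (hv i) (hε i) (hδ i) (haε i) (hbε i) (by simpa using hQmul one_pos)
    rw [(hQnear i).apply_param_nsmul (hv i) (hε i) (hδ i) (haε i) (hbε i)
      (fun q hq ↦ lt_padic_of_prime hq), hn, padic_prod_pow hp hinj, (padic_eq_zpow_iff hQ₀ _).2 rfl,
      ← zpow_add₀ (hp₀ i).ne']
    congr 1
    linarith [he i]
  have hnQ (i : Fin t) := ((hQnear i).nsmul (hv i) (hε i) (hδ i) (haε i) (hbε i) n).1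
  rcases hR : n • Q with _ | ⟨X, Y, h⟩
  · exact absurd hR (hQmul hn₀)
  · have hXY := WeierstrassCurve.Affine.shortCurve_equation h
    simp only [hR] at hparam hnQ
    exact ⟨X, Y, hXY, fun i ↦ padicValRat_of_isNear hXY (hε i) (hδ i) (haε i) (hbε i) (hnQ i).1
      (hnQ i).2.1 (hnQ i).2.2 (hparam i)⟩
end
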